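/- arXiv:2208.13957 — 3 statements merged into one kernel-verified Lean document; each statement's English description precedes it below -/
import Mathlib

section
/- Let (X2, X3) be a centered Gaussian random vector with each component nondegenerate, and let (m2, m3) ∈ S. Then |E[X2^(2m2+1) · X3^(2m3+1)]| / ((2m2+1)(2m3+1) · E[X2^(2m2) · X3^(2m3)]) is at most |Cov(X2,X3)| if |Corr(X2,X3)| ≤ √t, and at most H(Corr(X2,X3)^2) · |Cov(X2,X3)| if |Corr(X2,X3)| > √t; moreover equality holds if and only if X2 and X3 are independent. -/
/-!
Write `p = m2`, `q = m3` (so `p ≤ q`), `a = 2p+1`, `b = 2q+1`, `c = ab`, `s = a+b`, `r = c+1`, and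
let `z` be the squared correlation. The Isserlis formula (`mixed_moment`) turns the ratio of moments
into `|Cov| * F0 z / F1 z`, where `F0 z = ∑ fc k * z^k` and `F1 z = ∑ (2k+1) * fc k * z^k` with
nonnegative coefficients. Thus `F0 < F1` for `z > 0`, which is the first bound. Everything is strict
when the covariance is nonzero, and for jointly Gaussian variables zero covariance is independence;
this settles the equality case.

For the second bound, `h = 1 / H z` satisfies `(ah-1)(bh-1) = z (r-ah)(r-bh)`, i.e. `ZN h = z ZD h`,
with `h > 1` exactly past the threshold `t` (`H_param`). It must be shown that `h < F1 / F0` on this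
curve (`F0_mul_lt_F1`).

* If `p ≤ 2` or `h ≤ 2`, it suffices to keep the terms of degree at most two of `F1 - h F0`.
  Substituting `z = ZN h / ZD h` leaves a polynomial inequality in `h`, `p`, `q`, which has
  nonnegative coefficients in suitable variables.
* If `p ≥ 3` and `h > 2`, the pair `(F0, F1)` solves the linear system `2z F0' = F1 - F0`,
  `2(1-z) F1' = c F0 - (s-1) F1`. Hence at a point where the ratio `w = F1 / F0` meets the curve,
  the direction of crossing is the sign of an explicit polynomial `PP` in `w`, and this is positive
  for `2 ≤ w < c/(s-1)`. So the ratio, being above the curve at the point `h = 2`, stays above it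
  for `z < 1` (`core_big`); at `z = 1` the system gives the ratio explicitly.
-/

open MeasureTheory ProbabilityTheory

set_option maxRecDepth 10000

/-! ### Polynomial inequalities -/

/-- Numerator of the rational parametrization `z = ZN h / ZD h` of the curve `h = 1 / H z`, with
`c = (2p+1)(2q+1)` and `s = 2p+2q+2`. It factors as `(ah-1)(bh-1)`, where `a = 2p+1`,
`b = 2q+1`. -/
def ZN (c s h : ℝ) : ℝ := c * h ^ 2 - s * h + 1

/-- Denominator of the parametrization `z = ZN h / ZD h`. It factors as
`(ab+1-ah)(ab+1-bh)`. -/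
def ZD (c s h : ℝ) : ℝ := (c + 1) ^ 2 - (c + 1) * s * h + c * h ^ 2

/-- `120 * ZD ^ 2` times the part of degree at most two (in `z`) of `F1 - h * F0`, evaluated at
`z = ZN h / ZD h`. -/
def TT (c s h : ℝ) : ℝ := 120 * (1 - h) * ZD c s h ^ 2 +
  20 * (3 - h) * (c - s + 1) * ZN c s h * ZD c s h +
  (5 - h) * ((c - s + 1) * (c - 3 * s + 9)) * ZN c s h ^ 2

/-- The polynomial whose sign is the sign of the derivative of `Phi` at a zero of `Phi` with
`F1 / F0 = w`, see `Phid_identity`. -/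
def PP (c s w : ℝ) : ℝ :=
  (c * (w - w ^ 2) * (c + 2 - s * w) + ZN c s w * (c - (s - 1) * w)) *
    (2 * c * (c + 2) * w - c * s * w ^ 2 - s * (c + 1)) -
  2 * (c + 2 - s * w) * ZN c s w * ZD c s w

/-- The interval `[lo, hi)` is the image of `[0, ∞)` under `u ↦ (lo + hi u) / (1 + u)`. After this
substitution, and after shifting the other variables to `[0, ∞)`, the polynomial inequalities
below become polynomials with nonnegative coefficients. -/
lemma exists_param {lo hi h : ℝ} (h1 : lo ≤ h) (h2 : h < hi) :
    ∃ u : ℝ, 0 ≤ u ∧ h = (lo + hi * u) / (1 + u) := by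
  refine ⟨(h - lo) / (hi - h), div_nonneg (by linarith) (by linarith), ?_⟩
  have : hi - h ≠ 0 := by linarith
  have h3 : hi - lo ≠ 0 := by linarith
  have h4 : 1 + (h - lo) / (hi - h) = (hi - lo) / (hi - h) := by field_simp; ring
  rw [h4]; field_simp; ring

/-- Truncation inequality for `p = 1`, `q ≥ 5` and `1 ≤ h < 7/4`; here `2q+1 = 11+B`. -/
lemma linear_trunc_pos_left {B h : ℝ} (hB : 0 ≤ B) (h1 : 1 ≤ h) (h2 : h < 7/4) :
    0 < 6 * (1 - h) * ZD (3 * (11 + B)) (14 + B) h +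
      (3 - h) * (2 * (10 + B)) * ZN (3 * (11 + B)) (14 + B) h := by
  obtain ⟨u, hu, rfl⟩ := exists_param h1 h2
  have e : 0 < 1 + u := by positivity
  refine pos_of_mul_pos_left ?_ (pow_pos e 3).le
  unfold ZD ZN
  field_simp
  ring_nf
  positivity

lemma TT_pos_of_lt_two {A B h : ℝ} (hA : 0 ≤ A) (hB : 0 ≤ B) (h1 : 1 ≤ h) (h2 : h < 2) :
    0 < TT ((5 + A) * (7 + B)) (5 + A + (7 + B)) h := by
  obtain ⟨u, hu, rfl⟩ := exists_param h1 h2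
  have e : 0 < 1 + u := by positivity
  refine pos_of_mul_pos_left ?_ (pow_pos e 5).le
  unfold TT ZD ZN
  field_simp
  ring_nf
  positivity

/-- Positivity of `PP` for `s = 16 + S ≥ 16` and `2 ≤ w < c / (s - 1)`, with `w = 2 + v` and
`d = c - (s - 1) w`. -/
lemma PP_pos_of_sixteen_le {S d v : ℝ} (hS : 0 ≤ S) (hd : 0 < d) (hv : 0 ≤ v) :
    0 < PP ((2 + v) * (15 + S) + d) (16 + S) (2 + v) := by
  unfold PP ZD ZN
  ring_nf
  positivity

lemma PP_pos_forty_nine {w : ℝ} (h1 : 2 ≤ w) (h2 : w < 49 / 13) : 0 < PP 49 14 w := by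
  obtain ⟨u, hu, rfl⟩ := exists_param h1 h2
  have e : 0 < 1 + u := by positivity
  refine pos_of_mul_pos_left ?_ (pow_pos e 5).le
  unfold PP ZD ZN
  field_simp
  ring_nf
  positivity

lemma TT_pos_at_two {A B : ℝ} (hA : 0 ≤ A) (hB : 0 ≤ B) :
    0 < TT ((5 + A) * (7 + B)) (5 + A + (7 + B)) 2 := by
  unfold TT ZD ZN
  ring_nf
  positivity

/-- Truncation inequality for `p = 2`, `q ≥ 3` and `h ≥ 2`, up to the bound `s h < c + 2`. -/
lemma TT_pos_of_two_le {B h : ℝ} (hB : 0 ≤ B) (h1 : 2 ≤ h) (h2 : h * (12 + B) < (37 + 5 * B)) :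
    0 < TT (5 * (7 + B)) (12 + B) h := by
  have h3 : h < (37 + 5 * B) / (12 + B) := by
    rw [lt_div_iff₀ (by positivity)]; exact h2
  obtain ⟨u, hu, rfl⟩ := exists_param h1 h3
  have e : 0 < 1 + u := by positivity
  have e' : 0 < 12 + B := by positivity
  refine pos_of_mul_pos_left ?_ (pow_pos e 5).le
  unfold TT ZD ZN
  field_simp
  ring_nf
  positivity

/-- Truncation inequality for `p = 1`, `q ≥ 5` and `h ≥ 7/4`; the upper bound on `h` is
`s h < c + 2`, which is what `z < 1` amounts to. -/
lemma linear_trunc_pos_right {B h : ℝ} (hB : 0 ≤ B) (h1 : 7/4 ≤ h)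
    (h2 : h * (14 + B) < 35 + 3 * B) :
    0 < 6 * (1 - h) * ZD (3 * (11 + B)) (14 + B) h +
      (3 - h) * (2 * (10 + B)) * ZN (3 * (11 + B)) (14 + B) h := by
  have h3 : h < (35 + 3 * B) / (14 + B) := by
    rw [lt_div_iff₀ (by positivity)]; exact h2
  obtain ⟨u, hu, rfl⟩ := exists_param h1 h3
  have e : 0 < 1 + u := by positivity
  have e' : 0 < 14 + B := by positivity
  refine pos_of_mul_pos_left ?_ (pow_pos e 3).le
  unfold ZD ZN
  field_simp
  ring_nf
  positivity

/-! ### The generating polynomials of the moments -/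

/-- The coefficients `4^k p(p-1)⋯(p-k+1) q(q-1)⋯(q-k+1) / (2k+1)!` of the normalized odd mixed
moment, as a polynomial in the squared correlation. -/
noncomputable def fc (p q k : ℕ) : ℝ :=
  4 ^ k * (p.descFactorial k : ℝ) * (q.descFactorial k : ℝ) / ((2 * k + 1).factorial : ℝ)

/-- The normalized odd moment `E[X^(2p+1) Y^(2q+1)]` (for `p ≤ q`), divided by the correlation, as a
polynomial in the squared correlation `z`, scaled to have value `1` at `z = 0`. -/
noncomputable def F0 (p q : ℕ) (z : ℝ) : ℝ := ∑ k ∈ Finset.range (p + 1), fc p q k * z ^ k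

/-- The normalized even moment `E[X^(2p) Y^(2q)]` (for `p ≤ q`) as a polynomial in the squared
correlation `z`, scaled to have value `1` at `z = 0`. -/
noncomputable def F1 (p q : ℕ) (z : ℝ) : ℝ :=
  ∑ k ∈ Finset.range (p + 1), (2 * k + 1) * fc p q k * z ^ k

/-- The derivative of `F0`. -/
noncomputable def F0d (p q : ℕ) (z : ℝ) : ℝ :=
  ∑ k ∈ Finset.range (p + 1), fc p q k * (k * z ^ (k - 1))

/-- The derivative of `F1`. -/
noncomputable def F1d (p q : ℕ) (z : ℝ) : ℝ :=
  ∑ k ∈ Finset.range (p + 1), (2 * k + 1) * fc p q k * (k * z ^ (k - 1))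

lemma fc_nonneg (p q k : ℕ) : 0 ≤ fc p q k := by unfold fc; positivity

lemma fc_zero (p q : ℕ) : fc p q 0 = 1 := by simp [fc]

lemma descFactorial_succ_cast (n k : ℕ) :
    (n.descFactorial (k + 1) : ℝ) = ((n : ℝ) - k) * n.descFactorial k := by
  rcases le_or_gt k n with h | h
  · rw [Nat.descFactorial_succ]; push_cast [Nat.cast_sub h]; ring
  · rw [Nat.descFactorial_eq_zero_iff_lt.2 h, Nat.descFactorial_eq_zero_iff_lt.2 (by omega)]; simp

lemma fc_succ (p q k : ℕ) :
    2 * ((k : ℝ) + 1) * (2 * k + 3) * fc p q (k + 1) =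
      4 * ((p : ℝ) - k) * ((q : ℝ) - k) * fc p q k := by
  unfold fc
  rw [descFactorial_succ_cast, descFactorial_succ_cast,
    show 2 * (k + 1) + 1 = (2 * k + 1) + 1 + 1 by ring, Nat.factorial_succ (2 * k + 1 + 1),
    Nat.factorial_succ (2 * k + 1)]
  have : ((2 * k + 1).factorial : ℝ) ≠ 0 := by positivity
  push_cast
  field_simp
  ring

lemma fc_one (p q : ℕ) : fc p q 1 = 2 * p * q / 3 := by
  have := fc_succ p q 0
  rw [fc_zero] at this; norm_num at this; linarith

lemma fc_two (p q : ℕ) : fc p q 2 = 2 * p * q * (p - 1) * (q - 1) / 15 := by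
  have := fc_succ p q 1
  rw [fc_one] at this; norm_num at this; linarith

lemma hasDerivAt_F0 (p q : ℕ) (z : ℝ) : HasDerivAt (F0 p q) (F0d p q z) z := by
  unfold F0 F0d
  exact HasDerivAt.fun_sum fun k _ => (hasDerivAt_pow k z).const_mul _

lemma hasDerivAt_F1 (p q : ℕ) (z : ℝ) : HasDerivAt (F1 p q) (F1d p q z) z := by
  unfold F1 F1d
  exact HasDerivAt.fun_sum fun k _ => (hasDerivAt_pow k z).const_mul _

lemma mul_pow_pred (k : ℕ) (z : ℝ) : z * ((k : ℝ) * z ^ (k - 1)) = k * z ^ k := by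
  cases k with
  | zero => simp
  | succ n => simp only [Nat.add_sub_cancel]; ring

lemma ode_F0 (p q : ℕ) (z : ℝ) : 2 * z * F0d p q z = F1 p q z - F0 p q z := by
  unfold F0d F1 F0
  rw [Finset.mul_sum, ← Finset.sum_sub_distrib]
  refine Finset.sum_congr rfl fun k _ => ?_
  linear_combination 2 * fc p q k * mul_pow_pred k z

lemma F1d_eq (p q : ℕ) (z : ℝ) :
    2 * F1d p q z =
      ∑ k ∈ Finset.range (p + 1), 4 * ((p : ℝ) - k) * ((q : ℝ) - k) * fc p q k * z ^ k := by
  unfold F1d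
  rw [Finset.sum_range_succ', Finset.sum_range_succ, mul_add, Finset.mul_sum]
  simp only [Nat.cast_zero, zero_mul, mul_zero, sub_self, add_zero]
  refine Finset.sum_congr rfl fun k _ => ?_
  rw [← fc_succ]; push_cast; ring

/-- The second equation of the first order linear system for `(F0, F1)`; the first is
`ode_F0`. -/
lemma ode_F1 (p q : ℕ) (z : ℝ) :
    2 * (1 - z) * F1d p q z =
      (2 * p + 1) * (2 * q + 1) * F0 p q z - (2 * p + 2 * q + 1) * F1 p q z := by
  have h1 : z * F1d p q z =
      ∑ k ∈ Finset.range (p + 1), (2 * (k:ℝ) + 1) * k * fc p q k * z ^ k := by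
    unfold F1d
    rw [Finset.mul_sum]
    refine Finset.sum_congr rfl fun k _ => ?_
    linear_combination (2 * (k:ℝ) + 1) * fc p q k * mul_pow_pred k z
  have h2 : 2 * (1 - z) * F1d p q z = 2 * F1d p q z - 2 * (z * F1d p q z) := by ring
  rw [h2, F1d_eq, h1]
  unfold F0 F1
  rw [Finset.mul_sum, Finset.mul_sum, Finset.mul_sum, ← Finset.sum_sub_distrib,
    ← Finset.sum_sub_distrib]
  refine Finset.sum_congr rfl fun k _ => ?_
  ring

lemma F0_pos (p q : ℕ) {z : ℝ} (hz : 0 ≤ z) : 0 < F0 p q z := by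
  unfold F0
  refine Finset.sum_pos' (fun k _ => mul_nonneg (fc_nonneg _ _ _) (pow_nonneg hz _))
    ⟨0, by simp, by simp [fc_zero]⟩

lemma F1d_pos {p q : ℕ} (hp : 1 ≤ p) (hq : 1 ≤ q) {z : ℝ} (hz : 0 ≤ z) : 0 < F1d p q z := by
  unfold F1d
  have hp' : (0:ℝ) < p := by exact_mod_cast hp
  have hq' : (0:ℝ) < q := by exact_mod_cast hq
  refine Finset.sum_pos' (fun k _ => ?_) ⟨1, by simp; omega, ?_⟩
  · have := fc_nonneg p q k; positivity
  · rw [fc_one]; norm_num; positivity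

lemma F0_lt_F1 {p q : ℕ} (hp : 1 ≤ p) (hq : 1 ≤ q) {z : ℝ} (hz : 0 < z) :
    F0 p q z < F1 p q z := by
  have h := ode_F0 p q z
  have : 0 < F0d p q z := by
    unfold F0d
    have hp' : (0:ℝ) < p := by exact_mod_cast hp
    have hq' : (0:ℝ) < q := by exact_mod_cast hq
    refine Finset.sum_pos' (fun k _ => ?_) ⟨1, by simp; omega, ?_⟩
    · have := fc_nonneg p q k; positivity
    · rw [fc_one]; norm_num; positivity
  have : 0 < 2 * z * F0d p q z := by positivity
  linarith

/-- All terms of degree at least three in `F1 - h * F0` are nonnegative when `h ≤ 7`. -/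
lemma trunc_le {p q : ℕ} (hp : 2 ≤ p) {z h : ℝ} (hz : 0 ≤ z) (hh : h ≤ 7) :
    (1 - h) + (3 - h) * fc p q 1 * z + (5 - h) * fc p q 2 * z ^ 2 ≤ F1 p q z - h * F0 p q z := by
  obtain ⟨n, rfl⟩ : ∃ n, p = n + 2 := ⟨p - 2, by omega⟩
  unfold F1 F0
  rw [Finset.mul_sum, ← Finset.sum_sub_distrib, show n + 2 + 1 = n + 3 by ring,
    Finset.sum_range_succ', Finset.sum_range_succ', Finset.sum_range_succ']
  have : 0 ≤ ∑ k ∈ Finset.range n, ((2 * ((k + 1 + 1 + 1 : ℕ) : ℝ) + 1) *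
      fc (n + 2) q (k + 1 + 1 + 1) * z ^ (k + 1 + 1 + 1) -
      h * (fc (n + 2) q (k + 1 + 1 + 1) * z ^ (k + 1 + 1 + 1))) := by
    refine Finset.sum_nonneg fun k _ => ?_
    have h1 := mul_nonneg (fc_nonneg (n + 2) q (k + 1 + 1 + 1)) (pow_nonneg hz (k + 1 + 1 + 1))
    have h2 : (0:ℝ) ≤ k := by positivity
    push_cast
    nlinarith
  norm_num [fc_zero] at this ⊢
  linarith

lemma trunc_one {q : ℕ} {z h : ℝ} :
    F1 1 q z - h * F0 1 q z = (1 - h) + (3 - h) * fc 1 q 1 * z := by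
  unfold F1 F0
  norm_num [Finset.sum_range_succ, fc_zero]
  ring

/-- A convex quadratic which is negative at zero and nonpositive at some positive point is negative
in between. -/
lemma quad_neg {α β γ w w' : ℝ} (hα : 0 < α) (hγ : γ < 0) (hw : 0 < w) (hlt : w < w')
    (h : α * w' ^ 2 + β * w' + γ ≤ 0) : α * w ^ 2 + β * w + γ < 0 := by
  have hw' : 0 < w' := by linarith
  have : 0 < w' * -(α * w ^ 2 + β * w + γ) := by
    have h1 : w' * -(α * w ^ 2 + β * w + γ) =
        w * -(α * w' ^ 2 + β * w' + γ) + α * w * w' * (w' - w) + -γ * (w' - w) := by ring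
    rw [h1]
    have h2 : 0 ≤ w * -(α * w' ^ 2 + β * w' + γ) := mul_nonneg hw.le (by linarith)
    have h3 : 0 < w' - w := by linarith
    have h4 : 0 < -γ := by linarith
    positivity
  have := pos_of_mul_pos_right this hw'.le
  linarith

/-- The barrier function `F0 ^ 2 * (ZN w - z * ZD w)` with `w = F1 / F0`; for
`1 / r² < z < 1` it is positive exactly when `w` lies above the curve `1 / H`, see
`Phi_pos_of_lt` and `lt_of_Phi_pos`. -/
noncomputable def Phi (p q : ℕ) (c s z : ℝ) : ℝ :=
  c * F1 p q z ^ 2 - s * F1 p q z * F0 p q z + F0 p q z ^ 2 -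
    z * (c * F1 p q z ^ 2 - (c + 1) * s * F1 p q z * F0 p q z + (c + 1) ^ 2 * F0 p q z ^ 2)

/-- The derivative of `Phi` in `z`. -/
noncomputable def Phid (p q : ℕ) (c s z : ℝ) : ℝ :=
  (2 * c * (1 - z) * F1 p q z - s * (1 - (c + 1) * z) * F0 p q z) * F1d p q z +
  (-s * (1 - (c + 1) * z) * F1 p q z + 2 * (1 - (c + 1) ^ 2 * z) * F0 p q z) * F0d p q z -
  (c * F1 p q z ^ 2 - (c + 1) * s * F1 p q z * F0 p q z + (c + 1) ^ 2 * F0 p q z ^ 2)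

lemma hasDerivAt_Phi (p q : ℕ) (c s z : ℝ) : HasDerivAt (Phi p q c s) (Phid p q c s z) z := by
  have h0 := hasDerivAt_F0 p q z
  have h1 := hasDerivAt_F1 p q z
  have hA := (((h1.fun_pow 2).const_mul c).fun_sub ((h1.const_mul s).fun_mul h0)).fun_add
    (h0.fun_pow 2)
  have hB := (((h1.fun_pow 2).const_mul c).fun_sub
    ((h1.const_mul ((c + 1) * s)).fun_mul h0)).fun_add ((h0.fun_pow 2).const_mul ((c + 1) ^ 2))
  have := hA.fun_sub ((hasDerivAt_id z).fun_mul hB)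
  refine this.congr_deriv ?_
  unfold Phid
  simp only [id]
  ring

/-- At a zero of `Phi`, where `F1 = w * F0` and `ZN w = z * ZD w`, the differential equations for
`F0` and `F1` express the derivative of `Phi` as a multiple of `PP w`. -/
lemma Phid_identity {c s z w f f0d f1d : ℝ} (hz : z ≠ 0) (hz1 : 1 - z ≠ 0)
    (hD : ZD c s w ≠ 0) (hN : ZN c s w = z * ZD c s w)
    (h0 : 2 * z * f0d = w * f - f) (h1 : 2 * (1 - z) * f1d = c * f - (s - 1) * (w * f)) :
    2 * z * ((2 * c * (1 - z) * (w * f) - s * (1 - (c + 1) * z) * f) * f1d +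
      (-s * (1 - (c + 1) * z) * (w * f) + 2 * (1 - (c + 1) ^ 2 * z) * f) * f0d -
      (c * (w * f) ^ 2 - (c + 1) * s * (w * f) * f + (c + 1) ^ 2 * f ^ 2)) *
        (ZD c s w * (c + 2 - s * w)) = f ^ 2 * PP c s w := by
  have e1 : (1 - z) * ZD c s w = c * (c + 2 - s * w) := by
    have : ZD c s w - ZN c s w = c * (c + 2 - s * w) := by unfold ZD ZN; ring
    linear_combination this + hN
  have e0 : f0d = (w * f - f) / (2 * z) := by field_simp; linear_combination h0
  have e2 : f1d = (c * f - (s - 1) * (w * f)) / (2 * (1 - z)) := by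
    field_simp; linear_combination h1
  have e3 : z = ZN c s w / ZD c s w := by field_simp; linear_combination -hN
  have hN0 : ZN c s w ≠ 0 := by rw [hN]; exact mul_ne_zero hz hD
  have e4 : 1 - z = c * (c + 2 - s * w) / ZD c s w := by field_simp; linear_combination e1
  have hcc : c * (c + 2 - s * w) ≠ 0 := by rw [← e1]; exact mul_ne_zero hz1 hD
  have hc1 : c ≠ 0 := left_ne_zero_of_mul hcc
  have hc2 : c + 2 - s * w ≠ 0 := right_ne_zero_of_mul hcc
  rw [e0, e2, e4, e3]
  field_simp
  unfold PP ZD ZN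
  ring

/-! ### Comparison of the moment ratio with the curve -/

lemma PP_pos {p q : ℕ} (hp : 3 ≤ p) (hq : 3 ≤ q) {w : ℝ} (hw : 2 ≤ w)
    (hw' : (2 * p + 2 * q + 1) * w < (2 * (p:ℝ) + 1) * (2 * q + 1)) :
    0 < PP ((2 * p + 1) * (2 * q + 1)) (2 * p + 2 * q + 2) w := by
  by_cases h7 : p + q = 6
  · obtain rfl : p = 3 := by omega
    obtain rfl : q = 3 := by omega
    norm_num at hw' ⊢
    exact PP_pos_forty_nine hw (by linarith)
  · have h8 : (7:ℝ) ≤ p + q := by exact_mod_cast (by omega : 7 ≤ p + q)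
    have := PP_pos_of_sixteen_le (S := 2 * (p:ℝ) + 2 * q + 2 - 16)
      (d := (2 * (p:ℝ) + 1) * (2 * q + 1) - (2 * p + 2 * q + 1) * w) (v := w - 2)
      (by linarith) (by linarith) (by linarith)
    convert this using 1
    congr 1 <;> ring

lemma TT_pos {p q : ℕ} (hp : 2 ≤ p) (hq : 3 ≤ q) {h : ℝ} (h1 : 1 ≤ h) (h2 : h ≤ 2) :
    0 < TT ((2 * p + 1) * (2 * q + 1)) (2 * p + 2 * q + 2) h := by
  have hp' : (2:ℝ) ≤ p := by exact_mod_cast hp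
  have hq' : (3:ℝ) ≤ q := by exact_mod_cast hq
  have e1 : (5 + (2 * (p:ℝ) + 1 - 5)) * (7 + (2 * (q:ℝ) + 1 - 7)) = (2 * p + 1) * (2 * q + 1) := by
    ring
  have e2 : (5 + (2 * (p:ℝ) + 1 - 5)) + (7 + (2 * (q:ℝ) + 1 - 7)) = 2 * p + 2 * q + 2 := by ring
  rcases h2.lt_or_eq with h2 | rfl
  · have := TT_pos_of_lt_two (A := 2 * (p:ℝ) + 1 - 5) (B := 2 * (q:ℝ) + 1 - 7)
      (by linarith) (by linarith) h1 h2
    rwa [e1, e2] at this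
  · have := TT_pos_at_two (A := 2 * (p:ℝ) + 1 - 5) (B := 2 * (q:ℝ) + 1 - 7)
      (by linarith) (by linarith)
    rwa [e1, e2] at this

/-- On the curve `z = ZN h / ZD h`, positivity of the quadratic truncation gives
`h < F1 / F0`. -/
lemma lt_of_TT_pos {p q : ℕ} (hp : 2 ≤ p) {z h : ℝ} (hz : 0 ≤ z) (hh : h ≤ 7)
    (hD : 0 < ZD ((2 * p + 1) * (2 * q + 1)) (2 * p + 2 * q + 2) h)
    (hN : ZN ((2 * p + 1) * (2 * q + 1)) (2 * p + 2 * q + 2) h =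
      z * ZD ((2 * p + 1) * (2 * q + 1)) (2 * p + 2 * q + 2) h)
    (hT : 0 < TT ((2 * p + 1) * (2 * q + 1)) (2 * p + 2 * q + 2) h) :
    h * F0 p q z < F1 p q z := by
  have h1 := trunc_le (q := q) hp hz hh
  rw [fc_one, fc_two] at h1
  have h2 : TT ((2 * p + 1) * (2 * q + 1)) (2 * p + 2 * q + 2) h =
      120 * ZD ((2 * p + 1) * (2 * q + 1)) (2 * p + 2 * q + 2) h ^ 2 *
      ((1 - h) + (3 - h) * (2 * p * q / 3) * z +
        (5 - h) * (2 * p * q * (p - 1) * (q - 1) / 15) * z ^ 2) := by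
    rw [TT, hN]; ring
  rw [h2] at hT
  have := pos_of_mul_pos_right hT (by positivity)
  linarith

lemma Phi_pos_of_lt {p q : ℕ} {c s z h : ℝ} (hc : 0 < c) (hz1 : z < 1)
    (hz0 : 1 < (c + 1) ^ 2 * z) (hh : 0 < h) (hN : ZN c s h = z * ZD c s h)
    (hF : 0 < F0 p q z) (hlt : h * F0 p q z < F1 p q z) : 0 < Phi p q c s z := by
  by_contra hcon
  push Not at hcon
  have hw : F1 p q z = F1 p q z / F0 p q z * F0 p q z := by field_simp
  set w := F1 p q z / F0 p q z
  have h1 : Phi p q c s z = F0 p q z ^ 2 *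
      (c * (1 - z) * w ^ 2 + (s * ((c + 1) * z - 1)) * w + (1 - (c + 1) ^ 2 * z)) := by
    unfold Phi; rw [hw]; ring
  have h2 : c * (1 - z) * w ^ 2 + (s * ((c + 1) * z - 1)) * w + (1 - (c + 1) ^ 2 * z) ≤ 0 := by
    rw [h1] at hcon
    by_contra h; push Not at h
    have : 0 < F0 p q z ^ 2 * (c * (1 - z) * w ^ 2 + (s * ((c + 1) * z - 1)) * w +
      (1 - (c + 1) ^ 2 * z)) := by positivity
    linarith
  have h3 : h < w := by rw [lt_div_iff₀ hF]; exact hlt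
  have := quad_neg (mul_pos hc (by linarith : 0 < 1 - z)) (by linarith) hh h3 h2
  unfold ZN ZD at hN
  linarith

lemma lt_of_Phi_pos {p q : ℕ} {c s z h : ℝ} (hc : 0 < c) (hz1 : z < 1)
    (hz0 : 1 < (c + 1) ^ 2 * z) (hN : ZN c s h = z * ZD c s h)
    (hF : 0 < F0 p q z) (hF1 : 0 < F1 p q z) (hP : 0 < Phi p q c s z) :
    h * F0 p q z < F1 p q z := by
  by_contra hcon
  push Not at hcon
  have hw : F1 p q z = F1 p q z / F0 p q z * F0 p q z := by field_simp
  have hw0 : 0 < F1 p q z / F0 p q z := by positivity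
  have h3 : F1 p q z / F0 p q z ≤ h := by rw [div_le_iff₀ hF]; exact hcon
  set w := F1 p q z / F0 p q z
  have h1 : Phi p q c s z = F0 p q z ^ 2 *
      (c * (1 - z) * w ^ 2 + (s * ((c + 1) * z - 1)) * w + (1 - (c + 1) ^ 2 * z)) := by
    unfold Phi; rw [hw]; ring
  rw [h1] at hP
  have h2 := pos_of_mul_pos_right hP (by positivity)
  unfold ZN ZD at hN
  rcases h3.lt_or_eq with h3 | h3
  · have := quad_neg (mul_pos hc (by linarith : 0 < 1 - z)) (γ := 1 - (c + 1) ^ 2 * z)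
      (β := s * ((c + 1) * z - 1)) (by linarith) hw0 h3 (by linarith)
    linarith
  · rw [h3] at h2; linarith

/-- Barrier principle: a function that starts positive and has positive derivative at each of its
zeros stays positive. -/
lemma fence {f f' : ℝ → ℝ} {a b y : ℝ} (hf : ∀ x, HasDerivAt f (f' x) x) (ha : 0 < f a)
    (hcross : ∀ x, a ≤ x → x < b → f x = 0 → 0 < f' x) (hy : a ≤ y) (hyb : y < b) : 0 < f y := by
  have hnn : ∀ x, a ≤ x → x < b → 0 ≤ f x := by
    intro x hx hxb
    have := image_le_of_deriv_right_lt_deriv_boundary (f := fun x => - f x) (f' := fun x => - f' x)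
      (a := a) (b := x) (B := fun _ => 0) (B' := fun _ => 0)
      (fun x _ => (hf x).neg.continuousAt.continuousWithinAt)
      (fun x _ => (hf x).fun_neg.hasDerivWithinAt) (by simpa using ha.le)
      (fun x => hasDerivAt_const x 0)
      (fun u hu hu0 => by
        have := hcross u hu.1 (hu.2.trans hxb) (by simpa using hu0)
        linarith) (Set.right_mem_Icc.2 hx)
    simpa using this
  rcases (hnn y hy hyb).lt_or_eq with h | h
  · exact h
  exfalso
  have hay : a < y := lt_of_le_of_ne hy (by rintro rfl; linarith)
  have hmin : IsLocalMin f y := by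
    filter_upwards [Ioo_mem_nhds hay hyb] with x hx
    rw [← h]; exact hnn x hx.1.le hx.2
  have := hmin.hasDerivAt_eq_zero (hf y)
  have := hcross y hy hyb h.symm
  linarith

lemma ZD_factor (a b h : ℝ) : ZD (a * b) (a + b) h = (a * b + 1 - a * h) * (a * b + 1 - b * h) := by
  unfold ZD; ring

lemma ZN_factor (a b h : ℝ) : ZN (a * b) (a + b) h = (a * h - 1) * (b * h - 1) := by
  unfold ZN; ring

set_option maxHeartbeats 800000 in
/-- The range `p ≥ 3`, `h > 2`. Since `F1` is increasing, `F1 / F0 < c / (s - 1)`, so at any zero of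
`Phi` beyond the point `z1` of the curve with `h = 2` the ratio lies in the range where
`PP` is positive: `Phi` can only cross zero upwards, hence stays positive on `[z1, 1)`. -/
lemma core_big {p q : ℕ} (hp : 3 ≤ p) (hpq : p ≤ q) {z h : ℝ} (hz1 : z < 1)
    (h2 : 2 < h)
    (hD : 0 < ZD ((2 * p + 1) * (2 * q + 1)) (2 * p + 2 * q + 2) h)
    (hN : ZN ((2 * p + 1) * (2 * q + 1)) (2 * p + 2 * q + 2) h =
      z * ZD ((2 * p + 1) * (2 * q + 1)) (2 * p + 2 * q + 2) h) :
    h * F0 p q z < F1 p q z := by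
  have hp' : (3:ℝ) ≤ p := by exact_mod_cast hp
  have hq' : (3:ℝ) ≤ q := by exact_mod_cast hp.trans hpq
  obtain ⟨a, ha⟩ : ∃ a : ℝ, a = 2 * p + 1 := ⟨_, rfl⟩
  obtain ⟨b, hb⟩ : ∃ b : ℝ, b = 2 * q + 1 := ⟨_, rfl⟩
  have ha7 : 7 ≤ a := by linarith
  have hb7 : 7 ≤ b := by linarith
  have hs : 2 * (p:ℝ) + 2 * q + 2 = a + b := by rw [ha, hb]; ring
  have key1 : ∀ z, 0 ≤ z → z < 1 → (a + b - 1) * F1 p q z < a * b * F0 p q z := by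
    intro z hz hz1
    have := ode_F1 p q z
    have h3 : 0 < 2 * (1 - z) * F1d p q z := by
      have := F1d_pos (by omega : 1 ≤ p) (by omega : 1 ≤ q) hz
      have : 0 < 1 - z := by linarith
      positivity
    have e : a * b * F0 p q z - (a + b - 1) * F1 p q z = 2 * (1 - z) * F1d p q z := by
      rw [this, ha, hb]; ring
    linarith
  have PPp := fun w => PP_pos hp (hp.trans hpq) (w := w)
  have TTp := TT_pos (p := p) (q := q) (by omega) (by omega) (h := 2) (by norm_num) le_rfl
  have lTT := fun z => lt_of_TT_pos (p := p) (q := q) (by omega) (z := z) (h := 2)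
  rw [hs, ← ha, ← hb] at hD hN TTp
  simp only [hs, ← ha, ← hb] at lTT PPp
  have hc : 0 < a * b := by positivity
  -- `z1` is the point of the curve with `h = 2`, where the truncation bound still applies; the
  -- barrier argument runs on `[z1, 1)`.
  have hD2 : 0 < ZD (a * b) (a + b) 2 := by
    rw [ZD_factor]; exact mul_pos (by nlinarith) (by nlinarith)
  have hN2 : 0 < ZN (a * b) (a + b) 2 := by
    rw [ZN_factor]; exact mul_pos (by nlinarith) (by nlinarith)
  obtain ⟨z1, hz1e⟩ : ∃ z1, z1 = ZN (a * b) (a + b) 2 / ZD (a * b) (a + b) 2 := ⟨_, rfl⟩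
  have hN2' : ZN (a * b) (a + b) 2 = z1 * ZD (a * b) (a + b) 2 := by rw [hz1e]; field_simp
  have hz1p : 0 < z1 := by rw [hz1e]; positivity
  have hz1r : 1 < (a * b + 1) ^ 2 * z1 := by
    rw [hz1e, ← mul_div_assoc, one_lt_div hD2]
    have : 1 < ZN (a * b) (a + b) 2 := by
      rw [ZN_factor]; nlinarith
    have : ZD (a * b) (a + b) 2 ≤ (a * b + 1) ^ 2 := by
      unfold ZD; nlinarith
    nlinarith [sq_nonneg (a * b + 1)]
  -- `z` increases with `h` along the curve
  have mono : ∀ y w, z1 ≤ y → y < 1 → 0 < w →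
      ZN (a * b) (a + b) w = y * ZD (a * b) (a + b) w → 2 ≤ w := by
    intro y w hy hy1 hw hNw
    by_contra hlt
    push Not at hlt
    have h4 : 1 < (a * b + 1) ^ 2 * y := by nlinarith [sq_nonneg (a * b + 1)]
    have h5 : z1 * ZD (a * b) (a + b) 2 ≤ y * ZD (a * b) (a + b) 2 := by gcongr
    have := quad_neg (α := a * b * (1 - y)) (β := (a + b) * ((a * b + 1) * y - 1))
      (γ := 1 - (a * b + 1) ^ 2 * y) (mul_pos hc (by linarith)) (by linarith) hw hlt (by
        rw [← hN2'] at h5; unfold ZN ZD at h5; linarith)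
    unfold ZN ZD at hNw
    linarith
  have hzz : z1 ≤ z := by
    by_contra hlt
    push Not at hlt
    have hz0 : 0 < z := by
      have : 0 < z * ZD (a * b) (a + b) h := by
        rw [← hN, ZN_factor]; exact mul_pos (by nlinarith) (by nlinarith)
      exact pos_of_mul_pos_left this hD.le
    have h5 : z * ZD (a * b) (a + b) h < z1 * ZD (a * b) (a + b) h := by gcongr
    have hz11 : z1 < 1 := by
      rw [hz1e, div_lt_one hD2]
      have h6 : 0 < a * b + 2 - 2 * (a + b) := by nlinarith
      have h7 := mul_pos hc h6
      unfold ZD ZN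
      linarith
    have := quad_neg (α := a * b * (1 - z1)) (β := (a + b) * ((a * b + 1) * z1 - 1))
      (γ := 1 - (a * b + 1) ^ 2 * z1) (mul_pos hc (by linarith)) (by linarith) two_pos h2 (by
        rw [← hN] at h5; unfold ZN ZD at h5; linarith)
    unfold ZN ZD at hN2'
    linarith
  have hrz : ∀ y, z1 ≤ y → 1 < (a * b + 1) ^ 2 * y := by
    intro y hy; nlinarith [sq_nonneg (a * b + 1)]
  have hstart : 0 < Phi p q (a * b) (a + b) z1 :=
    Phi_pos_of_lt hc (by linarith) hz1r two_pos hN2' (F0_pos _ _ hz1p.le)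
      (lTT z1 hz1p.le (by norm_num) hD2 hN2' TTp)
  have hfin : 0 < Phi p q (a * b) (a + b) z := by
    refine fence (hasDerivAt_Phi p q (a * b) (a + b)) hstart (b := 1) ?_ hzz hz1
    intro y hy hy1 hy0
    have hyp : 0 < y := by linarith
    have hF := F0_pos p q hyp.le
    have hF1 := hF.trans (F0_lt_F1 (by omega : 1 ≤ p) (by omega : 1 ≤ q) hyp)
    have hw : F1 p q y = F1 p q y / F0 p q y * F0 p q y := by field_simp
    have hw0 : 0 < F1 p q y / F0 p q y := by positivity
    have hk := key1 y hyp.le hy1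
    have hd0 := ode_F0 p q y
    have hd1 := ode_F1 p q y
    unfold Phi at hy0
    unfold Phid
    set w := F1 p q y / F0 p q y
    rw [hw] at hk hd0 hd1 hy0 ⊢
    set f := F0 p q y
    have hwlt : (a + b - 1) * w < a * b := by
      have : ((a + b - 1) * w) * f < (a * b) * f := by linarith
      exact lt_of_mul_lt_mul_right this hF.le
    have hNw : ZN (a * b) (a + b) w = y * ZD (a * b) (a + b) w := by
      have : f ^ 2 * (ZN (a * b) (a + b) w - y * ZD (a * b) (a + b) w) = 0 := by
        unfold ZN ZD; linear_combination hy0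
      have := (mul_eq_zero.1 this).resolve_left (by positivity)
      linarith
    have hw2 := mono y w hy hy1 hw0 hNw
    have hDw : 0 < ZD (a * b) (a + b) w := by
      rw [ZD_factor]
      have ha' : a * w ≤ (a + b - 1) * w := by gcongr; linarith
      have hb' : b * w ≤ (a + b - 1) * w := by gcongr; linarith
      exact mul_pos (by linarith) (by linarith)
    have hcs : 0 < a * b + 2 - (a + b) * w := by
      have : (1 - y) * ZD (a * b) (a + b) w = a * b * (a * b + 2 - (a + b) * w) := by
        have : ZD (a * b) (a + b) w - ZN (a * b) (a + b) w =
            a * b * (a * b + 2 - (a + b) * w) := by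
          unfold ZD ZN; ring
        linear_combination this + hNw
      refine pos_of_mul_pos_right (this ▸ mul_pos (by linarith) hDw) hc.le
    have hid := Phid_identity (f := f) hyp.ne' (by linarith : 1 - y ≠ 0) hDw.ne' hNw hd0
      (f1d := F1d p q y) (by rw [hd1, ha, hb]; ring)
    have hpp := PPp w hw2 (by
      have : 2 * (p:ℝ) + 2 * q + 1 = a + b - 1 := by rw [ha, hb]; ring
      rw [this]; exact hwlt)
    have hpos : 0 < f ^ 2 * PP (a * b) (a + b) w := by positivity
    rw [← hid] at hpos
    have h3 := pos_of_mul_pos_left hpos (mul_pos hDw hcs).le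
    exact pos_of_mul_pos_right h3 (by positivity)
  have hz0 : 0 < z := by linarith
  have hF := F0_pos p q hz0.le
  exact lt_of_Phi_pos hc hz1 (hrz z hzz) hN hF
    (hF.trans (F0_lt_F1 (by omega : 1 ≤ p) (by omega : 1 ≤ q) hz0)) hfin

/-- The analytic heart: `F1 / F0` lies strictly above the curve `z = ZN h / ZD h`, on the branch
`h > 1`. At `z = 1` both quantities are explicit, by the differential equation, and the claim is
`(2p-1)(2q-1) > 2`. -/
lemma F0_mul_lt_F1 {p q : ℕ} (hS : (p = 1 ∧ 5 ≤ q) ∨ (p = 2 ∧ 3 ≤ q) ∨ (3 ≤ p ∧ p ≤ q))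
    {z h : ℝ} (hz0 : 0 < z) (hz1 : z ≤ 1) (h1 : 1 < h)
    (hN : ZN ((2 * p + 1) * (2 * q + 1)) (2 * p + 2 * q + 2) h =
      z * ZD ((2 * p + 1) * (2 * q + 1)) (2 * p + 2 * q + 2) h) :
    h * F0 p q z < F1 p q z := by
  have hp1 : (1:ℝ) ≤ p := by exact_mod_cast (by omega : 1 ≤ p)
  have hq1 : (3:ℝ) ≤ q := by exact_mod_cast (by omega : 3 ≤ q)
  have hpq6 : (2:ℝ) < (2 * p - 1) * (2 * q - 1) := by nlinarith
  have hNp : 0 < ZN ((2 * p + 1) * (2 * q + 1)) (2 * p + 2 * q + 2) h := by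
    rw [show 2 * (p:ℝ) + 2 * q + 2 = (2 * p + 1) + (2 * q + 1) by ring, ZN_factor]
    exact mul_pos (by nlinarith) (by nlinarith)
  have hD : 0 < ZD ((2 * p + 1) * (2 * q + 1)) (2 * p + 2 * q + 2) h :=
    pos_of_mul_pos_right (hN ▸ hNp) hz0.le
  have hdiff : (1 - z) * ZD ((2 * p + 1) * (2 * q + 1)) (2 * p + 2 * q + 2) h =
      (2 * p + 1) * (2 * q + 1) * ((2 * p + 1) * (2 * q + 1) + 2 - (2 * p + 2 * q + 2) * h) := by
    have : ∀ c s : ℝ, ZD c s h - ZN c s h = c * (c + 2 - s * h) := by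
      intro c s; unfold ZD ZN; ring
    linear_combination this ((2 * p + 1) * (2 * q + 1)) (2 * p + 2 * q + 2) + hN
  rcases hz1.lt_or_eq with hz1 | rfl
  · have hlt : (2 * p + 2 * q + 2) * h < (2 * (p:ℝ) + 1) * (2 * q + 1) + 2 := by
      have : 0 < (2 * (p:ℝ) + 1) * (2 * q + 1) *
          ((2 * p + 1) * (2 * q + 1) + 2 - (2 * p + 2 * q + 2) * h) := by
        rw [← hdiff]; exact mul_pos (by linarith) hD
      have := pos_of_mul_pos_right this (by positivity)
      linarith
    rcases hS with ⟨rfl, hq⟩ | ⟨rfl, hq⟩ | ⟨hp, hpq⟩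
    · have hq' : (5:ℝ) ≤ q := by exact_mod_cast hq
      have e1 : 3 * (11 + (2 * (q:ℝ) - 10)) = (2 * (1:ℕ) + 1) * (2 * q + 1) := by push_cast; ring
      have e2 : 14 + (2 * (q:ℝ) - 10) = 2 * (1:ℕ) + 2 * q + 2 := by push_cast; ring
      have hT : 0 < 6 * (1 - h) * ZD (3 * (11 + (2 * (q:ℝ) - 10))) (14 + (2 * (q:ℝ) - 10)) h +
          (3 - h) * (2 * (10 + (2 * (q:ℝ) - 10))) *
            ZN (3 * (11 + (2 * (q:ℝ) - 10))) (14 + (2 * (q:ℝ) - 10)) h := by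
        rcases lt_or_ge h (7/4) with h' | h'
        · exact linear_trunc_pos_left (by linarith) h1.le h'
        · exact linear_trunc_pos_right (by linarith) h' (by push_cast at hlt; linarith)
      rw [e1, e2, hN] at hT
      have h3 := trunc_one (q := q) (z := z) (h := h)
      rw [fc_one] at h3
      push_cast at h3 hT
      have h4 : 0 < 6 * ZD ((2 * 1 + 1) * (2 * (q:ℝ) + 1)) (2 * 1 + 2 * q + 2) h *
          (1 - h + (3 - h) * (2 * 1 * q / 3) * z) := by
        refine hT.trans_eq ?_
        ring
      push_cast at hD
      have := pos_of_mul_pos_right h4 (by positivity)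
      linarith
    · refine lt_of_TT_pos le_rfl hz0.le ?_ hD hN ?_
      · push_cast at hlt; nlinarith
      rcases le_or_gt h 2 with h' | h'
      · exact TT_pos le_rfl hq h1.le h'
      · have hq' : (3:ℝ) ≤ q := by exact_mod_cast hq
        have e1 : 5 * (7 + (2 * (q:ℝ) - 6)) = (2 * (2:ℕ) + 1) * (2 * q + 1) := by push_cast; ring
        have e2 : 12 + (2 * (q:ℝ) - 6) = 2 * (2:ℕ) + 2 * q + 2 := by push_cast; ring
        have := TT_pos_of_two_le (B := 2 * (q:ℝ) - 6) (by linarith) h'.le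
          (by push_cast at hlt; linarith)
        rwa [e1, e2] at this
    · rcases le_or_gt h 2 with h' | h'
      · exact lt_of_TT_pos (by omega) hz0.le (by linarith) hD hN
          (TT_pos (by omega) (by omega) h1.le h')
      · exact core_big hp hpq hz1 h' hD hN
  · have hh : (2 * p + 2 * q + 2) * h = (2 * (p:ℝ) + 1) * (2 * q + 1) + 2 := by
      rw [sub_self, zero_mul] at hdiff
      have := (mul_eq_zero.1 hdiff.symm).resolve_left (by positivity)
      linarith
    have hode := ode_F1 p q 1
    rw [sub_self, mul_zero, zero_mul] at hode
    have hF := F0_pos p q (zero_le_one (α := ℝ))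
    have h3 : 0 < (2 * (p:ℝ) + 2 * q + 1) * (2 * p + 2 * q + 2) * (F1 p q 1 - h * F0 p q 1) := by
      have : (2 * (p:ℝ) + 2 * q + 1) * (2 * p + 2 * q + 2) * (F1 p q 1 - h * F0 p q 1) =
        ((2 * p - 1) * (2 * q - 1) - 2) * F0 p q 1 := by
        linear_combination (2 * (p:ℝ) + 2 * q + 2) * hode - (2 * (p:ℝ) + 2 * q + 1) * F0 p q 1 * hh
      rw [this]; exact mul_pos (by linarith) hF
    have := pos_of_mul_pos_right h3 (by positivity)
    linarith

/-! ### Mixed moments of Gaussian pairs -/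

lemma integrable_pow_gaussianReal (v : NNReal) (n : ℕ) :
    Integrable (fun x : ℝ => x ^ n) (gaussianReal 0 v) := by
  have h := (memLp_id_gaussianReal (μ := 0) (v := v) (n : NNReal)).integrable_norm_pow'
  refine (integrable_norm_iff (by fun_prop)).1 ?_
  simpa using h

/-- Gaussian integration by parts. -/
lemma gaussianReal_moment_succ (v : NNReal) (hv : v ≠ 0) (n : ℕ) :
    ∫ x, x ^ (2 * n + 2) ∂gaussianReal 0 v =
      v * (2 * n + 1) * ∫ x, x ^ (2 * n) ∂gaussianReal 0 v := by
  have hInt : ∀ k : ℕ, Integrable (fun x : ℝ => x ^ k * gaussianPDFReal 0 v x) := by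
    intro k
    have h := integrable_pow_gaussianReal v k
    rw [gaussianReal_of_var_ne_zero _ hv, integrable_withDensity_iff_integrable_smul'
      (measurable_gaussianPDF _ _) (by simp [gaussianPDF])] at h
    refine h.congr (Filter.Eventually.of_forall fun x => ?_)
    simp [toReal_gaussianPDF, mul_comm]
  have hpdf : ∀ x, HasDerivAt (gaussianPDFReal 0 v) (-(x / v) * gaussianPDFReal 0 v x) x := by
    intro x
    have hv' : (v : ℝ) ≠ 0 := by exact_mod_cast hv
    have h1 : HasDerivAt (fun x : ℝ => -(x - 0) ^ 2 / (2 * v)) (-(x / v)) x := by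
      have := (((hasDerivAt_id x).fun_pow 2).fun_neg).div_const (2 * (v:ℝ))
      simp only [id, sub_zero] at this ⊢
      refine this.congr_deriv ?_
      field_simp
      norm_num
    have h2 := h1.exp.const_mul ((√(2 * Real.pi * v))⁻¹)
    rw [gaussianPDFReal_def]
    refine h2.congr_deriv ?_
    ring
  have hv' : (v : ℝ) ≠ 0 := by exact_mod_cast hv
  have key := integral_mul_deriv_eq_deriv_mul_of_integrable (A := ℝ)
    (u := fun x : ℝ => x ^ (2 * n + 1)) (v := gaussianPDFReal 0 v)
    (u' := fun x => ((2 * n + 1 : ℕ) : ℝ) * x ^ (2 * n))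
    (v' := fun x => -(x / v) * gaussianPDFReal 0 v x)
    (fun x _ => by simpa using hasDerivAt_pow (2 * n + 1) x) (fun x _ => hpdf x)
    (((hInt (2 * n + 2)).const_mul (-(1 / (v:ℝ)))).congr (Filter.Eventually.of_forall fun x => by
      simp only [Pi.mul_apply]; field_simp; ring))
    (((hInt (2 * n)).const_mul ((2 * n + 1 : ℕ) : ℝ)).congr (Filter.Eventually.of_forall fun x => by
      simp only [Pi.mul_apply]; ring))
    (hInt (2 * n + 1))
  rw [integral_gaussianReal_eq_integral_smul hv, integral_gaussianReal_eq_integral_smul hv]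
  simp only [smul_eq_mul]
  have e1 : ∫ x : ℝ, x ^ (2 * n + 1) * (-(x / v) * gaussianPDFReal 0 v x) =
      -(1 / (v:ℝ)) * ∫ x, gaussianPDFReal 0 v x * x ^ (2 * n + 2) := by
    rw [← integral_const_mul]; congr 1; ext x; field_simp; ring
  have e2 : ∫ x : ℝ, ((2 * n + 1 : ℕ) : ℝ) * x ^ (2 * n) * gaussianPDFReal 0 v x =
      (2 * n + 1) * ∫ x, gaussianPDFReal 0 v x * x ^ (2 * n) := by
    rw [← integral_const_mul]; congr 1; ext x; push_cast; ring
  rw [e1, e2] at key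
  field_simp at key
  linear_combination -key

lemma gaussianReal_moment (v : NNReal) (n : ℕ) :
    ∫ x, x ^ (2 * n) ∂gaussianReal 0 v =
      ((2 * n).factorial : ℝ) / (2 ^ n * n.factorial) * (v : ℝ) ^ n := by
  by_cases hv : v = 0
  · subst hv
    cases n with
    | zero => simp
    | succ k => simp
  induction n with
  | zero => simp
  | succ n ih =>
    rw [show 2 * (n + 1) = 2 * n + 2 by ring, gaussianReal_moment_succ v hv, ih,
      Nat.factorial_succ (2 * n + 1), Nat.factorial_succ (2 * n), Nat.factorial_succ n]
    push_cast
    field_simp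
    ring

lemma integral_even_pow_of_map {Ω : Type*} [MeasurableSpace Ω] {μ : Measure Ω} {Z : Ω → ℝ}
    (hZ : Measurable Z) {v : NNReal} (h : Measure.map Z μ = gaussianReal 0 v) (n : ℕ) :
    ∫ ω, Z ω ^ (2 * n) ∂μ = ((2 * n).factorial : ℝ) / (2 ^ n * n.factorial) * (v : ℝ) ^ n := by
  rw [← gaussianReal_moment, ← h, integral_map hZ.aemeasurable (by fun_prop)]

lemma integrable_pow_of_map {Ω : Type*} [MeasurableSpace Ω] {μ : Measure Ω} {Z : Ω → ℝ}
    (hZ : Measurable Z) {v : NNReal} (h : Measure.map Z μ = gaussianReal 0 v) (n : ℕ) :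
    Integrable (fun ω => Z ω ^ n) μ := by
  have := integrable_pow_gaussianReal v n
  rw [← h] at this
  exact this.comp_measurable hZ

lemma integrable_pow_mul_pow {Ω : Type*} [MeasurableSpace Ω] {μ : Measure Ω} {X Y : Ω → ℝ}
    (hX : Measurable X) (hY : Measurable Y) {v v' : NNReal}
    (h : Measure.map X μ = gaussianReal 0 v) (h' : Measure.map Y μ = gaussianReal 0 v') (m n : ℕ) :
    Integrable (fun ω => X ω ^ m * Y ω ^ n) μ := by
  refine ((integrable_pow_of_map hX h (2 * m)).add (integrable_pow_of_map hY h' (2 * n))).mono'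
    (by fun_prop) (Filter.Eventually.of_forall fun ω => ?_)
  simp only [Pi.add_apply, Real.norm_eq_abs]
  rw [abs_le, pow_mul', pow_mul']
  constructor <;> nlinarith [sq_nonneg (X ω ^ m - Y ω ^ n), sq_nonneg (X ω ^ m + Y ω ^ n),
    sq_nonneg (X ω ^ m), sq_nonneg (Y ω ^ n)]

open Polynomial in
lemma coeff_sq_add (A B : ℝ) (M m : ℕ) :
    ((C A * X ^ 2 + C B) ^ M : ℝ[X]).coeff m =
      if 2 ∣ m then (M.choose (m / 2) : ℝ) * A ^ (m / 2) * B ^ (M - m / 2) else 0 := by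
  have h1 : (C A * X ^ 2 + C B : ℝ[X]) ^ M = expand ℝ 2 ((C A * X + C B) ^ M) := by
    simp [map_pow]
  rw [h1, coeff_expand two_pos]
  congr 1
  rw [add_pow, finsetSum_coeff]
  have h2 : ∀ k, ((C A * X) ^ k * C B ^ (M - k) * (M.choose k : ℝ[X])).coeff (m / 2) =
      if k = m / 2 then (M.choose (m / 2) : ℝ) * A ^ (m / 2) * B ^ (M - m / 2) else 0 := by
    intro k
    have : ((C A * X) ^ k * C B ^ (M - k) * (M.choose k : ℝ[X])) =
        C (A ^ k * B ^ (M - k) * M.choose k) * X ^ k := by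
      rw [mul_pow]; simp only [map_mul, map_pow, map_natCast]; ring
    rw [this, coeff_C_mul_X_pow]
    by_cases hk : k = m / 2
    · rw [if_pos hk, if_pos hk.symm, hk]; ring
    · rw [if_neg hk, if_neg (Ne.symm hk)]
  simp only [h2]
  rw [Finset.sum_ite_eq']
  split_ifs with h
  · rfl
  · rw [Nat.choose_eq_zero_of_lt (by simpa using h)]; simp

open Polynomial in
lemma coeff_quad (A B D : ℝ) {p q : ℕ} (hpq : p ≤ q) {e : ℕ} (he : e ≤ 1) :
    ((C A * X ^ 2 + C B + C D * X) ^ (p + q + e) : ℝ[X]).coeff (2 * p + e) =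
      ∑ k ∈ Finset.range (p + 1), ((p + q + e).factorial : ℝ) /
        ((2 * k + e).factorial * (p - k).factorial * (q - k).factorial) *
        A ^ (p - k) * B ^ (q - k) * D ^ (2 * k + e) := by
  rw [add_comm, add_pow, finsetSum_coeff]
  symm
  have h2 : ∀ j, ((C D * X) ^ j * (C A * X ^ 2 + C B) ^ (p + q + e - j) *
      ((p + q + e).choose j : ℝ[X])).coeff (2 * p + e) =
      (p + q + e).choose j * D ^ j * if j ≤ 2 * p + e then
        ((C A * X ^ 2 + C B) ^ (p + q + e - j) : ℝ[X]).coeff (2 * p + e - j) else 0 := by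
    intro j
    have : ((C D * X) ^ j * (C A * X ^ 2 + C B) ^ (p + q + e - j) *
      ((p + q + e).choose j : ℝ[X])) = C ((p + q + e).choose j * D ^ j) *
        ((C A * X ^ 2 + C B) ^ (p + q + e - j) * X ^ j) := by
      rw [mul_pow]; simp only [map_mul, map_pow, map_natCast]; ring
    rw [this, coeff_C_mul, coeff_mul_X_pow']
  refine Finset.sum_of_injOn (fun k => 2 * k + e) (fun x _ y _ h => by simp only at h; omega)
    (fun k hk => by simp at hk ⊢; omega) ?_ ?_
  · intro j _ hj
    rw [h2]
    split_ifs with h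
    · rw [coeff_sq_add, if_neg, mul_zero]
      intro hd
      apply hj
      refine ⟨(j - e) / 2, ?_, ?_⟩
      · simp; omega
      · simp only; omega
    · simp
  · intro k hk
    have hk : k ≤ p := by simp at hk; omega
    rw [h2, if_pos (by omega), coeff_sq_add, if_pos (by omega),
      show (2 * p + e - (2 * k + e)) / 2 = p - k by omega,
      show p + q + e - (2 * k + e) - (p - k) = q - k by omega,
      Nat.cast_choose ℝ (by omega : 2 * k + e ≤ p + q + e),
      Nat.cast_choose ℝ (by omega : p - k ≤ p + q + e - (2 * k + e)),
      show p + q + e - (2 * k + e) - (p - k) = q - k by omega]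
    have := Nat.factorial_ne_zero (p + q + e - (2 * k + e))
    field_simp

open Polynomial in
/-- The Isserlis formula for `E[Y2^(2p+e) Y3^(2q+e)]`, `e ∈ {0, 1}`. Both sides are coefficients of
the same polynomial in `s`, namely `E[(s Y2 + Y3)^(2N)]`, which is a multiple of
`(A s² + 2 D s + B)^N`, with `A`, `B`, `D` the second moments, since `s Y2 + Y3` is a centered
Gaussian of that variance. -/
lemma mixed_moment {Ω : Type*} [MeasurableSpace Ω] (μ : Measure Ω) [IsProbabilityMeasure μ]
    {Y2 Y3 : Ω → ℝ} (h2 : Measurable Y2) (h3 : Measurable Y3)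
    (hG : ∀ c2 c3 : ℝ, ∃ v : NNReal,
      Measure.map (fun ω => c2 * Y2 ω + c3 * Y3 ω) μ = gaussianReal 0 v)
    {p q e : ℕ} (hpq : p ≤ q) (he : e ≤ 1) :
    ∫ ω, Y2 ω ^ (2 * p + e) * Y3 ω ^ (2 * q + e) ∂μ =
      ((2 * p + e).factorial * (2 * q + e).factorial : ℝ) / 2 ^ (p + q + e) *
      ∑ k ∈ Finset.range (p + 1),
        (∫ ω, Y2 ω ^ 2 ∂μ) ^ (p - k) * (∫ ω, Y3 ω ^ 2 ∂μ) ^ (q - k) *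
          (2 * ∫ ω, Y2 ω * Y3 ω ∂μ) ^ (2 * k + e) /
        ((2 * k + e).factorial * (p - k).factorial * (q - k).factorial) := by
  obtain ⟨v2, hv2⟩ := hG 1 0
  obtain ⟨v3, hv3⟩ := hG 0 1
  simp only [one_mul, zero_mul, add_zero, zero_add] at hv2 hv3
  have hInt := integrable_pow_mul_pow h2 h3 hv2 hv3
  set A := ∫ ω, Y2 ω ^ 2 ∂μ with hA
  set B := ∫ ω, Y3 ω ^ 2 ∂μ with hB
  set D := ∫ ω, Y2 ω * Y3 ω ∂μ with hD
  have hpow : ∀ (n : ℕ) (s : ℝ), ∫ ω, (s * Y2 ω + 1 * Y3 ω) ^ n ∂μ =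
      ∑ m ∈ Finset.range (n + 1), (n.choose m * ∫ ω, Y2 ω ^ m * Y3 ω ^ (n - m) ∂μ) * s ^ m := by
    intro n s
    have : ∀ ω, (s * Y2 ω + 1 * Y3 ω) ^ n =
        ∑ m ∈ Finset.range (n + 1), (n.choose m * s ^ m) * (Y2 ω ^ m * Y3 ω ^ (n - m)) := by
      intro ω
      rw [add_pow]
      refine Finset.sum_congr rfl fun m _ => ?_
      ring
    simp only [this]
    rw [integral_finsetSum _ fun m _ => (hInt m (n - m)).const_mul _]
    refine Finset.sum_congr rfl fun m _ => ?_
    rw [integral_const_mul]; ring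
  have hpoly : ∀ N : ℕ, (∑ m ∈ Finset.range (2 * N + 1),
      C ((2 * N).choose m * ∫ ω, Y2 ω ^ m * Y3 ω ^ (2 * N - m) ∂μ) * X ^ m : ℝ[X]) =
      C (((2 * N).factorial : ℝ) / (2 ^ N * N.factorial)) *
        (C A * X ^ 2 + C B + C (2 * D) * X) ^ N := by
    intro N
    refine Polynomial.funext fun s => ?_
    obtain ⟨v, hv⟩ := hG s 1
    have hm : Measurable (fun ω => s * Y2 ω + 1 * Y3 ω) := by fun_prop
    have hvar : (v : ℝ) = A * s ^ 2 + B + 2 * D * s := by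
      have e1 := integral_even_pow_of_map hm hv 1
      rw [hpow] at e1
      norm_num [Finset.sum_range_succ] at e1
      linarith
    have e2 := integral_even_pow_of_map hm hv N
    rw [hpow, hvar] at e2
    simp only [eval_finsetSum, eval_mul, eval_C, eval_pow, eval_X, eval_add]
    exact e2
  have hco := congrArg (fun P => P.coeff (2 * p + e)) (hpoly (p + q + e))
  simp only [finsetSum_coeff, coeff_C_mul_X_pow] at hco
  rw [Finset.sum_ite_eq, if_pos (by simp; omega), coeff_C_mul, coeff_quad _ _ _ hpq he,
    show 2 * (p + q + e) - (2 * p + e) = 2 * q + e by omega,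
    Nat.cast_choose ℝ (by omega : 2 * p + e ≤ 2 * (p + q + e)),
    show 2 * (p + q + e) - (2 * p + e) = 2 * q + e by omega] at hco
  have n1 : ((2 * (p + q + e)).factorial : ℝ) ≠ 0 := by positivity
  have n2 : ((p + q + e).factorial : ℝ) ≠ 0 := by positivity
  have n3 : ((2 * p + e).factorial : ℝ) ≠ 0 := by positivity
  have n4 : ((2 * q + e).factorial : ℝ) ≠ 0 := by positivity
  have hs : ∑ k ∈ Finset.range (p + 1), ((p + q + e).factorial : ℝ) /
        ((2 * k + e).factorial * (p - k).factorial * (q - k).factorial) *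
        A ^ (p - k) * B ^ (q - k) * (2 * D) ^ (2 * k + e) = (p + q + e).factorial *
      ∑ k ∈ Finset.range (p + 1), A ^ (p - k) * B ^ (q - k) * (2 * D) ^ (2 * k + e) /
        ((2 * k + e).factorial * (p - k).factorial * (q - k).factorial) := by
    rw [Finset.mul_sum]
    refine Finset.sum_congr rfl fun k _ => ?_
    ring
  rw [hs] at hco
  field_simp at hco ⊢
  linear_combination hco

lemma mixed_moment_odd {Ω : Type*} [MeasurableSpace Ω] (μ : Measure Ω) [IsProbabilityMeasure μ]
    {Y2 Y3 : Ω → ℝ} (h2 : Measurable Y2) (h3 : Measurable Y3)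
    (hG : ∀ c2 c3 : ℝ, ∃ v : NNReal,
      Measure.map (fun ω => c2 * Y2 ω + c3 * Y3 ω) μ = gaussianReal 0 v)
    {p q : ℕ} (hpq : p ≤ q) {A B D : ℝ} (hA : ∫ ω, Y2 ω ^ 2 ∂μ = A) (hB : ∫ ω, Y3 ω ^ 2 ∂μ = B)
    (hD : ∫ ω, Y2 ω * Y3 ω ∂μ = D) (hA0 : 0 < A) (hB0 : 0 < B) :
    ∫ ω, Y2 ω ^ (2 * p + 1) * Y3 ω ^ (2 * q + 1) ∂μ =
      D * ((2 * p + 1) * (2 * q + 1)) * (((2 * p).factorial * (2 * q).factorial : ℝ) /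
        (2 ^ (p + q) * p.factorial * q.factorial) * A ^ p * B ^ q) * F0 p q (D ^ 2 / (A * B)) := by
  rw [mixed_moment μ h2 h3 hG hpq le_rfl, hA, hB, hD, F0, Finset.mul_sum, Finset.mul_sum]
  refine Finset.sum_congr rfl fun k hk => ?_
  have hk : k ≤ p := by simp at hk; omega
  have e1 : (p.descFactorial k : ℝ) = p.factorial / (p - k).factorial := by
    rw [eq_div_iff (by positivity), mul_comm]
    exact_mod_cast Nat.factorial_mul_descFactorial hk
  have e2 : (q.descFactorial k : ℝ) = q.factorial / (q - k).factorial := by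
    rw [eq_div_iff (by positivity), mul_comm]
    exact_mod_cast Nat.factorial_mul_descFactorial (hk.trans hpq)
  rw [fc, e1, e2, div_pow, mul_pow A B k, show A ^ p = A ^ (p - k) * A ^ k by
    rw [← pow_add]; congr 1; omega, show B ^ q = B ^ (q - k) * B ^ k by
    rw [← pow_add]; congr 1; omega, Nat.factorial_succ (2 * p), Nat.factorial_succ (2 * q),
    show (4 : ℝ) ^ k = 2 ^ (2 * k) by rw [pow_mul]; norm_num]
  push_cast
  field_simp
  ring

lemma mixed_moment_even {Ω : Type*} [MeasurableSpace Ω] (μ : Measure Ω) [IsProbabilityMeasure μ]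
    {Y2 Y3 : Ω → ℝ} (h2 : Measurable Y2) (h3 : Measurable Y3)
    (hG : ∀ c2 c3 : ℝ, ∃ v : NNReal,
      Measure.map (fun ω => c2 * Y2 ω + c3 * Y3 ω) μ = gaussianReal 0 v)
    {p q : ℕ} (hpq : p ≤ q) {A B D : ℝ} (hA : ∫ ω, Y2 ω ^ 2 ∂μ = A) (hB : ∫ ω, Y3 ω ^ 2 ∂μ = B)
    (hD : ∫ ω, Y2 ω * Y3 ω ∂μ = D) (hA0 : 0 < A) (hB0 : 0 < B) :
    ∫ ω, Y2 ω ^ (2 * p) * Y3 ω ^ (2 * q) ∂μ =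
      (((2 * p).factorial * (2 * q).factorial : ℝ) /
        (2 ^ (p + q) * p.factorial * q.factorial) * A ^ p * B ^ q) * F1 p q (D ^ 2 / (A * B)) := by
  have := mixed_moment μ h2 h3 hG hpq (Nat.zero_le 1)
  simp only [add_zero] at this
  rw [this, hA, hB, hD, F1, Finset.mul_sum, Finset.mul_sum]
  refine Finset.sum_congr rfl fun k hk => ?_
  have hk : k ≤ p := by simp at hk; omega
  have e1 : (p.descFactorial k : ℝ) = p.factorial / (p - k).factorial := by
    rw [eq_div_iff (by positivity), mul_comm]
    exact_mod_cast Nat.factorial_mul_descFactorial hk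
  have e2 : (q.descFactorial k : ℝ) = q.factorial / (q - k).factorial := by
    rw [eq_div_iff (by positivity), mul_comm]
    exact_mod_cast Nat.factorial_mul_descFactorial (hk.trans hpq)
  rw [fc, e1, e2, div_pow, mul_pow A B k, show A ^ p = A ^ (p - k) * A ^ k by
    rw [← pow_add]; congr 1; omega, show B ^ q = B ^ (q - k) * B ^ k by
    rw [← pow_add]; congr 1; omega, Nat.factorial_succ (2 * k),
    show (4 : ℝ) ^ k = 2 ^ (2 * k) by rw [pow_mul]; norm_num]
  push_cast
  field_simp
  ring

lemma hasGaussianLaw_pair {Ω : Type*} [MeasurableSpace Ω] (μ : Measure Ω) [IsProbabilityMeasure μ]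
    {Y2 Y3 : Ω → ℝ} (h2 : Measurable Y2) (h3 : Measurable Y3)
    (hG : ∀ c2 c3 : ℝ, ∃ v : NNReal,
      Measure.map (fun ω => c2 * Y2 ω + c3 * Y3 ω) μ = gaussianReal 0 v) :
    HasGaussianLaw (fun ω => (Y2 ω, Y3 ω)) μ := by
  refine ⟨⟨fun L => ?_⟩⟩
  have hm : Measurable (fun ω => (Y2 ω, Y3 ω)) := h2.prodMk h3
  obtain ⟨v, hv⟩ := hG (L (1, 0)) (L (0, 1))
  have hL : ∀ x : ℝ × ℝ, L x = L (1, 0) * x.1 + L (0, 1) * x.2 := by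
    intro x
    have : x = x.1 • ((1 : ℝ), (0 : ℝ)) + x.2 • ((0 : ℝ), (1 : ℝ)) := by ext <;> simp
    conv_lhs => rw [this]
    rw [map_add, map_smul, map_smul]; simp [mul_comm]
  have hmap : (μ.map (fun ω => (Y2 ω, Y3 ω))).map L = gaussianReal 0 v := by
    rw [Measure.map_map L.continuous.measurable hm, ← hv]
    congr 1
    ext ω
    simp only [Function.comp]
    rw [hL]
  have hLa : AEMeasurable L (μ.map (fun ω => (Y2 ω, Y3 ω))) := L.continuous.measurable.aemeasurable
  have e1 : ∫ x, L x ∂(μ.map (fun ω => (Y2 ω, Y3 ω))) = 0 := by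
    have := integral_id_gaussianReal (μ := 0) (v := v)
    rw [← hmap, integral_map hLa (by fun_prop)] at this
    simpa using this
  have e2 : Var[L; μ.map (fun ω => (Y2 ω, Y3 ω))] = v := by
    have := variance_id_gaussianReal (μ := 0) (v := v)
    rw [← hmap, variance_map (by fun_prop) hLa] at this
    simpa using this
  rw [hmap, e1, e2, Real.toNNReal_coe]

lemma integral_eq_zero_of_map {Ω : Type*} [MeasurableSpace Ω] {μ : Measure Ω} {Z : Ω → ℝ}
    (hZ : Measurable Z) {v : NNReal} (h : Measure.map Z μ = gaussianReal 0 v) :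
    ∫ ω, Z ω ∂μ = 0 := by
  have := integral_id_gaussianReal (μ := 0) (v := v)
  rwa [← h, integral_map hZ.aemeasurable (by fun_prop)] at this

lemma sq_cov_le {Ω : Type*} [MeasurableSpace Ω] (μ : Measure Ω) [IsProbabilityMeasure μ]
    {Y2 Y3 : Ω → ℝ} (h2 : Measurable Y2) (h3 : Measurable Y3)
    (hG : ∀ c2 c3 : ℝ, ∃ v : NNReal,
      Measure.map (fun ω => c2 * Y2 ω + c3 * Y3 ω) μ = gaussianReal 0 v) :
    (∫ ω, Y2 ω * Y3 ω ∂μ) ^ 2 ≤ (∫ ω, Y2 ω ^ 2 ∂μ) * ∫ ω, Y3 ω ^ 2 ∂μ := by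
  obtain ⟨v2, hv2⟩ := hG 1 0
  obtain ⟨v3, hv3⟩ := hG 0 1
  simp only [one_mul, zero_mul, add_zero, zero_add] at hv2 hv3
  have i2 := integrable_pow_of_map h2 hv2 2
  have i3 := integrable_pow_of_map h3 hv3 2
  have i23 := integrable_pow_mul_pow h2 h3 hv2 hv3 1 1
  simp only [pow_one] at i23
  have hq : ∀ s : ℝ, 0 ≤ (∫ ω, Y2 ω ^ 2 ∂μ) * (s * s) + (2 * ∫ ω, Y2 ω * Y3 ω ∂μ) * s +
      ∫ ω, Y3 ω ^ 2 ∂μ := by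
    intro s
    have h0 : 0 ≤ ∫ ω, (s * Y2 ω + Y3 ω) ^ 2 ∂μ := integral_nonneg fun ω => sq_nonneg _
    have : ∀ ω, (s * Y2 ω + Y3 ω) ^ 2 =
        s ^ 2 * Y2 ω ^ 2 + 2 * s * (Y2 ω * Y3 ω) + Y3 ω ^ 2 := fun ω => by ring
    simp only [this] at h0
    rw [integral_add ((i2.const_mul _).fun_add (i23.const_mul _)) i3,
      integral_add (i2.const_mul _) (i23.const_mul _), integral_const_mul,
      integral_const_mul] at h0
    linarith
  have := discrim_le_zero hq
  rw [discrim] at this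
  linarith

/-! ### The threshold and the function H -/

/-- The threshold `t` is the parameter `ZN 1 / ZD 1` of the point `h = 1`. -/
lemma threshold_eq {m2 m3 : ℕ} (h2 : 1 ≤ m2) (h3 : 1 ≤ m3) :
    1 / (((2 * m2 + 1) * (2 * m3 + 1) + 1 : ℝ) + (1 + 1 / (2 * m2)) * (1 + 1 / (2 * m3))) =
    (4 * m2 * m3 : ℝ) / ((2 * m2 * (2 * m3 + 1) + 1) * (2 * m3 * (2 * m2 + 1) + 1)) := by
  have : (1 : ℝ) ≤ m2 := by exact_mod_cast h2
  have : (1 : ℝ) ≤ m3 := by exact_mod_cast h3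
  rw [div_eq_div_iff (by positivity) (by positivity)]
  field_simp
  ring

/-- `H z` is the positive root of `(r²z-1)H² - s(rz-1)H - c(1-z) = 0`; equivalently `h = 1 / H z`
lies on the curve `ZN h = z * ZD h`. Beyond the threshold the root is smaller than `1`. -/
lemma H_param {x y r z : ℝ} (hx : 1 ≤ x) (hy : 1 ≤ y) (hr : r = (2 * x + 1) * (2 * y + 1) + 1)
    (hz : 4 * x * y < z * ((2 * x * (2 * y + 1) + 1) * (2 * y * (2 * x + 1) + 1))) (hz1 : z ≤ 1) :
    ∃ h, 1 < h ∧ ZN ((2 * x + 1) * (2 * y + 1)) (2 * x + 2 * y + 2) h =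
        z * ZD ((2 * x + 1) * (2 * y + 1)) (2 * x + 2 * y + 2) h ∧
      ((x + y + 1) * (r * z - 1) +
        Real.sqrt (((y - x) * (r * z - 1)) ^ 2 +
          (2 * x + 1) ^ 3 * (2 * y + 1) ^ 3 * z)) / (r ^ 2 * z - 1) = 1 / h := by
  have hD : (2 * x * (2 * y + 1) + 1) * (2 * y * (2 * x + 1) + 1) < r ^ 2 := by
    rw [hr]; nlinarith [mul_pos (by linarith : 0 < x) (by linarith : 0 < y)]
  have hxy : 1 ≤ x * y := by nlinarith
  have hz0 : 0 < z := by
    by_contra hcon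
    have : 0 ≤ (2 * x * (2 * y + 1) + 1) * (2 * y * (2 * x + 1) + 1) := by positivity
    nlinarith
  have hα : 0 < r ^ 2 * z - 1 := by nlinarith
  set d := ((y - x) * (r * z - 1)) ^ 2 + (2 * x + 1) ^ 3 * (2 * y + 1) ^ 3 * z with hd
  have hd1 : d = ((x + y + 1) * (r * z - 1)) ^ 2 +
      (2 * x + 1) * (2 * y + 1) * (1 - z) * (r ^ 2 * z - 1) := by
    rw [hd, hr]; ring
  have hd0 : 0 < d := by
    have : 0 < (2 * x + 1) ^ 3 * (2 * y + 1) ^ 3 * z := by positivity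
    rw [hd]; positivity
  have hsq : √d ^ 2 = d := Real.sq_sqrt hd0.le
  have hs0 : 0 < √d := Real.sqrt_pos.2 hd0
  set n := (x + y + 1) * (r * z - 1) + √d with hn
  have hn0 : 0 < n := by
    rcases lt_or_ge 0 (r * z - 1) with h | h
    · have : 0 < (x + y + 1) * (r * z - 1) := by positivity
      linarith
    · have hzlt : z < 1 := by
        rcases hz1.lt_or_eq with h' | h'
        · exact h'
        · rw [h', hr] at h; nlinarith
      have h1 : 0 < (2 * x + 1) * (2 * y + 1) * (1 - z) * (r ^ 2 * z - 1) := by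
        have : 0 < 1 - z := by linarith
        positivity
      have h2 : -((x + y + 1) * (r * z - 1)) < √d := by
        apply Real.lt_sqrt_of_sq_lt
        rw [hd1]; linarith [neg_sq ((x + y + 1) * (r * z - 1))]
      linarith
  have hn1 : n < r ^ 2 * z - 1 := by
    have hpos : 0 < r ^ 2 * z - 1 - (x + y + 1) * (r * z - 1) := by
      have : 0 < r * z * (r - (x + y + 1)) := by
        have : 0 < r - (x + y + 1) := by rw [hr]; nlinarith
        have : 0 < r := by rw [hr]; positivity
        positivity
      linarith
    have : √d < r ^ 2 * z - 1 - (x + y + 1) * (r * z - 1) := by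
      rw [Real.sqrt_lt' hpos]
      have h1 : 0 < (r ^ 2 * z - 1) *
          (z * ((2 * x * (2 * y + 1) + 1) * (2 * y * (2 * x + 1) + 1)) - 4 * x * y) :=
        mul_pos hα (by linarith)
      have h2 : (r ^ 2 * z - 1 - (x + y + 1) * (r * z - 1)) ^ 2 - d = (r ^ 2 * z - 1) *
          (z * ((2 * x * (2 * y + 1) + 1) * (2 * y * (2 * x + 1) + 1)) - 4 * x * y) := by
        rw [hd1, hr]; ring
      linarith
    linarith
  refine ⟨(r ^ 2 * z - 1) / n, (one_lt_div hn0).2 hn1, ?_, by rw [one_div_div]⟩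
  have hroot : n ^ 2 - 2 * ((x + y + 1) * (r * z - 1)) * n -
      (2 * x + 1) * (2 * y + 1) * (1 - z) * (r ^ 2 * z - 1) = 0 := by
    have : n ^ 2 - 2 * ((x + y + 1) * (r * z - 1)) * n =
      √d ^ 2 - ((x + y + 1) * (r * z - 1)) ^ 2 := by rw [hn]; ring
    rw [this, hsq, hd1]; ring
  have hα' := hα.ne'
  have hkey : (r ^ 2 * z - 1) * (n ^ 2 - 2 * ((x + y + 1) * (r * z - 1)) * n -
      (2 * x + 1) * (2 * y + 1) * (1 - z) * (r ^ 2 * z - 1)) = 0 := by rw [hroot, mul_zero]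
  rw [ZN, ZD, ← hr]
  field_simp
  linear_combination -hkey

/-! ### The moment ratio inequality -/

/-- **Moment ratio inequality** (Theorem 1.2): for a centered bivariate Gaussian
vector `(X₂, X₃)` with nondegenerate components and `(m₂, m₃) ∈ S`,
`|E[X₂^(2m₂+1) X₃^(2m₃+1)]| / ((2m₂+1)(2m₃+1) E[X₂^(2m₂) X₃^(2m₃)])` is bounded by
`|Cov(X₂,X₃)|` when `|Corr(X₂,X₃)| ≤ √t`, and by `H(Corr²)·|Cov(X₂,X₃)|` otherwise,
with equality iff `X₂` and `X₃` are independent. -/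
theorem stmt_1 {Ω : Type*} [MeasurableSpace Ω] (μ : Measure Ω) [IsProbabilityMeasure μ]
    (m2 m3 : ℕ)
    (hS : (m2 = 1 ∧ 5 ≤ m3) ∨ (m2 = 2 ∧ 3 ≤ m3) ∨ (3 ≤ m2 ∧ m2 ≤ m3))
    (X2 X3 : Ω → ℝ) (hmeas2 : Measurable X2) (hmeas3 : Measurable X3)
    (hGauss : ∀ c2 c3 : ℝ, ∃ v : NNReal,
      Measure.map (fun ω => c2 * X2 ω + c3 * X3 ω) μ = gaussianReal 0 v)
    (hnd2 : 0 < variance X2 μ) (hnd3 : 0 < variance X3 μ) :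
    let r : ℝ := (2 * m2 + 1) * (2 * m3 + 1) + 1
    let t : ℝ := 1 / (r + (1 + 1 / (2 * m2)) * (1 + 1 / (2 * m3)))
    let H : ℝ → ℝ := fun z =>
      (((m2 : ℝ) + m3 + 1) * (r * z - 1) +
        Real.sqrt ((((m3 : ℝ) - m2) * (r * z - 1)) ^ 2 +
          (2 * m2 + 1) ^ 3 * (2 * m3 + 1) ^ 3 * z)) / (r ^ 2 * z - 1)
    let Cov : ℝ := (∫ ω, X2 ω * X3 ω ∂μ) - (∫ ω, X2 ω ∂μ) * (∫ ω, X3 ω ∂μ)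
    let Corr : ℝ := Cov / (Real.sqrt (variance X2 μ) * Real.sqrt (variance X3 μ))
    let L : ℝ := |∫ ω, X2 ω ^ (2 * m2 + 1) * X3 ω ^ (2 * m3 + 1) ∂μ| /
      (((2 * m2 + 1) * (2 * m3 + 1) : ℝ) * ∫ ω, X2 ω ^ (2 * m2) * X3 ω ^ (2 * m3) ∂μ)
    (|Corr| ≤ Real.sqrt t → L ≤ |Cov|) ∧
    (Real.sqrt t < |Corr| → L ≤ H (Corr ^ 2) * |Cov|) ∧
    (((|Corr| ≤ Real.sqrt t ∧ L = |Cov|) ∨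
        (Real.sqrt t < |Corr| ∧ L = H (Corr ^ 2) * |Cov|)) ↔
      IndepFun X2 X3 μ) := by
  have hp : 1 ≤ m2 := by omega
  have hq : 1 ≤ m3 := by omega
  have hpq : m2 ≤ m3 := by omega
  obtain ⟨v2, hv2⟩ := hGauss 1 0
  obtain ⟨v3, hv3⟩ := hGauss 0 1
  simp only [one_mul, zero_mul, add_zero, zero_add] at hv2 hv3
  have hmean2 : ∫ ω, X2 ω ∂μ = 0 := integral_eq_zero_of_map hmeas2 hv2
  have hmean3 : ∫ ω, X3 ω ∂μ = 0 := integral_eq_zero_of_map hmeas3 hv3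
  have hvar2 : variance X2 μ = ∫ ω, X2 ω ^ 2 ∂μ :=
    variance_of_integral_eq_zero hmeas2.aemeasurable hmean2
  have hvar3 : variance X3 μ = ∫ ω, X3 ω ^ 2 ∂μ :=
    variance_of_integral_eq_zero hmeas3.aemeasurable hmean3
  have hcs := sq_cov_le μ hmeas2 hmeas3 hGauss
  have hind : IndepFun X2 X3 μ ↔ ∫ ω, X2 ω * X3 ω ∂μ = 0 := by
    constructor
    · intro h
      rw [h.integral_fun_mul_eq_mul_integral (by fun_prop) (by fun_prop), hmean2, zero_mul]
    · intro h
      have hL2 := hasGaussianLaw_pair μ hmeas2 hmeas3 hGauss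
      refine hL2.indepFun_of_covariance_eq_zero ?_
      simp only [covariance, hmean2, hmean3, sub_zero, h]
  intro r t H Cov Corr L
  set A := ∫ ω, X2 ω ^ 2 ∂μ with hA
  set B := ∫ ω, X3 ω ^ 2 ∂μ with hB
  rw [hvar2] at hnd2
  rw [hvar3] at hnd3
  have hCov : Cov = ∫ ω, X2 ω * X3 ω ∂μ := by simp only [Cov, hmean2, zero_mul, sub_zero]
  have hodd := mixed_moment_odd μ hmeas2 hmeas3 hGauss hpq hA.symm hB.symm hCov.symm hnd2 hnd3
  have heven := mixed_moment_even μ hmeas2 hmeas3 hGauss hpq hA.symm hB.symm hCov.symm hnd2 hnd3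
  have hz : Corr ^ 2 = Cov ^ 2 / (A * B) := by
    simp only [Corr]
    rw [div_pow, mul_pow, hvar2, hvar3, Real.sq_sqrt hnd2.le, Real.sq_sqrt hnd3.le]
  rw [← hz] at hodd heven
  set z := Corr ^ 2 with hzdef
  have hz0 : 0 ≤ z := sq_nonneg _
  have hz1 : z ≤ 1 := by
    rw [hz, div_le_one (by positivity), hCov]; exact hcs
  have hF0 := F0_pos m2 m3 hz0
  have hF1 : 0 < F1 m2 m3 z := by
    rcases hz0.eq_or_lt with h | h
    · rw [← h]; simp [F1, Finset.sum_range_succ', fc_zero]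
    · exact hF0.trans (F0_lt_F1 hp hq h)
  have hL : L = F0 m2 m3 z / F1 m2 m3 z * |Cov| := by
    simp only [L]
    rw [hodd, heven]
    have hM : (0 : ℝ) < ((2 * m2).factorial * (2 * m3).factorial : ℝ) /
        (2 ^ (m2 + m3) * m2.factorial * m3.factorial) * A ^ m2 * B ^ m3 := by positivity
    set M := ((2 * m2).factorial * (2 * m3).factorial : ℝ) /
        (2 ^ (m2 + m3) * m2.factorial * m3.factorial) * A ^ m2 * B ^ m3
    rw [abs_mul, abs_mul, abs_mul, abs_of_pos hM, abs_of_pos hF0,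
      abs_of_pos (by positivity : (0 : ℝ) < (2 * m2 + 1) * (2 * m3 + 1))]
    field_simp
  have ht : t = _ := threshold_eq hp hq
  have hCz : Cov ≠ 0 → 0 < z := fun h => by rw [hz]; positivity
  -- Both bounds are strict as soon as the covariance is nonzero.
  have hstrict1 : Cov ≠ 0 → L < |Cov| := by
    intro h
    rw [hL]
    exact mul_lt_of_lt_one_left (abs_pos.2 h) ((div_lt_one hF1).2 (F0_lt_F1 hp hq (hCz h)))
  have hgt0 : √t < |Corr| → Cov ≠ 0 := by
    intro h h0
    have : Corr = 0 := by simp only [Corr, h0, zero_div]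
    rw [this, abs_zero] at h
    exact absurd h (not_lt.2 (Real.sqrt_nonneg _))
  have hstrict2 : √t < |Corr| → L < H z * |Cov| := by
    intro h
    have hC := hgt0 h
    have htz : t < z := by
      rwa [Real.sqrt_lt' (abs_pos.2 fun h0 => by simp [hzdef, h0] at hCz; exact hC hCz),
        sq_abs] at h
    have hx : (1 : ℝ) ≤ m2 := by exact_mod_cast hp
    have hy : (1 : ℝ) ≤ m3 := by exact_mod_cast hq
    rw [ht, div_lt_iff₀ (by positivity)] at htz
    obtain ⟨h, hh1, hN, hH⟩ := H_param hx hy (rfl : r = _) htz hz1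
    have hHz : H z = 1 / h := hH
    rw [hHz, hL]
    refine mul_lt_mul_of_pos_right ?_ (abs_pos.2 hC)
    rw [div_lt_div_iff₀ hF1 (by linarith), one_mul, mul_comm]
    exact F0_mul_lt_F1 hS (hCz hC) hz1 hh1 hN
  refine ⟨fun _ => ?_, fun h => (hstrict2 h).le, ?_⟩
  · by_cases h : Cov = 0
    · rw [hL, h]; simp
    · exact (hstrict1 h).le
  · rw [hind, ← hCov]
    constructor
    · rintro (⟨-, h⟩ | ⟨h, h'⟩)
      · by_contra hC
        exact (hstrict1 hC).ne h
      · exact absurd h' (hstrict2 h).ne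
    · intro h
      refine Or.inl ⟨?_, by rw [hL, h]; simp⟩
      simp only [Corr, h, zero_div, abs_zero]
      exact Real.sqrt_nonneg _
end

section
/- Let y2, y3 be real numbers with y2 ≥ 12 and y3 ≥ 12, and let (X2, X3) be a centered Gaussian random vector with each component nondegenerate. Then |E[|X2|^y2 · X2 · |X3|^y3 · X3]| / ((y2+1)(y3+1) · E[|X2|^y2 · |X3|^y3]) is at most |Cov(X2,X3)| if |Corr(X2,X3)| ≤ √(t_{y2,y3}), and at most H_{y2,y3}(Corr(X2,X3)^2) · |Cov(X2,X3)| if |Corr(X2,X3)| > √(t_{y2,y3}); moreover equality holds if and only if X2 and X3 are independent. -/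
open MeasureTheory ProbabilityTheory

/-!
Write `α = y2 + 1`, `β = y3 + 1`, `q = αβ`, `k = α + β`, `m = y2 y3 = q - k + 1`, and let `x`, `y` be
standard Gaussians with correlation `ρ`. By scaling and symmetry only `ρ ∈ [0, 1]` matters
(`map_pair_eq` identifies the law of the pair through its one-dimensional projections), and with

  `G(ρ) = E[|x|^y2 x |y|^y3 y] / q`,  `F(ρ) = E[|x|^y2 |y|^y3]`,  `R = G / (ρ F)`

the left-hand side of the theorem is `R · |Cov|`. At `ρ = 0` both sides vanish; for `ρ > 0` the
bounds hold strictly, which gives the equality case.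

Price's formula (`hasDerivAt_pairing`, from Gaussian integration by parts) gives `G' = F`, and
integrating by parts three times (`pairing_relation`) expresses the derivative of `F` through `F`
and `G`, so that `(1 - ρ²) F' = q G - (k - 1) ρ F`. Hence, with `z = ρ²`, `R` solves a Riccati
equation. The function `1 / (1 + m z / 4)` is a supersolution of it as long as `5 q z < 14`, so `R`
stays below it there (`ratio_lt_one_div`); in particular `R < 1`, which is the first bound since
`q t < 1`.

`H(z)` is the larger root of the quadratic
`P(z, R) = ((q + 1)² z - 1) R² - k ((q + 1) z - 1) R - q (1 - z)`,
so the second bound says `P < 0` for `t < z ≤ 1`. While `5 q z < 14` this follows from the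
supersolution (`ratio_quad_neg_of_small`). Beyond that point negativity persists, because along the
solution `P` has negative derivative at each of its zeros (`contact_deriv_neg`). Both facts reduce
to polynomial inequalities that have only positive coefficients once expressed in `α - 13`, `β - 13`
and a parameter running over the relevant interval (`phase_one_poly`, `phase_two_poly`); this is
the main use of `y2, y3 ≥ 12`. The degenerate point `ρ = 1` is handled directly, the relation there
being `q G = (k - 1) F`.
-/

open Set Filter Topology

/-! ### Polynomial inequalities -/

/-- A number `h` in `[n₀ / d₀, n₁ / d₁)` is a weighted mediant `(n₀ + n₁ w) / (d₀ + d₁ w)` with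
`w ≥ 0`. This turns a polynomial inequality on an interval into positivity of coefficients. -/
lemma exists_mediant {h n₀ d₀ n₁ d₁ : ℝ} (hd₀ : 0 < d₀) (hd₁ : 0 < d₁)
    (h₀ : n₀ ≤ d₀ * h) (h₁ : d₁ * h < n₁) :
    ∃ w : ℝ, 0 ≤ w ∧ n₀ + n₁ * w = h * (d₀ + d₁ * w) ∧ 0 < d₀ + d₁ * w := by
  have hpos : 0 < n₁ - d₁ * h := sub_pos.2 h₁
  have hw : 0 ≤ (d₀ * h - n₀) / (n₁ - d₁ * h) := div_nonneg (sub_nonneg.2 h₀) hpos.le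
  refine ⟨(d₀ * h - n₀) / (n₁ - d₁ * h), hw, ?_, by positivity⟩
  linear_combination div_mul_cancel₀ (d₀ * h - n₀) hpos.ne'

set_option maxHeartbeats 4000000 in
set_option maxRecDepth 100000 in
/-- The inequality `phase_two` with `h = n / d` and denominators cleared, in the nonnegative
variables `A = α - 13`, `B = β - 13` and `w`. All coefficients of the expansion are positive. -/
lemma phase_two_poly {A B w : ℝ} (hA : 0 ≤ A) (hB : 0 ≤ B) (hw : 0 ≤ w) (k q n d : ℝ)
    (hk : k = 26 + A + B) (hq : q = (13 + A) * (13 + B))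
    (hn : n = k + 2 * w) (hd : d = q + 2 + 3 * w) :
    0 < (2 * q * (q + 2) * n * d - k * (q + 1) * n ^ 2 - k * q * d ^ 2) *
        (q * n ^ 3 + (q + 1) * (q + 1 - k) * n ^ 2 * d -
          (k * (q + 1) + 2 * q - k ^ 2) * n * d ^ 2 + q * d ^ 3) -
      2 * (n ^ 2 - k * n * d + q * d ^ 2) *
        ((q + 1) ^ 2 * n ^ 2 - k * (q + 1) * n * d + q * d ^ 2) * ((q + 2) * n - k * d) := by
  subst hn hd hk hq
  ring_nf
  positivity

/-- The polynomial form of `contact_deriv_neg`, after elimination of `z`; `h` stands for the value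
of the ratio at the zero. -/
lemma phase_two {α β h : ℝ} (hα : 13 ≤ α) (hβ : 13 ≤ β)
    (h1 : α + β < (α * β + 2) * h) (h2 : h < 2 / 3) (k q : ℝ) (hk : k = α + β)
    (hq : q = α * β) :
    2 * (h ^ 2 - k * h + q) * ((q + 1) ^ 2 * h ^ 2 - k * (q + 1) * h + q) * ((q + 2) * h - k) <
      (2 * q * (q + 2) * h - k * (q + 1) * h ^ 2 - k * q) *
        (q * h ^ 3 + (q + 1) * (q + 1 - k) * h ^ 2 -
          (k * (q + 1) + 2 * q - k ^ 2) * h + q) := by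
  obtain ⟨w, hw, hn, hd⟩ := exists_mediant (h := h) (n₀ := α + β) (d₀ := α * β + 2) (n₁ := 2)
    (d₁ := 3) (by positivity) (by norm_num) h1.le (by linarith)
  have key := phase_two_poly (sub_nonneg.2 hα) (sub_nonneg.2 hβ) hw k q _ _
    (by rw [hk]; ring) (by rw [hq]; ring) rfl rfl
  rw [← hk, ← hq] at hn
  rw [← hq] at hd
  rw [hn] at key
  rw [← sub_pos]
  refine pos_of_mul_pos_left (b := (q + 2 + 3 * w) ^ 5) (lt_of_lt_of_eq key ?_) (by positivity)
  ring

set_option maxHeartbeats 4000000 in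
set_option maxRecDepth 100000 in
/-- The inequality `phase_one` with `z = n / d` and denominators cleared, in the nonnegative
variables `A = α - 13`, `B = β - 13` and `w`. All coefficients of the expansion are positive. -/
lemma phase_one_poly {A B w : ℝ} (hA : 0 ≤ A) (hB : 0 ≤ B) (hw : 0 ≤ w) (k q m n d : ℝ)
    (hk : k = 26 + A + B) (hq : q = (13 + A) * (13 + B)) (hm : m = (12 + A) * (12 + B))
    (hn : n = m + 14 * w) (hd : d = (q + 1) * m + q + 5 * q * w) :
    0 < 4 * d * k * ((q + 1) * n - d) * (4 * d + m * n) + q * (d - n) * (4 * d + m * n) ^ 2 -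
      16 * d ^ 2 * ((q + 1) ^ 2 * n - d) := by
  subst hn hd hk hq hm
  ring_nf
  positivity

/-- The quadratic of `ratio_quad_neg` is negative at `R = 1 / (1 + m z / 4)`, in the form
multiplied by `(1 + m z / 4) ^ 2`. The lower bound on `z` is the threshold `z ≥ t`. -/
lemma phase_one {α β z : ℝ} (hα : 13 ≤ α) (hβ : 13 ≤ β) (k q m : ℝ) (hk : k = α + β)
    (hq : q = α * β) (hm : m = q - k + 1)
    (h1 : m ≤ ((q + 1) * m + q) * z) (h2 : 5 * q * z < 14) :
    ((q + 1) ^ 2 * z - 1) - k * ((q + 1) * z - 1) * (1 + m / 4 * z)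
      - q * (1 - z) * (1 + m / 4 * z) ^ 2 < 0 := by
  have hm0 : 144 ≤ m := by rw [hm, hk, hq]; nlinarith
  have hq0 : 169 ≤ q := by rw [hq]; nlinarith
  obtain ⟨w, hw, hn, hd⟩ := exists_mediant (h := z) (by positivity : 0 < (q + 1) * m + q)
    (by positivity : 0 < 5 * q) h1 h2
  have key := phase_one_poly (sub_nonneg.2 hα) (sub_nonneg.2 hβ) hw k q m _ _
    (by rw [hk]; ring) (by rw [hq]; ring) (by rw [hm, hk, hq]; ring) rfl rfl
  rw [hn] at key
  rw [← neg_pos]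
  refine pos_of_mul_pos_left (b := 16 * ((q + 1) * m + q + 5 * q * w) ^ 3)
    (lt_of_lt_of_eq key ?_) (by positivity)
  ring


/-- A quadratic with positive leading and nonpositive constant coefficient, nonpositive at
`y > 0`, is negative on `(0, y)`. -/
lemma quad_neg_s3 {a b c x y : ℝ} (ha : 0 < a) (hc : 0 ≤ c) (hx : 0 < x) (hxy : x < y)
    (h : a * y ^ 2 - b * y - c ≤ 0) : a * x ^ 2 - b * x - c < 0 := by
  have hy : 0 < y := hx.trans hxy
  have h1 : (a * x ^ 2 - b * x - c) * y
      = x * (a * y ^ 2 - b * y - c) - a * x * y * (y - x) - c * (y - x) := by ring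
  have h2 : 0 < a * x * y * (y - x) := by have := sub_pos.2 hxy; positivity
  have h3 : 0 ≤ c * (y - x) := mul_nonneg hc (sub_pos.2 hxy).le
  have h4 : x * (a * y ^ 2 - b * y - c) ≤ 0 := mul_nonpos_of_nonneg_of_nonpos hx.le h
  by_contra hcon
  have := mul_nonneg (not_lt.1 hcon) hy.le
  linarith

/-! ### Comparison principles -/

lemma exists_lt_of_deriv_pos {f : ℝ → ℝ} {d a x : ℝ} (hax : a < x) (hd : HasDerivAt f d x)
    (hpos : 0 < d) : ∃ y ∈ Ioo a x, f y < f x := by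
  have h1 : ∀ᶠ y in 𝓝[<] x, 0 < slope f x y :=
    ((hasDerivAt_iff_tendsto_slope.1 hd).mono_left
      (nhdsWithin_mono x fun y (hy : y < x) => hy.ne)).eventually (lt_mem_nhds hpos)
  obtain ⟨y, hy, hyx⟩ := (h1.and (Ioo_mem_nhdsLT hax)).exists
  refine ⟨y, hyx, ?_⟩
  rw [slope_def_field] at hy
  by_contra hcon
  exact absurd hy (not_lt.2 (div_nonpos_of_nonneg_of_nonpos (by linarith) (by linarith [hyx.2])))

/-- A function which starts nonnegative and increases wherever it is nonpositive
stays positive. No condition is imposed on the derivative at the initial point. -/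
lemma pos_of_deriv_pos_of_nonpos {f f' : ℝ → ℝ} {b : ℝ} (hb : 0 < b)
    (hd : ∀ x ∈ Icc 0 b, HasDerivAt f (f' x) x) (h0 : 0 ≤ f 0)
    (h : ∀ x ∈ Ioc 0 b, f x ≤ 0 → 0 < f' x) : 0 < f b := by
  by_contra hcon
  push Not at hcon
  obtain ⟨x, hx, hmin⟩ := isCompact_Icc.exists_isMinOn (nonempty_Icc.2 hb.le)
    (fun x hx => (hd x hx).continuousAt.continuousWithinAt)
  obtain ⟨x, hx, hx0, hmin⟩ : ∃ x ∈ Ioc 0 b, f x ≤ 0 ∧ ∀ y ∈ Icc 0 b, f x ≤ f y := by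
    rcases hx.1.eq_or_lt with rfl | hpos
    · exact ⟨b, ⟨hb, le_rfl⟩, hcon, fun y hy => (hcon.trans h0).trans (hmin hy)⟩
    · exact ⟨x, ⟨hpos, hx.2⟩, (hmin ⟨hb.le, le_rfl⟩).trans hcon, fun y hy => hmin hy⟩
  obtain ⟨y, hy, hlt⟩ := exists_lt_of_deriv_pos hx.1 (hd x ⟨hx.1.le, hx.2⟩) (h x hx hx0)
  exact absurd (hmin y ⟨hy.1.le, hy.2.le.trans hx.2⟩) (not_le.2 hlt)

/-- A negative function which decreases at each of its zeros stays negative. -/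
lemma neg_of_deriv_neg_at_zeros {f f' : ℝ → ℝ} {a b : ℝ} (hab : a ≤ b)
    (hd : ∀ x ∈ Icc a b, HasDerivAt f (f' x) x) (ha : f a < 0)
    (h : ∀ x ∈ Icc a b, f x = 0 → f' x < 0) : f b < 0 := by
  have hle : ∀ ⦃x⦄, x ∈ Icc a b → f x ≤ 0 :=
    image_le_of_deriv_right_lt_deriv_boundary' (B := fun _ => 0) (B' := fun _ => 0)
      (fun x hx => (hd x hx).continuousAt.continuousWithinAt)
      (fun x hx => (hd x (Ico_subset_Icc_self hx)).hasDerivWithinAt) ha.le continuousOn_const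
      (fun x _ => (hasDerivAt_const x _).hasDerivWithinAt)
      (fun x hx => h x (Ico_subset_Icc_self hx))
  refine (hle ⟨hab, le_rfl⟩).lt_of_ne fun h0 => ?_
  have hab' : a < b := hab.lt_of_ne (by rintro rfl; exact ha.ne h0)
  obtain ⟨y, hy, hlt⟩ := exists_lt_of_deriv_pos hab' (hd b ⟨hab, le_rfl⟩).neg
    (neg_pos.2 (h b ⟨hab, le_rfl⟩ h0))
  have := hle ⟨hy.1.le, hy.2.le⟩
  simp only [Pi.neg_apply] at hlt
  linarith

/-! ### Differential inequalities for the ratio -/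

/-- For `5 q x² < 14` the ratio `R = G / (x F)` lies below `1 / (1 + m x² / 4)`, a supersolution
of the Riccati equation which `R` satisfies. -/
lemma ratio_lt_one_div {α β k q m : ℝ} (hα : 13 ≤ α) (hβ : 13 ≤ β) (hk : k = α + β)
    (hq : q = α * β) (hm : m = q - k + 1) {G F : ℝ → ℝ} (hG0 : G 0 = 0)
    (hG : ∀ x ∈ Ico (0 : ℝ) 1, HasDerivAt G (F x) x)
    (hF : ∀ x ∈ Ico (0 : ℝ) 1, HasDerivAt F ((q * G x - (k - 1) * x * F x) / (1 - x ^ 2)) x)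
    (hGpos : ∀ x ∈ Ioo (0 : ℝ) 1, 0 < G x) {x : ℝ} (hx0 : 0 < x) (hx1 : x < 1)
    (hx : 5 * q * x ^ 2 < 14) : (1 + m / 4 * x ^ 2) * G x < x * F x := by
  have hm0 : 144 ≤ m := by rw [hm, hk, hq]; nlinarith
  rw [← sub_pos]
  refine pos_of_deriv_pos_of_nonpos (f := fun y => y * F y - (1 + m / 4 * y ^ 2) * G y)
    (f' := fun y => (1 * F y + y * ((q * G y - (k - 1) * y * F y) / (1 - y ^ 2))) -
      ((m / 4 * (2 * y)) * G y + (1 + m / 4 * y ^ 2) * F y)) hx0 ?_ (by simp [hG0]) ?_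
  · intro y hy
    have hy1 : y ∈ Ico (0 : ℝ) 1 := ⟨hy.1, hy.2.trans_lt hx1⟩
    refine ((hasDerivAt_id y).mul (hF y hy1)).sub (HasDerivAt.mul ?_ (hG y hy1))
    simpa using (((hasDerivAt_pow 2 y).const_mul (m / 4)).const_add 1)
  · intro y hy hneg
    have hy1 : y < 1 := hy.2.trans_lt hx1
    have hz : 0 < 1 - y ^ 2 := by nlinarith [hy.1]
    have hg : 0 < G y := hGpos y ⟨hy.1, hy1⟩
    have hzx : 5 * q * y ^ 2 < 14 := by
      have : y ^ 2 ≤ x ^ 2 := by have := hy.1; gcongr; exact hy.2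
      nlinarith [show 0 < q by rw [hq]; positivity]
    -- the condition that `1 / (1 + m z / 4)` is a supersolution of the Riccati equation
    have hc : 0 < q - (k - 1) * (1 + m / 4 * y ^ 2)
        - (1 - y ^ 2) * (2 * (m / 4) + m / 4 * (1 + m / 4 * y ^ 2)) := by
      have e : q - (k - 1) * (1 + m / 4 * y ^ 2)
          - (1 - y ^ 2) * (2 * (m / 4) + m / 4 * (1 + m / 4 * y ^ 2))
          = m / 4 * (1 - y ^ 2 * (m / 4 + k - 4) + m / 4 * y ^ 2 * y ^ 2) := by
        rw [hm]; ring
      rw [e]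
      have h5 : y ^ 2 * (m / 4 + k - 4) < 1 := by
        have h6 : 14 * (m / 4 + k - 4) ≤ 5 * q := by
          rw [hm, hk, hq]; nlinarith
        have h7 : 0 < m / 4 + k - 4 := by rw [hk]; linarith
        have h8 : 0 < q := by rw [hq]; positivity
        have h9 : y ^ 2 * (14 * (m / 4 + k - 4)) ≤ y ^ 2 * (5 * q) := by gcongr
        linarith
      have h10 : 0 ≤ m / 4 * y ^ 2 * y ^ 2 := by positivity
      apply mul_pos <;> linarith
    have e2 : (1 * F y + y * ((q * G y - (k - 1) * y * F y) / (1 - y ^ 2))) -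
        ((m / 4 * (2 * y)) * G y + (1 + m / 4 * y ^ 2) * F y)
        = y / (1 - y ^ 2) * (G y * (q - (k - 1) * (1 + m / 4 * y ^ 2)
          - (1 - y ^ 2) * (2 * (m / 4) + m / 4 * (1 + m / 4 * y ^ 2)))
          + ((k - 1) + (1 - y ^ 2) * (m / 4)) * ((1 + m / 4 * y ^ 2) * G y - y * F y)) := by
      field_simp
      ring
    rw [e2]
    have h11 : 0 ≤ ((k - 1) + (1 - y ^ 2) * (m / 4)) * ((1 + m / 4 * y ^ 2) * G y - y * F y) := by
      apply mul_nonneg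
      · have : 0 ≤ (1 - y ^ 2) * (m / 4) := by positivity
        rw [hk]; linarith
      · linarith
    have h12 := mul_pos hg hc
    have h13 : 0 < y / (1 - y ^ 2) := div_pos hy.1 hz
    apply mul_pos h13; linarith

/-- Just above the threshold, where the bound of `ratio_lt_one_div` is available, it already
implies negativity of the quadratic whose positive root is `H`. -/
lemma ratio_quad_neg_of_small {α β k q m : ℝ} (hα : 13 ≤ α) (hβ : 13 ≤ β) (hk : k = α + β)
    (hq : q = α * β) (hm : m = q - k + 1) {R z : ℝ} (hR : 0 < R)
    (hz1 : z < 1) (h1 : m ≤ ((q + 1) * m + q) * z) (h2 : 5 * q * z < 14)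
    (hRz : R < 1 / (1 + m / 4 * z)) :
    ((q + 1) ^ 2 * z - 1) * R ^ 2 - k * ((q + 1) * z - 1) * R - q * (1 - z) < 0 := by
  have hm0 : 144 ≤ m := by rw [hm, hk, hq]; nlinarith
  have hq0 : 169 ≤ q := by rw [hq]; nlinarith
  have hk0 : 26 ≤ k := by linarith
  have hz0 : 0 < z := by
    have : 0 < ((q + 1) * m + q) * z := by linarith
    exact pos_of_mul_pos_right this (by positivity)
  have ha : 0 < (q + 1) ^ 2 * z - 1 := by
    have e1 : (q + 1) * m + q < m * (q + 1) ^ 2 := by nlinarith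
    have e2 : ((q + 1) * m + q) * z < m * (q + 1) ^ 2 * z := by gcongr
    nlinarith
  refine quad_neg_s3 ha (mul_nonneg (by linarith) (by linarith)) hR hRz ?_
  have key := phase_one hα hβ k q m hk hq hm h1 h2
  have hs : 0 < 1 + m / 4 * z := by positivity
  have e : ((q + 1) ^ 2 * z - 1) * (1 / (1 + m / 4 * z)) ^ 2
      - k * ((q + 1) * z - 1) * (1 / (1 + m / 4 * z)) - q * (1 - z)
      = (((q + 1) ^ 2 * z - 1) - k * ((q + 1) * z - 1) * (1 + m / 4 * z)
      - q * (1 - z) * (1 + m / 4 * z) ^ 2) / (1 + m / 4 * z) ^ 2 := by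
    field_simp
  rw [e]
  exact div_nonpos_of_nonpos_of_nonneg key.le (by positivity)

/-- At a zero of the quadratic, its derivative along a solution is negative. With `z = x²`, the
left-hand side of the conclusion is `x (1 - x²)` times the derivative in `x` of
`((q + 1)² x² - 1) R² - k ((q + 1) x² - 1) R - q (1 - x²)`, where the derivative of `R` is given by
the Riccati equation. Solving for `z` leaves a polynomial inequality in `R`, with
`k / (q + 2) < R < 2 / 3`. -/
lemma contact_deriv_neg {α β k q : ℝ} (hα : 13 ≤ α) (hβ : 13 ≤ β) (hk : k = α + β)
    (hq : q = α * β) {R z : ℝ} (hR : 0 < R) (hz0 : 13 ≤ 5 * q * z) (hz1 : z < 1)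
    (hP : ((q + 1) ^ 2 * z - 1) * R ^ 2 - k * ((q + 1) * z - 1) * R - q * (1 - z) = 0) :
    2 * z * (1 - z) * ((q + 1) ^ 2 * R ^ 2 - k * (q + 1) * R + q) +
      (2 * ((q + 1) ^ 2 * z - 1) * R - k * ((q + 1) * z - 1)) *
        (1 - z - R * (1 - k * z) - q * z * R ^ 2) < 0 := by
  have hq0 : 169 ≤ q := by rw [hq]; nlinarith
  have hk0 : 26 ≤ k := by linarith
  have hqk : 13 * k ≤ 2 * q := by rw [hk, hq]; nlinarith
  have hzp : 0 < z := by
    have : 0 < 5 * q * z := by linarith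
    exact pos_of_mul_pos_right this (by positivity)
  have ha : 0 < (q + 1) ^ 2 * z - 1 := by nlinarith
  -- `R < 2 / 3`, because the quadratic is already positive at `2 / 3`
  have hR2 : R < 2 / 3 := by
    by_contra hcon
    push Not at hcon
    have hneg : ((q + 1) ^ 2 * z - 1) * (2 / 3) ^ 2 - k * ((q + 1) * z - 1) * (2 / 3)
        - q * (1 - z) ≤ 0 := by
      rcases hcon.eq_or_lt with h | h
      · rw [h]; exact hP.le
      · exact (quad_neg_s3 ha (mul_nonneg (by linarith) (by linarith)) (by norm_num) h hP.le).le
    have hB : 0 < (2 * (q + 1) - 3 * α) * (2 * (q + 1) - 3 * β) := by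
      apply mul_pos <;> rw [hq] <;> nlinarith
    have hz4 : q * ((3 * α - 2) * (3 * β - 2)) * 5 <
        13 * ((2 * (q + 1) - 3 * α) * (2 * (q + 1) - 3 * β)) := by
      obtain ⟨A, rfl⟩ : ∃ A, α = 13 + A := ⟨α - 13, by ring⟩
      obtain ⟨B, rfl⟩ : ∃ B, β = 13 + B := ⟨β - 13, by ring⟩
      have hA : 0 ≤ A := by linarith
      have hB : 0 ≤ B := by linarith
      rw [hq, ← sub_pos]
      ring_nf
      positivity
    have h5 : 13 * ((2 * (q + 1) - 3 * α) * (2 * (q + 1) - 3 * β)) ≤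
      5 * q * z * ((2 * (q + 1) - 3 * α) * (2 * (q + 1) - 3 * β)) := by gcongr
    have h6 : 5 * q * (z * ((2 * (q + 1) - 3 * α) * (2 * (q + 1) - 3 * β)) -
        (3 * α - 2) * (3 * β - 2)) ≤ 0 := by
      apply mul_nonpos_of_nonneg_of_nonpos (by positivity)
      have : z * ((2 * (q + 1) - 3 * α) * (2 * (q + 1) - 3 * β)) - (3 * α - 2) * (3 * β - 2)
          = 9 * (((q + 1) ^ 2 * z - 1) * (2 / 3) ^ 2 - k * ((q + 1) * z - 1) * (2 / 3)
            - q * (1 - z)) := by rw [hk, hq]; ring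
      linarith
    linarith
  set A := R ^ 2 - k * R + q with hA
  set B := (q + 1) ^ 2 * R ^ 2 - k * (q + 1) * R + q with hB
  have hzB : z * B = A := by rw [hA, hB]; linear_combination hP
  have hApos : 0 < A := by
    rw [hA]; nlinarith [sq_nonneg R]
  have hBpos : 0 < B := by
    by_contra hcon
    have : z * B ≤ 0 := mul_nonpos_of_nonneg_of_nonpos hzp.le (not_lt.1 hcon)
    linarith
  have hBA : B - A = q * R * ((q + 2) * R - k) := by rw [hA, hB]; ring
  have hR1 : α + β < (α * β + 2) * R := by
    have h1 : 0 < q * R * ((q + 2) * R - k) := by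
      rw [← hBA, ← hzB]
      nlinarith
    have h2 := pos_of_mul_pos_right h1 (by positivity)
    rw [← hk, ← hq]; linarith
  have key := phase_two hα hβ hR1 hR2 k q hk hq
  rw [← hA, ← hB] at key
  have hz : z = A / B := by rw [← hzB]; field_simp
  refine neg_of_mul_neg_left (b := B ^ 2) ?_ (by positivity)
  have e : (2 * z * (1 - z) * B +
      (2 * ((q + 1) ^ 2 * z - 1) * R - k * ((q + 1) * z - 1)) *
        (1 - z - R * (1 - k * z) - q * z * R ^ 2)) * B ^ 2
      = 2 * A * (B - A) * B + (A * (2 * (q + 1) ^ 2 * R - k * (q + 1)) - B * (2 * R - k)) *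
        (B - A - R * (B - k * A) - q * A * R ^ 2) := by
    rw [hz]; field_simp; ring
  rw [e, hBA]
  have e2 : A * (2 * (q + 1) ^ 2 * R - k * (q + 1)) - B * (2 * R - k)
      = q * (2 * q * (q + 2) * R - k * (q + 1) * R ^ 2 - k * q) := by
    rw [hA, hB]; ring
  have e3 : q * R * ((q + 2) * R - k) - R * (B - k * A) - q * A * R ^ 2
      = - R * (q * R ^ 3 + (q + 1) * (q + 1 - k) * R ^ 2 -
          (k * (q + 1) + 2 * q - k ^ 2) * R + q) := by
    rw [hA, hB]; ring
  rw [e2, e3]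
  have hqR : 0 < q * R := by positivity
  have := mul_lt_mul_of_pos_left key hqR
  linarith

/-- For solutions of `G' = F`, `(1 - x²) F' = q G - (k - 1) x F`, the ratio `R = G / (x F)`
stays below the positive root of the quadratic on the whole range `t ≤ x² ≤ 1`. The endpoint
`x = 1`, where the equation is singular, is covered by the relation `q G(1) = (k - 1) F(1)`. -/
lemma ratio_quad_neg {α β k q m : ℝ} (hα : 13 ≤ α) (hβ : 13 ≤ β) (hk : k = α + β)
    (hq : q = α * β) (hm : m = q - k + 1) {G F : ℝ → ℝ} (hG0 : G 0 = 0)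
    (hG : ∀ x ∈ Ico (0 : ℝ) 1, HasDerivAt G (F x) x)
    (hF : ∀ x ∈ Ico (0 : ℝ) 1, HasDerivAt F ((q * G x - (k - 1) * x * F x) / (1 - x ^ 2)) x)
    (hGpos : ∀ x ∈ Ioo (0 : ℝ) 1, 0 < G x) (hFpos : ∀ x ∈ Icc (0 : ℝ) 1, 0 < F x)
    (h1 : q * G 1 = (k - 1) * F 1)
    {x : ℝ} (hx0 : 0 < x) (hx1 : x ≤ 1)
    (hx : m ≤ ((q + 1) * m + q) * x ^ 2) :
    ((q + 1) ^ 2 * x ^ 2 - 1) * (G x / (x * F x)) ^ 2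
      - k * ((q + 1) * x ^ 2 - 1) * (G x / (x * F x)) - q * (1 - x ^ 2) < 0 := by
  have hm0 : 144 ≤ m := by rw [hm, hk, hq]; nlinarith
  have hq0 : 169 ≤ q := by rw [hq]; nlinarith
  have hk0 : 26 ≤ k := by linarith
  have hqk : 13 * k ≤ 2 * q := by rw [hk, hq]; nlinarith
  rcases hx1.eq_or_lt with rfl | hx1
  · have hF1 := hFpos 1 (by simp)
    have hR : G 1 / (1 * F 1) = (k - 1) / q := by
      rw [one_mul, div_eq_div_iff hF1.ne' (by positivity)]; linarith
    rw [hR]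
    have e : ((q + 1) ^ 2 * 1 ^ 2 - 1) * ((k - 1) / q) ^ 2
      - k * ((q + 1) * 1 ^ 2 - 1) * ((k - 1) / q) - q * (1 - 1 ^ 2)
      = (k - 1) / q * ((q + 2) * (k - 1) - k * q) := by field_simp; ring
    rw [e]
    apply mul_neg_of_pos_of_neg
    · apply div_pos <;> linarith
    · nlinarith
  have small : ∀ y, 0 < y → y < 1 → m ≤ ((q + 1) * m + q) * y ^ 2 → 5 * q * y ^ 2 < 14 →
      ((q + 1) ^ 2 * y ^ 2 - 1) * (G y / (y * F y)) ^ 2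
      - k * ((q + 1) * y ^ 2 - 1) * (G y / (y * F y)) - q * (1 - y ^ 2) < 0 := by
    intro y hy0 hy1 hy hy2
    have hFy := hFpos y ⟨hy0.le, hy1.le⟩
    refine ratio_quad_neg_of_small hα hβ hk hq hm
      (div_pos (hGpos y ⟨hy0, hy1⟩) (mul_pos hy0 hFy)) (by nlinarith) hy hy2 ?_
    rw [div_lt_div_iff₀ (by positivity) (by positivity)]
    have := ratio_lt_one_div hα hβ hk hq hm hG0 hG hF hGpos hy0 hy1 hy2
    linarith
  by_cases hx2 : 5 * q * x ^ 2 < 14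
  · exact small x hx0 hx1 hx hx2
  push Not at hx2
  -- the starting point `5 q y² = 13` lies in the range of `small`, above the threshold
  set y := √(13 / (5 * q)) with hy
  have hysq : y ^ 2 = 13 / (5 * q) := Real.sq_sqrt (by positivity)
  have hy0 : 0 < y := Real.sqrt_pos.2 (by positivity)
  have hy5 : 5 * q * y ^ 2 = 13 := by rw [hysq]; field_simp
  have hyx : y ≤ x := by
    refine le_of_sq_le_sq ?_ hx0.le
    have : 0 < 5 * q := by positivity
    nlinarith
  refine neg_of_deriv_neg_at_zeros
    (f := fun y => ((q + 1) ^ 2 * y ^ 2 - 1) * (G y / (y * F y)) ^ 2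
      - k * ((q + 1) * y ^ 2 - 1) * (G y / (y * F y)) - q * (1 - y ^ 2))
    (f' := fun y => (2 * y ^ 2 * (1 - y ^ 2) * ((q + 1) ^ 2 * (G y / (y * F y)) ^ 2
        - k * (q + 1) * (G y / (y * F y)) + q) +
      (2 * ((q + 1) ^ 2 * y ^ 2 - 1) * (G y / (y * F y)) - k * ((q + 1) * y ^ 2 - 1)) *
        (1 - y ^ 2 - (G y / (y * F y)) * (1 - k * y ^ 2) -
          q * y ^ 2 * (G y / (y * F y)) ^ 2)) / (y * (1 - y ^ 2)))
    hyx ?_ ?_ ?_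
  · intro w hw
    have hw0 : 0 < w := hy0.trans_le hw.1
    have hw1 : w < 1 := hw.2.trans_lt hx1
    have hw2 : 0 < 1 - w ^ 2 := by nlinarith
    have hFw := hFpos w ⟨hw0.le, hw1.le⟩
    have hR := (hG w ⟨hw0.le, hw1⟩).div ((hasDerivAt_id w).mul (hF w ⟨hw0.le, hw1⟩))
      (mul_pos hw0 hFw).ne'
    have hz : HasDerivAt (fun w : ℝ => w ^ 2) (2 * w) w := by simpa using hasDerivAt_pow 2 w
    have := ((((hz.const_mul ((q + 1) ^ 2)).sub_const 1).mul (hR.pow 2)).sub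
      ((((hz.const_mul (q + 1)).sub_const 1).const_mul k).mul hR)).sub
      ((hz.const_sub 1).const_mul q)
    convert! this using 1
    simp only [id_eq, Pi.mul_apply, Pi.div_apply, Pi.pow_apply, Nat.add_one_sub_one, pow_one,
      Nat.cast_ofNat]
    field_simp
    ring
  · refine small y hy0 (hyx.trans_lt hx1) ?_ (by linarith)
    rw [hysq, mul_div_assoc', le_div_iff₀ (by positivity)]
    nlinarith
  · intro w hw hw0
    have hwp : 0 < w := hy0.trans_le hw.1
    have hw1 : w < 1 := hw.2.trans_lt hx1
    have hw2 : 0 < 1 - w ^ 2 := by nlinarith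
    have hFw := hFpos w ⟨hwp.le, hw1.le⟩
    refine div_neg_of_neg_of_pos (contact_deriv_neg hα hβ hk hq
      (div_pos (hGpos w ⟨hwp, hw1⟩) (mul_pos hwp hFw)) ?_ (by linarith) hw0) (by positivity)
    have : y ^ 2 ≤ w ^ 2 := by have := hw.1; gcongr
    have h5 : 0 < 5 * q := by positivity
    nlinarith

/-! ### Gaussian integration by parts -/

/-- Continuous functions of at most polynomial growth. -/
def PolyGrowth (u : ℝ → ℝ) : Prop :=
  Continuous u ∧ ∃ (C : ℝ) (n : ℕ), 0 ≤ C ∧ ∀ x, |u x| ≤ C * (1 + |x|) ^ n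

/-- The standard Gaussian measure on the line. -/
noncomputable abbrev stdG : Measure ℝ := gaussianReal 0 1

lemma integrable_one_add_abs_pow (n : ℕ) : Integrable (fun x : ℝ => (1 + |x|) ^ n) stdG := by
  have h1 : MemLp (fun _ : ℝ => (1 : ℝ)) n stdG := memLp_const 1
  have h2 : MemLp (fun x : ℝ => |x|) n stdG :=
    (memLp_id_gaussianReal' (μ := 0) (v := 1) (n : ENNReal) (by simp)).norm
  have h : MemLp (fun x : ℝ => 1 + |x|) n stdG := h1.add h2
  refine h.integrable_norm_pow'.congr (ae_of_all _ fun x => ?_)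
  simp only [Real.norm_eq_abs]
  rw [abs_of_nonneg (by positivity)]

lemma PolyGrowth.integrable {u : ℝ → ℝ} (hu : PolyGrowth u) : Integrable u stdG := by
  obtain ⟨hc, C, n, -, hb⟩ := hu
  exact ((integrable_one_add_abs_pow n).const_mul C).mono' hc.aestronglyMeasurable
    (ae_of_all _ hb)

lemma PolyGrowth.mul {u v : ℝ → ℝ} (hu : PolyGrowth u) (hv : PolyGrowth v) :
    PolyGrowth (fun x => u x * v x) := by
  obtain ⟨hc, C, n, hC, hb⟩ := hu
  obtain ⟨hc', C', n', hC', hb'⟩ := hv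
  refine ⟨hc.mul hc', C * C', n + n', by positivity, fun x => ?_⟩
  rw [abs_mul, pow_add]
  calc |u x| * |v x| ≤ (C * (1 + |x|) ^ n) * (C' * (1 + |x|) ^ n') := by
        gcongr; exacts [hb x, hb' x]
    _ = _ := by ring

lemma PolyGrowth.add {u v : ℝ → ℝ} (hu : PolyGrowth u) (hv : PolyGrowth v) :
    PolyGrowth (fun x => u x + v x) := by
  obtain ⟨hc, C, n, hC, hb⟩ := hu
  obtain ⟨hc', C', n', hC', hb'⟩ := hv
  refine ⟨hc.add hc', C + C', n + n', by positivity, fun x => ?_⟩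
  have h1 : (1 : ℝ) ≤ 1 + |x| := by linarith [abs_nonneg x]
  have e1 : (1 + |x|) ^ n ≤ (1 + |x|) ^ (n + n') := pow_le_pow_right₀ h1 (by omega)
  have e2 : (1 + |x|) ^ n' ≤ (1 + |x|) ^ (n + n') := pow_le_pow_right₀ h1 (by omega)
  calc |u x + v x| ≤ |u x| + |v x| := abs_add_le _ _
    _ ≤ C * (1 + |x|) ^ n + C' * (1 + |x|) ^ n' := add_le_add (hb x) (hb' x)
    _ ≤ C * (1 + |x|) ^ (n + n') + C' * (1 + |x|) ^ (n + n') := by gcongr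
    _ = _ := by ring

lemma polyGrowth_const (a : ℝ) : PolyGrowth (fun _ => a) :=
  ⟨continuous_const, |a|, 0, abs_nonneg _, fun x => by simp⟩

lemma polyGrowth_id : PolyGrowth (fun x => x) :=
  ⟨continuous_id, 1, 1, zero_le_one, fun x => by simp⟩

lemma PolyGrowth.comp_affine {u : ℝ → ℝ} (hu : PolyGrowth u) (s a : ℝ) :
    PolyGrowth (fun x => u (s * x + a)) := by
  obtain ⟨hc, C, n, hC, hb⟩ := hu
  refine ⟨hc.comp (by fun_prop), C * (1 + |s| + |a|) ^ n, n, by positivity, fun x => ?_⟩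
  calc |u (s * x + a)| ≤ C * (1 + |s * x + a|) ^ n := hb _
    _ ≤ C * ((1 + |s| + |a|) * (1 + |x|)) ^ n := by
        gcongr
        have : |s * x + a| ≤ |s| * |x| + |a| := (abs_add_le _ _).trans (by rw [abs_mul])
        nlinarith [abs_nonneg s, abs_nonneg a, abs_nonneg x,
          mul_nonneg (abs_nonneg a) (abs_nonneg x)]
    _ = _ := by rw [mul_pow]; ring

/-- Gaussian integration by parts (Stein's identity). -/
lemma stein {w w' : ℝ → ℝ} (hw : PolyGrowth w) (hw' : PolyGrowth w')
    (hd : ∀ x, HasDerivAt w (w' x) x) : ∫ x, x * w x ∂stdG = ∫ x, w' x ∂stdG := by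
  have hdens : ∀ {u : ℝ → ℝ}, PolyGrowth u →
      Integrable (fun x => u x * gaussianPDFReal 0 1 x) := by
    intro u hu
    have h := hu.integrable
    unfold stdG at h
    rw [gaussianReal_of_var_ne_zero _ one_ne_zero,
      integrable_withDensity_iff (measurable_gaussianPDF _ _)
        (ae_of_all _ fun _ => gaussianPDF_lt_top)] at h
    simpa using h
  have hpdf : ∀ x, HasDerivAt (gaussianPDFReal 0 1) (-x * gaussianPDFReal 0 1 x) x := by
    intro x
    have h1 : HasDerivAt (fun x : ℝ => -(x - 0) ^ 2 / (2 * ((1 : NNReal) : ℝ))) (-x) x := by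
      have := ((hasDerivAt_pow 2 x).neg).div_const 2
      convert! this using 1
      · ext; simp
      · simp
        ring
    have := (h1.exp).const_mul (√(2 * Real.pi * ((1 : NNReal) : ℝ)))⁻¹
    convert! this using 1
    simp only [gaussianPDFReal]
    ring
  have key := integral_mul_deriv_eq_deriv_mul_of_integrable (u := w) (u' := w')
    (v := gaussianPDFReal 0 1) (v' := fun x => -x * gaussianPDFReal 0 1 x)
    (fun x _ => hd x) (fun x _ => hpdf x) ?_ (hdens hw') (hdens hw)
  · rw [integral_gaussianReal_eq_integral_smul one_ne_zero,
      integral_gaussianReal_eq_integral_smul one_ne_zero]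
    simp only [smul_eq_mul]
    have e1 : ∀ x, gaussianPDFReal 0 1 x * (x * w x) = -(w x * (-x * gaussianPDFReal 0 1 x)) :=
      fun x => by ring
    simp_rw [e1, integral_neg, key, neg_neg, mul_comm]
  · refine (hdens (polyGrowth_id.mul hw)).neg.congr (ae_of_all _ fun x => ?_)
    simp only [Pi.neg_apply, Pi.mul_apply]; ring

/-- `E[u(x) v(s x + c z)]` for independent standard Gaussian `x`, `z`. When `s² + c² = 1` the two
arguments are standard Gaussians with correlation `s`. -/
noncomputable def pairing (u v : ℝ → ℝ) (s c : ℝ) : ℝ :=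
  ∫ p : ℝ × ℝ, u p.1 * v (s * p.1 + c * p.2) ∂(stdG.prod stdG)

lemma integrable_dominator (C : ℝ) (n m : ℕ) :
    Integrable (fun p : ℝ × ℝ => C * ((1 + |p.1|) ^ n * (1 + |p.2|) ^ m)) (stdG.prod stdG) :=
  ((integrable_one_add_abs_pow n).mul_prod (integrable_one_add_abs_pow m)).const_mul C

/-- A bound uniform in `s, c ∈ [-1, 1]`, used to dominate the integrands. -/
lemma exists_bound {u v : ℝ → ℝ} (hu : PolyGrowth u) (hv : PolyGrowth v) :
    ∃ (C : ℝ) (n m : ℕ), 0 ≤ C ∧ ∀ s c x z : ℝ, |s| ≤ 1 → |c| ≤ 1 →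
      |u x * v (s * x + c * z)| ≤ C * ((1 + |x|) ^ n * (1 + |z|) ^ m) := by
  obtain ⟨-, C, n, hC, hb⟩ := hu
  obtain ⟨-, C', n', hC', hb'⟩ := hv
  refine ⟨C * C', n + n', n', by positivity, fun s c x z hs hc => ?_⟩
  have hY : 1 + |s * x + c * z| ≤ (1 + |x|) * (1 + |z|) := by
    have h1 : |s * x + c * z| ≤ |s| * |x| + |c| * |z| :=
      (abs_add_le _ _).trans (by rw [abs_mul, abs_mul])
    nlinarith [abs_nonneg x, abs_nonneg z, mul_nonneg (abs_nonneg x) (abs_nonneg z)]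
  rw [abs_mul]
  calc |u x| * |v (s * x + c * z)|
      ≤ (C * (1 + |x|) ^ n) * (C' * (1 + |s * x + c * z|) ^ n') := by
        gcongr; exacts [hb x, hb' _]
    _ ≤ (C * (1 + |x|) ^ n) * (C' * ((1 + |x|) * (1 + |z|)) ^ n') := by gcongr
    _ = _ := by rw [mul_pow, pow_add]; ring

lemma aesm {u v : ℝ → ℝ} (hu : PolyGrowth u) (hv : PolyGrowth v) (s c : ℝ) :
    AEStronglyMeasurable (fun p : ℝ × ℝ => u p.1 * v (s * p.1 + c * p.2)) (stdG.prod stdG) :=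
  Continuous.aestronglyMeasurable
    ((hu.1.comp continuous_fst).mul (hv.1.comp (by fun_prop)))

lemma integrable_pairing {u v : ℝ → ℝ} (hu : PolyGrowth u) (hv : PolyGrowth v) {s c : ℝ}
    (hs : |s| ≤ 1) (hc : |c| ≤ 1) :
    Integrable (fun p : ℝ × ℝ => u p.1 * v (s * p.1 + c * p.2)) (stdG.prod stdG) := by
  obtain ⟨C, n, m, -, hb⟩ := exists_bound hu hv
  exact (integrable_dominator C n m).mono' (aesm hu hv s c)
    (ae_of_all _ fun p => hb s c p.1 p.2 hs hc)

lemma integrable_snd_pairing {u v : ℝ → ℝ} (hu : PolyGrowth u) (hv : PolyGrowth v) {s c : ℝ}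
    (hs : |s| ≤ 1) (hc : |c| ≤ 1) :
    Integrable (fun p : ℝ × ℝ => p.2 * (u p.1 * v (s * p.1 + c * p.2))) (stdG.prod stdG) := by
  obtain ⟨C, n, m, hC, hb⟩ := exists_bound hu hv
  refine (integrable_dominator C n (m + 1)).mono'
    (continuous_snd.aestronglyMeasurable.mul (aesm hu hv s c)) (ae_of_all _ fun p => ?_)
  rw [Real.norm_eq_abs, abs_mul]
  calc |p.2| * |u p.1 * v (s * p.1 + c * p.2)|
      ≤ (1 + |p.2|) * (C * ((1 + |p.1|) ^ n * (1 + |p.2|) ^ m)) := by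
        gcongr
        · linarith
        · exact hb s c p.1 p.2 hs hc
    _ = _ := by ring

/-- Integration by parts in the first of the two correlated Gaussians. -/
lemma stein_fst {u u' v v' : ℝ → ℝ} (hu : PolyGrowth u) (hu' : PolyGrowth u')
    (hv : PolyGrowth v) (hv' : PolyGrowth v') (hdu : ∀ x, HasDerivAt u (u' x) x)
    (hdv : ∀ x, HasDerivAt v (v' x) x) {s c : ℝ} (hs : |s| ≤ 1) (hc : |c| ≤ 1) :
    pairing (fun x => x * u x) v s c = pairing u' v s c + s * pairing u v' s c := by
  have i1 := integrable_pairing hu' hv hs hc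
  have i2 := (integrable_pairing hu hv' hs hc).const_mul s
  have i12 : Integrable (fun p : ℝ × ℝ => u' p.1 * v (s * p.1 + c * p.2)
      + s * (u p.1 * v' (s * p.1 + c * p.2))) (stdG.prod stdG) := i1.add i2
  unfold pairing
  rw [← integral_const_mul, ← integral_add i1 i2, integral_prod_symm _ i12,
    integral_prod_symm _ (integrable_pairing (polyGrowth_id.mul hu) hv hs hc)]
  refine integral_congr_ae (ae_of_all _ fun z => ?_)
  have := stein (w := fun x => u x * v (s * x + c * z))
    (w' := fun x => u' x * v (s * x + c * z) + s * (u x * v' (s * x + c * z)))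
    (hu.mul (hv.comp_affine s (c * z)))
    ((hu'.mul (hv.comp_affine s (c * z))).add
      ((polyGrowth_const s).mul (hu.mul (hv'.comp_affine s (c * z))))) ?_
  · simpa [mul_assoc] using this
  · intro x
    have h1 : HasDerivAt (fun x => s * x + c * z) s x := by
      simpa using ((hasDerivAt_id x).const_mul s).add_const (c * z)
    have := (hdu x).mul ((hdv (s * x + c * z)).comp x h1)
    convert! this using 1
    simp only [Function.comp]; ring

/-- Integration by parts in the independent component `z`. -/
lemma stein_snd {u v v' : ℝ → ℝ} (hu : PolyGrowth u)
    (hv : PolyGrowth v) (hv' : PolyGrowth v')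
    (hdv : ∀ x, HasDerivAt v (v' x) x) {s c : ℝ} (hs : |s| ≤ 1) (hc : |c| ≤ 1) :
    ∫ p : ℝ × ℝ, p.2 * (u p.1 * v (s * p.1 + c * p.2)) ∂(stdG.prod stdG)
      = c * pairing u v' s c := by
  have i2 := (integrable_pairing hu hv' hs hc).const_mul c
  unfold pairing
  rw [← integral_const_mul, integral_prod _ i2,
    integral_prod _ (integrable_snd_pairing hu hv hs hc)]
  refine integral_congr_ae (ae_of_all _ fun x => ?_)
  have := stein (w := fun z => u x * v (c * z + s * x))
    (w' := fun z => c * (u x * v' (c * z + s * x)))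
    ((polyGrowth_const _).mul (hv.comp_affine c (s * x)))
    ((polyGrowth_const c).mul ((polyGrowth_const _).mul (hv'.comp_affine c (s * x)))) ?_
  · simpa [add_comm] using this
  · intro z
    have h1 : HasDerivAt (fun z => c * z + s * x) c z := by
      simpa using ((hasDerivAt_id z).const_mul c).add_const (s * x)
    have := ((hdv (c * z + s * x)).comp z h1).const_mul (u x)
    convert! this using 1
    ring

/-- Integration by parts in the second of the two correlated Gaussians. -/
lemma stein_sum {u u' v v' : ℝ → ℝ} (hu : PolyGrowth u) (hu' : PolyGrowth u')
    (hv : PolyGrowth v) (hv' : PolyGrowth v') (hdu : ∀ x, HasDerivAt u (u' x) x)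
    (hdv : ∀ x, HasDerivAt v (v' x) x) {s c : ℝ} (hs : |s| ≤ 1) (hc : |c| ≤ 1)
    (hsc : s ^ 2 + c ^ 2 = 1) :
    pairing u (fun y => y * v y) s c = s * pairing u' v s c + pairing u v' s c := by
  have h1 := stein_fst hu hu' hv hv' hdu hdv hs hc
  have h2 := stein_snd hu hv hv' hdv hs hc
  have i1 := (integrable_pairing (polyGrowth_id.mul hu) hv hs hc).const_mul s
  have i2 := (integrable_snd_pairing hu hv hs hc).const_mul c
  have e : pairing u (fun y => y * v y) s c = s * pairing (fun x => x * u x) v s c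
      + c * ∫ p : ℝ × ℝ, p.2 * (u p.1 * v (s * p.1 + c * p.2)) ∂(stdG.prod stdG) := by
    unfold pairing
    rw [← integral_const_mul, ← integral_const_mul, ← integral_add i1 i2]
    congr 1
    ext p
    ring
  rw [e, h1, h2]
  linear_combination (pairing u v' s c) * hsc

/-- Price's formula, with the correlation written as `sin φ`: the derivative of `E[u(x) v(y)]` in
the correlation is `E[u'(x) v'(y)]`. The angle keeps the coefficients smooth up to correlation
`±1`. -/
lemma hasDerivAt_pairing {u u' v v' v'' : ℝ → ℝ} (hu : PolyGrowth u) (hu' : PolyGrowth u')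
    (hv : PolyGrowth v) (hv' : PolyGrowth v') (hv'' : PolyGrowth v'')
    (hdu : ∀ x, HasDerivAt u (u' x) x)
    (hdv : ∀ x, HasDerivAt v (v' x) x) (hdv' : ∀ x, HasDerivAt v' (v'' x) x) (φ : ℝ) :
    HasDerivAt (fun φ => pairing u v (Real.sin φ) (Real.cos φ))
      (Real.cos φ * pairing u' v' (Real.sin φ) (Real.cos φ)) φ := by
  obtain ⟨C, n, m, hC, hb⟩ := exists_bound hu hv'
  have hs := Real.abs_sin_le_one
  have hc := Real.abs_cos_le_one
  have key := hasDerivAt_integral_of_dominated_loc_of_deriv_le (μ := stdG.prod stdG)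
    (F := fun φ (p : ℝ × ℝ) => u p.1 * v (Real.sin φ * p.1 + Real.cos φ * p.2))
    (F' := fun φ (p : ℝ × ℝ) => u p.1 * (v' (Real.sin φ * p.1 + Real.cos φ * p.2) *
      (Real.cos φ * p.1 + (-Real.sin φ) * p.2)))
    (bound := fun p => C * ((1 + |p.1|) ^ (n + 1) * (1 + |p.2|) ^ (m + 1)))
    (x₀ := φ) (s := univ) univ_mem
    (Eventually.of_forall fun ψ => aesm hu hv _ _)
    (integrable_pairing hu hv (hs φ) (hc φ)) ?_ ?_ (integrable_dominator C _ _) ?_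
  · convert! key.2 using 1
    have i1 := (integrable_pairing (polyGrowth_id.mul hu) hv' (hs φ) (hc φ)).const_mul (Real.cos φ)
    have i2 := (integrable_snd_pairing hu hv' (hs φ) (hc φ)).const_mul (-Real.sin φ)
    have e : ∫ p : ℝ × ℝ, u p.1 * (v' (Real.sin φ * p.1 + Real.cos φ * p.2) *
        (Real.cos φ * p.1 + (-Real.sin φ) * p.2)) ∂(stdG.prod stdG)
        = Real.cos φ * pairing (fun x => x * u x) v' (Real.sin φ) (Real.cos φ)
        + (-Real.sin φ) * ∫ p : ℝ × ℝ, p.2 * (u p.1 * v' (Real.sin φ * p.1 + Real.cos φ * p.2))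
          ∂(stdG.prod stdG) := by
      unfold pairing
      rw [← integral_const_mul, ← integral_const_mul, ← integral_add i1 i2]
      congr 1
      ext p
      ring
    rw [e, stein_fst hu hu' hv' hv'' hdu hdv' (hs φ) (hc φ),
      stein_snd hu hv' hv'' hdv' (hs φ) (hc φ)]
    ring
  · exact Continuous.aestronglyMeasurable
      ((hu.1.comp continuous_fst).mul ((hv'.1.comp (by fun_prop)).mul (by fun_prop)))
  · refine ae_of_all _ fun p ψ _ => ?_
    have h1 : |Real.cos ψ * p.1 + (-Real.sin ψ) * p.2| ≤ (1 + |p.1|) * (1 + |p.2|) := by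
      have h1 : |Real.cos ψ * p.1 + (-Real.sin ψ) * p.2|
          ≤ |Real.cos ψ| * |p.1| + |Real.sin ψ| * |p.2| :=
        (abs_add_le _ _).trans (by rw [abs_mul, abs_mul, abs_neg])
      nlinarith [abs_nonneg p.1, abs_nonneg p.2, mul_nonneg (abs_nonneg p.1) (abs_nonneg p.2),
        hs ψ, hc ψ]
    rw [Real.norm_eq_abs, ← mul_assoc, abs_mul]
    calc _ ≤ (C * ((1 + |p.1|) ^ n * (1 + |p.2|) ^ m)) * ((1 + |p.1|) * (1 + |p.2|)) := by
          gcongr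
          exact hb _ _ p.1 p.2 (hs ψ) (hc ψ)
      _ = _ := by ring
  · refine ae_of_all _ fun p ψ _ => ?_
    refine HasDerivAt.const_mul _ ((hdv _).comp ψ ?_)
    exact ((Real.hasDerivAt_sin ψ).mul_const p.1).add ((Real.hasDerivAt_cos ψ).mul_const p.2)

/-! ### Power functions and their differential equations -/

/-- The even power `|x|^p`. -/
noncomputable def evenPow (p x : ℝ) : ℝ := |x| ^ p

/-- The odd power `|x|^p x`, of degree `p + 1`. -/
noncomputable def oddPow (p x : ℝ) : ℝ := |x| ^ p * x

lemma polyGrowth_evenPow {p : ℝ} (hp : 0 ≤ p) : PolyGrowth (evenPow p) := by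
  refine ⟨continuous_abs.rpow_const fun x => Or.inr hp, 1, ⌈p⌉₊, zero_le_one, fun x => ?_⟩
  rw [evenPow, abs_of_nonneg (by positivity), one_mul, ← Real.rpow_natCast]
  calc |x| ^ p ≤ (1 + |x|) ^ p := by gcongr; linarith
    _ ≤ (1 + |x|) ^ ((⌈p⌉₊ : ℕ) : ℝ) :=
        Real.rpow_le_rpow_of_exponent_le (by linarith [abs_nonneg x]) (Nat.le_ceil p)

lemma polyGrowth_oddPow {p : ℝ} (hp : 0 ≤ p) : PolyGrowth (oddPow p) :=
  (polyGrowth_evenPow hp).mul polyGrowth_id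

lemma PolyGrowth.const_mul {u : ℝ → ℝ} (hu : PolyGrowth u) (a : ℝ) :
    PolyGrowth (fun x => a * u x) := (polyGrowth_const a).mul hu

lemma evenPow_eq_mul_oddPow {p : ℝ} (hp : p ≠ 0) (x : ℝ) :
    evenPow p x = x * oddPow (p - 2) x := by
  rcases eq_or_ne x 0 with rfl | hx
  · simp [evenPow, oddPow, Real.zero_rpow hp]
  · have : |x| ^ p = |x| ^ (p - 2) * |x| ^ 2 := by
      rw [← Real.rpow_natCast, ← Real.rpow_add (abs_pos.2 hx)]; norm_num
    rw [evenPow, oddPow, this, sq_abs]; ring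

lemma hasDerivAt_evenPow {p : ℝ} (hp : 1 < p) (x : ℝ) :
    HasDerivAt (evenPow p) (p * oddPow (p - 2) x) x := by
  have := hasDerivAt_abs_rpow x hp
  rwa [mul_assoc] at this

lemma hasDerivAt_oddPow {p : ℝ} (hp : 1 < p) (x : ℝ) :
    HasDerivAt (oddPow p) ((p + 1) * evenPow p x) x := by
  have h := (hasDerivAt_evenPow hp x).mul (hasDerivAt_id x)
  have e := evenPow_eq_mul_oddPow (by linarith : p ≠ 0) x
  convert! h using 1
  simp only [id]
  linear_combination p * e

lemma pairing_const_mul_left (u v : ℝ → ℝ) (a s c : ℝ) :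
    pairing (fun x => a * u x) v s c = a * pairing u v s c := by
  simp only [pairing, mul_assoc, integral_const_mul]

lemma pairing_const_mul_right (u v : ℝ → ℝ) (a s c : ℝ) :
    pairing u (fun x => a * v x) s c = a * pairing u v s c := by
  simp only [pairing, mul_left_comm _ a, integral_const_mul]

/-- Three integrations by parts close the system: the lower-order odd moment is a combination of
the two moments under study. The factor `1 - s²` degenerates at correlation one. -/
lemma pairing_relation {a b : ℝ} (ha : 12 ≤ a) (hb : 12 ≤ b) {s c : ℝ} (hs : |s| ≤ 1)
    (hc : |c| ≤ 1) (hsc : s ^ 2 + c ^ 2 = 1) :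
    (1 - s ^ 2) * (a * b * pairing (oddPow (a - 2)) (oddPow (b - 2)) s c)
      = pairing (oddPow a) (oddPow b) s c
        - s * (a + b + 1) * pairing (evenPow a) (evenPow b) s c := by
  have pa := polyGrowth_evenPow (by linarith : 0 ≤ a)
  have pa2 := polyGrowth_evenPow (by linarith : 0 ≤ a - 2)
  have qa2 := polyGrowth_oddPow (by linarith : 0 ≤ a - 2)
  have pb := polyGrowth_evenPow (by linarith : 0 ≤ b)
  have qb := polyGrowth_oddPow (by linarith : 0 ≤ b)
  have qb2 := polyGrowth_oddPow (by linarith : 0 ≤ b - 2)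
  have h1 := stein_fst pa (qa2.const_mul a) qb (pb.const_mul (b + 1))
    (hasDerivAt_evenPow (by linarith)) (hasDerivAt_oddPow (by linarith)) hs hc
  have h2 := stein_sum qa2 (pa2.const_mul (a - 2 + 1)) pb (qb2.const_mul b)
    (hasDerivAt_oddPow (by linarith)) (hasDerivAt_evenPow (by linarith)) hs hc hsc
  have h3 := stein_fst qa2 (pa2.const_mul (a - 2 + 1)) pb (qb2.const_mul b)
    (hasDerivAt_oddPow (by linarith)) (hasDerivAt_evenPow (by linarith)) hs hc
  have e1 : (fun x => x * evenPow a x) = oddPow a := by ext x; rw [oddPow, evenPow, mul_comm]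
  have e2 : (fun x => x * evenPow b x) = oddPow b := by ext x; rw [oddPow, evenPow, mul_comm]
  have e3 : (fun x => x * oddPow (a - 2) x) = evenPow a :=
    funext fun x => (evenPow_eq_mul_oddPow (by linarith) x).symm
  simp only [pairing_const_mul_left, pairing_const_mul_right, e1, e2, e3] at h1 h2 h3
  linear_combination -h1 - a * h2 + a * s * h3

/-- `E[u(x) v(y)]` for standard Gaussians `x`, `y` with correlation `ρ`. The coefficients are the
sine and cosine of `arcsin ρ`, so that `hasDerivAt_pairing` applies; they are `ρ` and
`√(1 - ρ²)` for `ρ ∈ [-1, 1]`. -/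
noncomputable def corrPairing (u v : ℝ → ℝ) (ρ : ℝ) : ℝ :=
  pairing u v (Real.sin (Real.arcsin ρ)) (Real.cos (Real.arcsin ρ))

lemma corrPairing_eq (u v : ℝ → ℝ) {ρ : ℝ} (h : ρ ∈ Icc (0 : ℝ) 1) :
    corrPairing u v ρ = pairing u v ρ √(1 - ρ ^ 2) := by
  rw [corrPairing, Real.sin_arcsin (by linarith [h.1]) h.2, Real.cos_arcsin]

lemma hasDerivAt_corrPairing {u u' v v' v'' : ℝ → ℝ} (hu : PolyGrowth u) (hu' : PolyGrowth u')
    (hv : PolyGrowth v) (hv' : PolyGrowth v') (hv'' : PolyGrowth v'')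
    (hdu : ∀ x, HasDerivAt u (u' x) x)
    (hdv : ∀ x, HasDerivAt v (v' x) x) (hdv' : ∀ x, HasDerivAt v' (v'' x) x) {ρ : ℝ}
    (hρ : ρ ∈ Ico (0 : ℝ) 1) :
    HasDerivAt (corrPairing u v) (corrPairing u' v' ρ) ρ := by
  have h := (hasDerivAt_pairing hu hu' hv hv' hv'' hdu hdv hdv' (Real.arcsin ρ)).comp ρ
    (Real.hasDerivAt_arcsin (by linarith [hρ.1]) hρ.2.ne)
  have hpos : 0 < √(1 - ρ ^ 2) := Real.sqrt_pos.2 (by nlinarith [hρ.1, hρ.2])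
  convert! h using 1
  rw [corrPairing, Real.cos_arcsin]
  field_simp

instance : Measure.IsOpenPosMeasure stdG :=
  (gaussianReal_absolutelyContinuous' 0 one_ne_zero).isOpenPosMeasure

lemma pairing_evenPow_pos {a b : ℝ} (ha : 0 ≤ a) (hb : 0 ≤ b) {s c : ℝ} (hs0 : 0 ≤ s)
    (hc0 : 0 ≤ c) (hs : s ≤ 1) (hc : c ≤ 1) (hsc : s ^ 2 + c ^ 2 = 1) :
    0 < pairing (evenPow a) (evenPow b) s c := by
  have pa := polyGrowth_evenPow ha
  have pb := polyGrowth_evenPow hb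
  have hcont : Continuous fun p : ℝ × ℝ => evenPow a p.1 * evenPow b (s * p.1 + c * p.2) :=
    (pa.1.comp continuous_fst).mul (pb.1.comp (by fun_prop))
  rw [pairing, integral_pos_iff_support_of_nonneg (fun p => by simp only [evenPow]; positivity)
    (integrable_pairing pa pb (abs_le.2 ⟨by linarith, hs⟩) (abs_le.2 ⟨by linarith, hc⟩))]
  refine hcont.isOpen_support.measure_pos _ ⟨(1, 1), ?_⟩
  have : 0 < s + c := by nlinarith
  have h2 : 0 < |s * 1 + c * 1| := by rw [mul_one, mul_one]; positivity
  simp only [Function.mem_support, evenPow]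
  positivity

lemma corrPairing_evenPow_pos {a b : ℝ} (ha : 0 ≤ a) (hb : 0 ≤ b) {ρ : ℝ}
    (hρ : ρ ∈ Icc (0 : ℝ) 1) : 0 < corrPairing (evenPow a) (evenPow b) ρ := by
  rw [corrPairing_eq _ _ hρ]
  have h1 : 0 ≤ 1 - ρ ^ 2 := by nlinarith [hρ.1, hρ.2]
  refine pairing_evenPow_pos ha hb hρ.1 (Real.sqrt_nonneg _) hρ.2 ?_ ?_
  · exact Real.sqrt_le_iff.2 ⟨zero_le_one, by nlinarith⟩
  · rw [Real.sq_sqrt h1]; ring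

lemma integral_oddPow {p : ℝ} : ∫ x, oddPow p x ∂stdG = 0 := by
  have h : stdG.map (fun x => -x) = stdG := by simp [stdG, gaussianReal_map_neg]
  have h2 : ∫ x, oddPow p x ∂(stdG.map (fun x => -x)) = ∫ x, oddPow p (-x) ∂stdG :=
    (MeasurableEquiv.neg ℝ).measurableEmbedding.integral_map _
  rw [h] at h2
  simp only [oddPow, abs_neg, mul_neg, integral_neg] at h2 ⊢
  linarith

lemma corrPairing_oddPow_zero (a b : ℝ) : corrPairing (oddPow a) (oddPow b) 0 = 0 := by
  rw [corrPairing_eq _ _ (by simp), pairing]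
  simp only [zero_mul, zero_add]
  norm_num
  rw [integral_prod_mul, integral_oddPow, zero_mul]

/-- The moment inequalities for standard Gaussians with correlation `ρ ∈ (0, 1]`: the odd moment
is positive, the ratio of moments divided by `ρ` is less than `1` while `5 q ρ² < 14`, and it makes
the quadratic negative once `ρ²` is at least `m / ((q + 1) m + q) = t`. -/
theorem corrPairing_bounds {a b : ℝ} (ha : 12 ≤ a) (hb : 12 ≤ b) (k q m : ℝ)
    (hk : k = (a + 1) + (b + 1)) (hq : q = (a + 1) * (b + 1)) (hm : m = q - k + 1)
    {ρ : ℝ} (hρ0 : 0 < ρ) (hρ1 : ρ ≤ 1) :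
    0 < corrPairing (oddPow a) (oddPow b) ρ ∧
    (5 * q * ρ ^ 2 < 14 → corrPairing (oddPow a) (oddPow b) ρ / q
      < ρ * corrPairing (evenPow a) (evenPow b) ρ) ∧
    (m ≤ ((q + 1) * m + q) * ρ ^ 2 →
      ((q + 1) ^ 2 * ρ ^ 2 - 1) * (corrPairing (oddPow a) (oddPow b) ρ / q /
          (ρ * corrPairing (evenPow a) (evenPow b) ρ)) ^ 2
      - k * ((q + 1) * ρ ^ 2 - 1) * (corrPairing (oddPow a) (oddPow b) ρ / q /
          (ρ * corrPairing (evenPow a) (evenPow b) ρ)) - q * (1 - ρ ^ 2) < 0) := by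
  have hq0 : 169 ≤ q := by rw [hq]; nlinarith
  have hm0 : 144 ≤ m := by rw [hm, hk, hq]; nlinarith
  have pa := polyGrowth_evenPow (by linarith : 0 ≤ a)
  have qa := polyGrowth_oddPow (by linarith : 0 ≤ a)
  have qa2 := polyGrowth_oddPow (by linarith : 0 ≤ a - 2)
  have pb := polyGrowth_evenPow (by linarith : 0 ≤ b)
  have pb2 := polyGrowth_evenPow (by linarith : 0 ≤ b - 2)
  have qb := polyGrowth_oddPow (by linarith : 0 ≤ b)
  have qb2 := polyGrowth_oddPow (by linarith : 0 ≤ b - 2)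
  set F := corrPairing (evenPow a) (evenPow b) with hFdef
  set G : ℝ → ℝ := fun x => corrPairing (oddPow a) (oddPow b) x / q with hGdef
  have hrel : ∀ x ∈ Icc (0 : ℝ) 1,
      (1 - x ^ 2) * (a * b * corrPairing (oddPow (a - 2)) (oddPow (b - 2)) x)
        = q * G x - (k - 1) * x * F x := by
    intro x hx
    have h := pairing_relation ha hb (Real.abs_sin_le_one (Real.arcsin x))
      (Real.abs_cos_le_one (Real.arcsin x)) (Real.sin_sq_add_cos_sq _)
    have hqG : q * G x = corrPairing (oddPow a) (oddPow b) x := by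
      simp only [hGdef]; field_simp
    rw [hqG, hFdef]
    simp only [← corrPairing.eq_1] at h
    rw [Real.sin_arcsin (by linarith [hx.1]) hx.2] at h
    rw [h, hk]; ring
  have hFpos : ∀ x ∈ Icc (0 : ℝ) 1, 0 < F x := fun x hx =>
    corrPairing_evenPow_pos (by linarith) (by linarith) hx
  have hG : ∀ x ∈ Ico (0 : ℝ) 1, HasDerivAt G (F x) x := by
    intro x hx
    have h := (hasDerivAt_corrPairing qa (pa.const_mul (a + 1)) qb (pb.const_mul (b + 1))
      ((qb2.const_mul b).const_mul (b + 1))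
      (hasDerivAt_oddPow (by linarith)) (hasDerivAt_oddPow (by linarith))
      (fun y => (hasDerivAt_evenPow (by linarith) y).const_mul (b + 1)) hx).div_const q
    convert! h using 1
    simp only [corrPairing, pairing_const_mul_left, pairing_const_mul_right, hFdef, hq]
    field_simp
  have hF : ∀ x ∈ Ico (0 : ℝ) 1,
      HasDerivAt F ((q * G x - (k - 1) * x * F x) / (1 - x ^ 2)) x := by
    intro x hx
    have h := hasDerivAt_corrPairing pa (qa2.const_mul a) pb (qb2.const_mul b)
      ((pb2.const_mul (b - 2 + 1)).const_mul b)
      (hasDerivAt_evenPow (by linarith)) (hasDerivAt_evenPow (by linarith))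
      (fun y => (hasDerivAt_oddPow (by linarith) y).const_mul b) hx
    have h1 : 1 - x ^ 2 ≠ 0 := by nlinarith [hx.1, hx.2]
    convert! h using 1
    rw [← hrel x ⟨hx.1, hx.2.le⟩, mul_div_cancel_left₀ _ h1]
    simp only [corrPairing, pairing_const_mul_left, pairing_const_mul_right]
    ring
  have hG0 : G 0 = 0 := by simp only [hGdef, corrPairing_oddPow_zero, zero_div]
  have hGpos : ∀ x ∈ Ioo (0 : ℝ) 1, 0 < G x := by
    intro x hx
    have hmono : StrictMonoOn G (Icc 0 x) := by
      refine strictMonoOn_of_deriv_pos (convex_Icc _ _)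
        (fun y hy => (hG y ⟨hy.1, hy.2.trans_lt hx.2⟩).continuousAt.continuousWithinAt) ?_
      intro y hy
      rw [interior_Icc] at hy
      have hy1 : y < 1 := hy.2.trans hx.2
      rw [(hG y ⟨hy.1.le, hy1⟩).deriv]
      exact hFpos y ⟨hy.1.le, hy1.le⟩
    have := hmono (left_mem_Icc.2 hx.1.le) (right_mem_Icc.2 hx.1.le) hx.1
    rwa [hG0] at this
  have h1 : q * G 1 = (k - 1) * F 1 := by
    have := hrel 1 (by simp)
    linarith
  refine ⟨?_, fun h => ?_, fun h => ?_⟩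
  · have : 0 < G ρ := by
      rcases hρ1.eq_or_lt with rfl | h
      · have := hFpos 1 (by simp)
        have h2 : 0 < q * G 1 := by rw [h1, hk]; exact mul_pos (by linarith) this
        exact pos_of_mul_pos_right h2 (by linarith)
      · exact hGpos ρ ⟨hρ0, h⟩
    have h2 : 0 < q * G ρ := by positivity
    simp only [hGdef] at h2
    rwa [mul_div_cancel₀ _ (by positivity)] at h2
  · have hlt : ρ < 1 := by nlinarith
    have := ratio_lt_one_div (by linarith : 13 ≤ a + 1) (by linarith : 13 ≤ b + 1) hk hq hm
      hG0 hG hF hGpos hρ0 hlt h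
    have h2 := hGpos ρ ⟨hρ0, hlt⟩
    have h3 : 0 ≤ m / 4 * ρ ^ 2 * G ρ := by positivity
    change G ρ < ρ * F ρ
    linarith
  · exact ratio_quad_neg (by linarith : 13 ≤ a + 1) (by linarith : 13 ≤ b + 1) hk hq hm
      hG0 hG hF hGpos hFpos h1 hρ0 hρ1 h

/-! ### The law of a Gaussian pair -/

/-- Cramér–Wold in the plane. -/
lemma ext_of_map_linear {ν ν' : Measure (ℝ × ℝ)} [IsFiniteMeasure ν] [IsFiniteMeasure ν']
    (h : ∀ c d : ℝ, ν.map (fun p => c * p.1 + d * p.2) = ν'.map (fun p => c * p.1 + d * p.2)) :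
    ν = ν' := by
  refine Measure.ext_of_charFunDual (funext fun L => ?_)
  have hL : (L : ℝ × ℝ → ℝ) = fun p => L (1, 0) * p.1 + L (0, 1) * p.2 := by
    ext p
    have : p = p.1 • ((1 : ℝ), (0 : ℝ)) + p.2 • ((0 : ℝ), (1 : ℝ)) := by ext <;> simp
    conv_lhs => rw [this]
    rw [map_add, map_smul, map_smul, smul_eq_mul, smul_eq_mul]
    ring
  have key : charFun (ν.map L) 1 = charFun (ν'.map L) 1 := by rw [hL, h]
  rwa [charFun_map_eq_charFunDual_smul, charFun_map_eq_charFunDual_smul, one_smul] at key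

lemma map_linear_stdG (A B : ℝ) :
    (stdG.prod stdG).map (fun p => A * p.1 + B * p.2)
      = gaussianReal 0 (A ^ 2 + B ^ 2).toNNReal := by
  have hA : (stdG.prod stdG).map (fun p => A * p.1) = gaussianReal 0 (A ^ 2).toNNReal := by
    have : (fun p : ℝ × ℝ => A * p.1) = (fun x => A * x) ∘ Prod.fst := rfl
    rw [this, ← Measure.map_map (by fun_prop) measurable_fst,
      Measure.map_fst_prod, measure_univ, one_smul, stdG, gaussianReal_map_const_mul]
    congr 1
    · simp
    · ext; simp [sq_nonneg]
  have hB : (stdG.prod stdG).map (fun p => B * p.2) = gaussianReal 0 (B ^ 2).toNNReal := by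
    have : (fun p : ℝ × ℝ => B * p.2) = (fun x => B * x) ∘ Prod.snd := rfl
    rw [this, ← Measure.map_map (by fun_prop) measurable_snd,
      Measure.map_snd_prod, measure_univ, one_smul, stdG, gaussianReal_map_const_mul]
    congr 1
    · simp
    · ext; simp [sq_nonneg]
  have hind : IndepFun (fun p : ℝ × ℝ => A * p.1) (fun p => B * p.2) (stdG.prod stdG) :=
    indepFun_prod (X := fun x => A * x) (Y := fun x => B * x) (by fun_prop) (by fun_prop)
  have := gaussianReal_add_gaussianReal_of_indepFun hind hA hB
  rw [Real.toNNReal_add (sq_nonneg _) (sq_nonneg _)]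
  rw [zero_add] at this
  exact this

section pair

variable {Ω : Type*} [MeasurableSpace Ω] {μ : Measure Ω} {X Y : Ω → ℝ}

lemma memLp_two_of_map_eq_gaussianReal {v : NNReal} (hX : Measurable X)
    (h : μ.map X = gaussianReal 0 v) : MemLp X 2 μ := by
  have := memLp_id_gaussianReal' (μ := 0) (v := v) 2 (by simp)
  rw [← h] at this
  exact (memLp_map_measure_iff aestronglyMeasurable_id hX.aemeasurable).1 this

lemma variance_linear [IsProbabilityMeasure μ] (hX : MemLp X 2 μ) (hY : MemLp Y 2 μ) (c d : ℝ) :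
    Var[fun ω => c * X ω + d * Y ω; μ]
      = c ^ 2 * Var[X; μ] + 2 * (c * d * cov[X, Y; μ]) + d ^ 2 * Var[Y; μ] := by
  have := variance_add (hX.const_mul c) (hY.const_mul d)
  rw [variance_const_mul, variance_const_mul, covariance_const_mul_left,
    covariance_const_mul_right, ← mul_assoc c] at this
  exact this

/-- A jointly Gaussian centered pair has the law of `(σ x, τ (ρ x + κ z))` with `x`, `z` independent
standard Gaussians, for any such representation of its variances and covariance. The scales `σ`, `τ`
may be negative. -/
lemma map_pair_eq [IsProbabilityMeasure μ] (hX : Measurable X)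
    (hY : Measurable Y)
    (hG : ∀ c d : ℝ, ∃ v : NNReal, μ.map (fun ω => c * X ω + d * Y ω) = gaussianReal 0 v)
    (hX2 : MemLp X 2 μ) (hY2 : MemLp Y 2 μ) {σ τ ρ κ : ℝ} (h1 : ρ ^ 2 + κ ^ 2 = 1)
    (hσ : Var[X; μ] = σ ^ 2) (hτ : Var[Y; μ] = τ ^ 2) (hc : cov[X, Y; μ] = σ * τ * ρ) :
    μ.map (fun ω => (X ω, Y ω))
      = (stdG.prod stdG).map (fun p => (σ * p.1, τ * (ρ * p.1 + κ * p.2))) := by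
  have hXY : Measurable fun ω => (X ω, Y ω) := hX.prodMk hY
  have hm : Measurable fun p : ℝ × ℝ => (σ * p.1, τ * (ρ * p.1 + κ * p.2)) := by fun_prop
  have := Measure.isProbabilityMeasure_map (μ := μ) hXY.aemeasurable
  have := Measure.isProbabilityMeasure_map (μ := stdG.prod stdG) hm.aemeasurable
  refine ext_of_map_linear fun c d => ?_
  rw [Measure.map_map (by fun_prop) hXY, Measure.map_map (by fun_prop) hm]
  have e : (fun p : ℝ × ℝ => c * p.1 + d * p.2) ∘
      (fun p : ℝ × ℝ => (σ * p.1, τ * (ρ * p.1 + κ * p.2)))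
      = fun p => (c * σ + d * τ * ρ) * p.1 + (d * τ * κ) * p.2 := by
    ext p; simp only [Function.comp]; ring
  obtain ⟨v, hv⟩ := hG c d
  have hvar : (v : ℝ) = (c * σ + d * τ * ρ) ^ 2 + (d * τ * κ) ^ 2 := by
    have h3 := variance_linear hX2 hY2 c d
    have h4 : Var[fun ω => c * X ω + d * Y ω; μ] = v := by
      have h5 : Var[id; μ.map (fun ω => c * X ω + d * Y ω)] = v := by
        rw [hv, variance_id_gaussianReal]
      rwa [variance_map aemeasurable_id (by fun_prop)] at h5
    rw [← h4, h3, hσ, hτ, hc]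
    linear_combination -(d * τ) ^ 2 * h1
  rw [e, map_linear_stdG, ← hvar, Real.toNNReal_coe]
  exact hv

lemma isGaussian_model (σ τ ρ κ : ℝ) : IsGaussian
    ((stdG.prod stdG).map (fun p => (σ * p.1, τ * (ρ * p.1 + κ * p.2)))) := by
  let L : ℝ × ℝ →L[ℝ] ℝ × ℝ :=
    (σ • ContinuousLinearMap.fst ℝ ℝ ℝ).prod
      (τ • (ρ • ContinuousLinearMap.fst ℝ ℝ ℝ + κ • ContinuousLinearMap.snd ℝ ℝ ℝ))
  have : IsGaussian ((stdG.prod stdG).map L) := isGaussian_map L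
  convert! this using 2

lemma abs_covariance_le [IsProbabilityMeasure μ] (hX : MemLp X 2 μ) (hY : MemLp Y 2 μ)
    {σ τ : ℝ} (hσ0 : 0 < σ) (hτ0 : 0 < τ) (hσ : Var[X; μ] = σ ^ 2) (hτ : Var[Y; μ] = τ ^ 2) :
    |cov[X, Y; μ]| ≤ σ * τ := by
  have h1 := variance_linear hX hY τ σ
  have h2 := variance_linear hX hY τ (-σ)
  have n1 := variance_nonneg (fun ω => τ * X ω + σ * Y ω) μ
  have n2 := variance_nonneg (fun ω => τ * X ω + (-σ) * Y ω) μ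
  rw [hσ, hτ] at h1 h2
  have hp : 0 < σ * τ := mul_pos hσ0 hτ0
  refine abs_le.2 ⟨?_, ?_⟩
  · by_contra hcon
    nlinarith
  · by_contra hcon
    nlinarith

end pair

/-! ### The moment inequality -/

lemma abs_mul_rpow_mul (s x p : ℝ) : |s * x| ^ p = |s| ^ p * |x| ^ p := by
  rw [abs_mul, Real.mul_rpow (abs_nonneg _) (abs_nonneg _)]

/-- Negativity of the quadratic bounds `R` by its larger root, which is `H(z)`; here `d` is the
difference and `k`, `q` are the sum and product of `y2 + 1`, `y3 + 1`. -/
lemma lt_root_of_quad_neg {r z k q d R : ℝ} (ha : 0 < r ^ 2 * z - 1) (hr : r = q + 1)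
    (hd : d ^ 2 = k ^ 2 - 4 * q)
    (hP : (r ^ 2 * z - 1) * R ^ 2 - k * (r * z - 1) * R - q * (1 - z) < 0) :
    R < (k * (r * z - 1) / 2 + √((d * (r * z - 1)) ^ 2 / 4 + q ^ 3 * z)) / (r ^ 2 * z - 1) := by
  rw [lt_div_iff₀ ha]
  have : R * (r ^ 2 * z - 1) - k * (r * z - 1) / 2
      < √((d * (r * z - 1)) ^ 2 / 4 + q ^ 3 * z) := by
    refine Real.lt_sqrt_of_sq_lt ?_
    have h2 : (d * (r * z - 1)) ^ 2 / 4 + q ^ 3 * z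
        = (k * (r * z - 1)) ^ 2 / 4 + (r ^ 2 * z - 1) * (q * (1 - z)) := by
      rw [mul_pow, hd, hr]; ring
    rw [h2]
    have h3 := mul_neg_of_pos_of_neg ha hP
    nlinarith
  linarith

lemma leading_coeff_pos {q m z : ℝ} (hq : 169 ≤ q) (hm : 144 ≤ m) (hz : 0 ≤ z)
    (h : m < z * ((q + 1) * m + q)) : 0 < (q + 1) ^ 2 * z - 1 := by
  have h1 : 0 ≤ z * (q * (q * m + m - 1)) :=
    mul_nonneg hz (mul_nonneg (by linarith) (by nlinarith))
  have h2 : 1 * m < ((q + 1) ^ 2 * z) * m := by linarith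
  linarith [lt_of_mul_lt_mul_right h2 (by linarith)]

/-- **Moment ratio inequality with real exponents** (Proposition 5.2): for
`y₂, y₃ ≥ 12` and a centered bivariate Gaussian vector `(X₂, X₃)` with
nondegenerate components,
`|E[|X₂|^y₂ X₂ |X₃|^y₃ X₃]| / ((y₂+1)(y₃+1) E[|X₂|^y₂ |X₃|^y₃])` is bounded by
`|Cov(X₂,X₃)|` when `|Corr(X₂,X₃)| ≤ √t_{y₂,y₃}`, and by
`H_{y₂,y₃}(Corr²)·|Cov(X₂,X₃)|` otherwise, with equality iff `X₂` and `X₃` are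
independent. -/
theorem stmt_3 {Ω : Type*} [MeasurableSpace Ω] (μ : Measure Ω) [IsProbabilityMeasure μ]
    (y2 y3 : ℝ) (hy2 : 12 ≤ y2) (hy3 : 12 ≤ y3)
    (X2 X3 : Ω → ℝ) (hmeas2 : Measurable X2) (hmeas3 : Measurable X3)
    (hGauss : ∀ c2 c3 : ℝ, ∃ v : NNReal,
      Measure.map (fun ω => c2 * X2 ω + c3 * X3 ω) μ = gaussianReal 0 v)
    (hnd2 : 0 < variance X2 μ) (hnd3 : 0 < variance X3 μ) :
    let r : ℝ := (y2 + 1) * (y3 + 1) + 1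
    let t : ℝ := 1 / (r + (1 + 1 / y2) * (1 + 1 / y3))
    let H : ℝ → ℝ := fun z =>
      ((y2 + y3 + 2) * (r * z - 1) / 2 +
        Real.sqrt (((y3 - y2) * (r * z - 1)) ^ 2 / 4 +
          (y2 + 1) ^ 3 * (y3 + 1) ^ 3 * z)) / (r ^ 2 * z - 1)
    let Cov : ℝ := (∫ ω, X2 ω * X3 ω ∂μ) - (∫ ω, X2 ω ∂μ) * (∫ ω, X3 ω ∂μ)
    let Corr : ℝ := Cov / (Real.sqrt (variance X2 μ) * Real.sqrt (variance X3 μ))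
    let L : ℝ := |∫ ω, |X2 ω| ^ y2 * X2 ω * |X3 ω| ^ y3 * X3 ω ∂μ| /
      ((y2 + 1) * (y3 + 1) * ∫ ω, |X2 ω| ^ y2 * |X3 ω| ^ y3 ∂μ)
    (|Corr| ≤ Real.sqrt t → L ≤ |Cov|) ∧
    (Real.sqrt t < |Corr| → L ≤ H (Corr ^ 2) * |Cov|) ∧
    (((|Corr| ≤ Real.sqrt t ∧ L = |Cov|) ∨
        (Real.sqrt t < |Corr| ∧ L = H (Corr ^ 2) * |Cov|)) ↔
      IndepFun X2 X3 μ) := by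
  intro r t H Cov Corr L
  set q : ℝ := (y2 + 1) * (y3 + 1) with hq
  set k : ℝ := (y2 + 1) + (y3 + 1) with hk
  have hm : y2 * y3 = q - k + 1 := by rw [hq, hk]; ring
  have hq0 : 169 ≤ q := by rw [hq]; nlinarith
  have hm0 : 144 ≤ y2 * y3 := by nlinarith
  have hL2 : MemLp X2 2 μ := by
    obtain ⟨v, hv⟩ := hGauss 1 0
    exact memLp_two_of_map_eq_gaussianReal hmeas2 (by simpa using hv)
  have hL3 : MemLp X3 2 μ := by
    obtain ⟨v, hv⟩ := hGauss 0 1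
    exact memLp_two_of_map_eq_gaussianReal hmeas3 (by simpa using hv)
  have hCov : Cov = cov[X2, X3; μ] := (covariance_eq_sub hL2 hL3).symm
  set σ : ℝ := √(variance X2 μ) with hσdef
  set τ₀ : ℝ := √(variance X3 μ) with hτdef
  have hσ0 : 0 < σ := Real.sqrt_pos.2 hnd2
  have hτ0 : 0 < τ₀ := Real.sqrt_pos.2 hnd3
  have hσ : variance X2 μ = σ ^ 2 := (Real.sq_sqrt hnd2.le).symm
  have hτ : variance X3 μ = τ₀ ^ 2 := (Real.sq_sqrt hnd3.le).symm
  have hστ : 0 < σ * τ₀ := mul_pos hσ0 hτ0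
  set ρ : ℝ := |Corr| with hρdef
  have hCovρ : |Cov| = σ * τ₀ * ρ := by
    rw [hρdef, abs_div, abs_of_pos hστ]; field_simp
  have hρ0 : 0 ≤ ρ := abs_nonneg _
  have hρ1 : ρ ≤ 1 := by
    have h := abs_covariance_le hL2 hL3 hσ0 hτ0 hσ hτ
    rw [← hCov, hCovρ] at h
    exact le_of_mul_le_mul_left (by linarith) hστ
  -- the sign of the covariance is absorbed into the scale of the second coordinate
  obtain ⟨τ, hτabs, hτρ⟩ : ∃ τ : ℝ, |τ| = τ₀ ∧ Cov = σ * τ * ρ := by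
    rcases abs_cases Cov with ⟨h, -⟩ | ⟨h, -⟩
    · exact ⟨τ₀, abs_of_pos hτ0, by rw [← h, hCovρ]⟩
    · refine ⟨-τ₀, by rw [abs_neg, abs_of_pos hτ0], ?_⟩
      linear_combination -h - hCovρ + 2 * h
  have hκ : ρ ^ 2 + √(1 - ρ ^ 2) ^ 2 = 1 := by
    rw [Real.sq_sqrt (by nlinarith)]; ring
  have hlaw := map_pair_eq hmeas2 hmeas3 hGauss hL2 hL3 hκ hσ
    (by rw [hτ, ← hτabs, sq_abs]) (hCov ▸ hτρ)
  have hXY : Measurable fun ω => (X2 ω, X3 ω) := hmeas2.prodMk hmeas3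
  have hmodel : Measurable fun p : ℝ × ℝ => (σ * p.1, τ * (ρ * p.1 + √(1 - ρ ^ 2) * p.2)) := by
    fun_prop
  have htransfer : ∀ f : ℝ × ℝ → ℝ, Measurable f → ∫ ω, f (X2 ω, X3 ω) ∂μ
      = ∫ p, f (σ * p.1, τ * (ρ * p.1 + √(1 - ρ ^ 2) * p.2)) ∂(stdG.prod stdG) := by
    intro f hf
    rw [← integral_map hXY.aemeasurable hf.aestronglyMeasurable, hlaw,
      integral_map hmodel.aemeasurable hf.aestronglyMeasurable]
  set M₀ := corrPairing (oddPow y2) (oddPow y3) ρ with hM₀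
  set M₁ := corrPairing (evenPow y2) (evenPow y3) ρ with hM₁
  have hnum : ∫ ω, |X2 ω| ^ y2 * X2 ω * |X3 ω| ^ y3 * X3 ω ∂μ
      = (σ ^ y2 * τ₀ ^ y3) * (σ * τ) * M₀ := by
    rw [htransfer (fun p => |p.1| ^ y2 * p.1 * |p.2| ^ y3 * p.2) (by fun_prop), hM₀,
      corrPairing_eq _ _ ⟨hρ0, hρ1⟩, pairing, ← integral_const_mul]
    congr 1
    ext p
    simp only [oddPow, abs_mul_rpow_mul, hτabs, abs_of_pos hσ0]
    ring
  have hden : ∫ ω, |X2 ω| ^ y2 * |X3 ω| ^ y3 ∂μ = (σ ^ y2 * τ₀ ^ y3) * M₁ := by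
    rw [htransfer (fun p => |p.1| ^ y2 * |p.2| ^ y3) (by fun_prop), hM₁,
      corrPairing_eq _ _ ⟨hρ0, hρ1⟩, pairing, ← integral_const_mul]
    congr 1
    ext p
    simp only [evenPow, abs_mul_rpow_mul, hτabs, abs_of_pos hσ0]
    ring
  have hscale : 0 < σ ^ y2 * τ₀ ^ y3 := by positivity
  have hLeq : L = σ * τ₀ * (|M₀| / q / M₁) := by
    simp only [L]
    rw [hnum, hden, abs_mul, abs_mul, abs_mul σ τ, hτabs, abs_of_pos hσ0, abs_of_pos hscale,
      ← hq]
    field_simp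
  have hindep : ρ = 0 ↔ IndepFun X2 X3 μ := by
    constructor
    · intro h
      have hg : HasGaussianLaw (fun ω => (X2 ω, X3 ω)) μ :=
        ⟨by rw [hlaw]; exact isGaussian_model _ _ _ _⟩
      refine hg.indepFun_of_covariance_eq_zero ?_
      rw [← hCov, hτρ, h, mul_zero]
    · intro h
      have := h.covariance_eq_zero hL2 hL3
      rw [← hCov] at this
      rw [this, abs_zero] at hCovρ
      exact (mul_eq_zero.1 hCovρ.symm).resolve_left hστ.ne'
  have hr : r = q + 1 := rfl
  have ht : t = y2 * y3 / ((q + 1) * (y2 * y3) + q) := by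
    simp only [t, hr, hq]
    have : y2 ≠ 0 := by positivity
    have : y3 ≠ 0 := by positivity
    field_simp
  have hden0 : 0 < (q + 1) * (y2 * y3) + q := by positivity
  rcases hρ0.eq_or_lt with h0 | hpos
  · have hM₀0 : M₀ = 0 := by rw [hM₀, ← h0, corrPairing_oddPow_zero]
    have hL0 : L = |Cov| := by rw [hLeq, hM₀0, hCovρ, ← h0]; simp
    have hle : ρ ≤ √t := by rw [← h0]; exact Real.sqrt_nonneg _
    exact ⟨fun _ => hL0.le, fun h => absurd hle (not_le.2 h),
      iff_of_true (Or.inl ⟨hle, hL0⟩) (hindep.1 h0.symm)⟩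
  · obtain ⟨hM₀pos, hsmall, hlarge⟩ := corrPairing_bounds hy2 hy3 k q (y2 * y3) hk hq hm hpos hρ1
    rw [← hM₀] at hM₀pos hsmall hlarge
    rw [← hM₁] at hsmall hlarge
    have hM₁pos : 0 < M₁ := corrPairing_evenPow_pos (by linarith) (by linarith) ⟨hρ0, hρ1⟩
    have hLR : L = M₀ / q / (ρ * M₁) * |Cov| := by
      rw [hLeq, hCovρ, abs_of_pos hM₀pos]; field_simp
    have hCpos : 0 < |Cov| := by rw [hCovρ]; positivity
    have hlt1 : ρ ≤ √t → L < |Cov| := by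
      intro h
      have hz : ρ ^ 2 ≤ t := (Real.le_sqrt hρ0 (by rw [ht]; positivity)).1 h
      rw [ht, le_div_iff₀ hden0] at hz
      have h5 : 5 * q * ρ ^ 2 < 14 := by
        have : q * ρ ^ 2 ≤ 1 := by
          have h6 : 0 ≤ ρ ^ 2 * (y2 * y3 + q) := by positivity
          have h7 : (q * ρ ^ 2) * (y2 * y3) ≤ 1 * (y2 * y3) := by linarith
          exact le_of_mul_le_mul_right h7 (by linarith)
        linarith
      have h8 : M₀ / q / (ρ * M₁) < 1 := (div_lt_one (by positivity)).2 (hsmall h5)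
      rw [hLR]
      exact mul_lt_of_lt_one_left hCpos h8
    have hlt2 : √t < ρ → L < H (Corr ^ 2) * |Cov| := by
      intro h
      have hz : t < ρ ^ 2 := (Real.sqrt_lt' hpos).1 h
      rw [ht, div_lt_iff₀ hden0] at hz
      have hP := hlarge (by linarith)
      have ha : 0 < r ^ 2 * ρ ^ 2 - 1 := hr ▸ leading_coeff_pos hq0 hm0 (sq_nonneg ρ) hz
      have hR := lt_root_of_quad_neg (r := r) (d := y3 - y2) (k := k) (q := q) ha hr
        (by rw [hk, hq]; ring) hP
      rw [hLR, ← sq_abs, ← hρdef]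
      refine mul_lt_mul_of_pos_right (hR.trans_eq ?_) hCpos
      simp only [H, hk, hq]
      congr 4 <;> ring
    refine ⟨fun h => (hlt1 h).le, fun h => (hlt2 h).le, iff_of_false ?_ ?_⟩
    · rintro (⟨h, e⟩ | ⟨h, e⟩)
      · exact (hlt1 h).ne e
      · exact (hlt2 h).ne e
    · exact fun h => hpos.ne' (hindep.2 h)
end

section
/- Let m2, m3 be positive integers and let (X2, X3) be a centered Gaussian random vector with Var(X2) = Var(X3) = 1 and 0 < |E[X2 X3]| < 1. Then ( E[X2^(2m2+1) · X3^(2m3+1)] − E[X2^(2m2)] · E[X3^(2m3)] · E[X2 X3] )^2 < ( E[X2^(2m2+2) · X3^(2m3)] − E[X2^(2m2)] · E[X3^(2m3)] ) · ( E[X2^(2m2) · X3^(2m3+2)] − E[X2^(2m2)] · E[X3^(2m3)] ). -/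
open MeasureTheory ProbabilityTheory

/-!
Write `x = E[X₂X₃]`, `f(x) = E[X₂^(2m) X₃^(2n)]`, `c = f(0) = E[X₂^(2m)] E[X₃^(2n)]`, `s = m + n`,
with `m = m2`, `n = m3`, and regard the mixed moments as polynomials `gaussMoment x i j` in the
correlation `x`.

*Moments.* Gaussian integration by parts (`stein_aux`, obtained from the independence of `X₂` and
`X₃ - x X₂`) gives the recursion `E[X^(i+1) Y^j] = i E[X^(i-1) Y^j] + x j E[X^i Y^(j-1)]`, which
defines `gaussMoment` and identifies it with the integrals (`integral_eq_gaussMoment`). The recursion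
also holds with the two indices exchanged, `∂ₓ gaussMoment x i j = i j gaussMoment x (i-1) (j-1)`
(`hasDerivAt_gaussMoment`), and hence `f` solves the hypergeometric equation
`(1 - x²) f'' + (2s - 1) x f' = 4 m n f` (`gaussMoment_diag`).

*Inequality.* The recursions express all moments of the statement through `f` and `f'`, and the
difference of its two sides becomes `(1 - x²) R(x)` with
`R = (f - c + s f)² - (m - n)² (1 - x²) f² - ((1 - x²) f' + s x f)²`. The differential equation yields
`(1 - x²) R' + 2 (s + 1) x R = 2 (s + 1) (f - c) ((1 - x²) f' + x (f - c + 2 s f))`,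
whose right side is nonnegative for `0 ≤ x < 1`, because `f` has nonnegative derivative there. So
`R / (1 - x²)^(s+1)` is nondecreasing on `[0, 1)`, and `R(x) ≥ 4 m n c² (1 - x²)^(s+1) > 0`.
Negative `x` reduces to positive `x` by the parity of the moments in `x` (`gaussMoment_neg`).
-/

/-! ### Mixed moments as functions of the correlation -/

/-- The mixed moment `E[X^i Y^j]` of a centered Gaussian pair with unit variances and correlation
`x`, defined by the integration-by-parts recursion. Truncated subtraction is harmless: where an
index would become negative, its coefficient is zero. -/
noncomputable def gaussMoment (x : ℝ) : ℕ → ℕ → ℝ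
  | 0, 0 => 1
  | 0, 1 => 0
  | 0, j + 2 => (j + 1 : ℝ) * gaussMoment x 0 j
  | i + 1, j => (i : ℝ) * gaussMoment x (i - 1) j + x * j * gaussMoment x i (j - 1)
termination_by i j => (i, j)
decreasing_by
  all_goals simp_wf
  all_goals omega

lemma gaussMoment_zero_succ (x : ℝ) (j : ℕ) :
    gaussMoment x 0 (j + 1) = (j : ℝ) * gaussMoment x 0 (j - 1) := by
  rcases j with _ | j
  · simp [gaussMoment]
  · simp [gaussMoment]

lemma gaussMoment_succ_left (x : ℝ) (i j : ℕ) :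
    gaussMoment x (i + 1) j =
      (i : ℝ) * gaussMoment x (i - 1) j + x * j * gaussMoment x i (j - 1) := by
  rw [gaussMoment]

lemma gaussMoment_succ_right (x : ℝ) (i j : ℕ) :
    gaussMoment x i (j + 1) =
      (j : ℝ) * gaussMoment x i (j - 1) + x * i * gaussMoment x (i - 1) j := by
  induction i using Nat.strong_induction_on generalizing j with
  | _ i ih =>
    rcases i with _ | i
    · simp [gaussMoment_zero_succ]
    · rcases i with _ | i
      · rcases j with _ | _ | j
        · simp [gaussMoment_succ_left]
        · have h := ih 0 (by omega) 0
          simp [gaussMoment_succ_left] at h ⊢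
          exact Or.inr h
        · have h := ih 0 (by omega) (j + 1)
          simp [gaussMoment_succ_left] at h ⊢
          rw [h]; ring
      · rw [gaussMoment_succ_left x (i + 1) (j + 1)]
        have h1 := ih i (by omega) j
        simp only [Nat.add_sub_cancel] at *
        rw [h1]
        have e1 := gaussMoment_succ_left x i j
        rcases j with _ | j
        · rw [e1]; push_cast; ring
        · have h2 := ih (i + 1) (by omega) j
          have e2 := gaussMoment_succ_left x (i + 1) j
          simp only [Nat.add_sub_cancel] at *
          rw [e2]
          push_cast at *
          linear_combination (x * (j + 1)) * h2 - (x * (i + 1)) * e1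

/-- At correlation zero the moments factor; the one-dimensional moments on the right do not depend
on `x`. -/
lemma gaussMoment_at_zero (i j : ℕ) (x : ℝ) :
    gaussMoment 0 i j = gaussMoment x i 0 * gaussMoment x 0 j := by
  induction i using Nat.strong_induction_on with
  | _ i ih =>
    rcases i with _ | _ | i
    · have : gaussMoment 0 0 j = gaussMoment x 0 j := by
        clear ih
        induction j using Nat.strong_induction_on with
        | _ j ihj =>
          rcases j with _ | j
          · simp [gaussMoment]
          · rw [gaussMoment_zero_succ, gaussMoment_zero_succ, ihj _ (by omega)]
      rw [this]; simp [gaussMoment]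
    · simp [gaussMoment_succ_left]
    · simp only [gaussMoment_succ_left _ (i + 1), Nat.add_sub_cancel, ih i (by omega)]
      push_cast; ring

lemma gaussMoment_neg (x : ℝ) (i j : ℕ) :
    gaussMoment (-x) i j = (-1) ^ i * gaussMoment x i j := by
  induction i using Nat.strong_induction_on generalizing j with
  | _ i ih =>
    rcases i with _ | _ | i
    · have h1 := gaussMoment_at_zero 0 j x
      have h2 := gaussMoment_at_zero 0 j (-x)
      simp [gaussMoment] at h1 h2 ⊢
      rw [← h1, ← h2]
    · simp [gaussMoment_succ_left, ih 0]
    · simp only [gaussMoment_succ_left _ (i + 1), Nat.add_sub_cancel, ih i (by omega),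
        ih (i + 1) (by omega)]
      ring

lemma gaussMoment_nonneg {x : ℝ} (hx : 0 ≤ x) (i j : ℕ) : 0 ≤ gaussMoment x i j := by
  induction i using Nat.strong_induction_on generalizing j with
  | _ i ih =>
    rcases i with _ | i
    · induction j using Nat.strong_induction_on with
      | _ j ihj =>
        rcases j with _ | j
        · simp [gaussMoment]
        · rw [gaussMoment_zero_succ]
          exact mul_nonneg (by positivity) (ihj _ (by omega))
    · rw [gaussMoment_succ_left]
      have h1 := ih (i - 1) (by omega) j
      have h2 := ih i (by omega) (j - 1)
      positivity

lemma gaussMoment_even_pos {x : ℝ} (m n : ℕ) (hx : 0 ≤ x) :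
    0 < gaussMoment x (2 * m) (2 * n) := by
  induction m with
  | zero =>
    induction n with
    | zero => simp [gaussMoment]
    | succ n ih =>
      rw [show 2 * (n + 1) = 2 * n + 1 + 1 by ring, Nat.mul_zero] at *
      rw [gaussMoment_zero_succ]
      simp only [Nat.add_sub_cancel]
      positivity
  | succ m ih =>
    rw [show 2 * (m + 1) = 2 * m + 1 + 1 by ring, gaussMoment_succ_left]
    simp only [Nat.add_sub_cancel]
    have h := gaussMoment_nonneg hx (2 * m + 1) (2 * n - 1)
    positivity

lemma hasDerivAt_gaussMoment (i j : ℕ) (x : ℝ) :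
    HasDerivAt (fun y => gaussMoment y i j)
      (i * j * gaussMoment x (i - 1) (j - 1)) x := by
  induction i using Nat.strong_induction_on generalizing j with
  | _ i ih =>
    rcases i with _ | i
    · have h : (fun y => gaussMoment y 0 j) = fun _ => gaussMoment 0 0 j := by
        funext y
        rw [gaussMoment_at_zero 0 j y]
        simp [gaussMoment]
      rw [h]
      simpa using hasDerivAt_const x (gaussMoment 0 0 j)
    · have h1 := ih (i - 1) (by omega) j
      have h2 := ih i (by omega) (j - 1)
      simp only [gaussMoment_succ_left]
      have h3 := (h1.const_mul (i : ℝ)).add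
        (((hasDerivAt_id x).mul_const (j : ℝ)).mul h2)
      refine HasDerivAt.congr_deriv h3 ?_
      simp only [id, Nat.add_sub_cancel]
      rcases i with _ | i
      · simp
      · rw [Nat.add_sub_cancel, gaussMoment_succ_left]
        push_cast
        ring

/-- A three-term relation along the diagonal. Combined with `hasDerivAt_gaussMoment` it is the
second-order differential equation in `x` satisfied by the moments. -/
lemma gaussMoment_diag (x : ℝ) (i j : ℕ) (hi : 0 < i) :
    gaussMoment x (i + 1) (j + 1) =
      (1 - x ^ 2) * i * j * gaussMoment x (i - 1) (j - 1) +
        x * (i + j + 1) * gaussMoment x i j := by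
  obtain ⟨i, rfl⟩ : ∃ k, i = k + 1 := ⟨i - 1, by omega⟩
  have h1 := gaussMoment_succ_left x (i + 1) (j + 1)
  have h2 := gaussMoment_succ_right x i j
  have h3 := gaussMoment_succ_left x i j
  simp only [Nat.add_sub_cancel] at *
  push_cast at *
  linear_combination h1 + (i + 1) * h2 - x * (i + 1) * h3

/-! ### The inequality between moment functions -/

/-- The inequality for nonnegative correlation, stated for the moment functions. -/
lemma core {m n : ℕ} (hm : 0 < m) (hn : 0 < n) {x : ℝ} (hx0 : 0 ≤ x) (hx1 : x < 1) :
    (gaussMoment x (2 * m + 1) (2 * n + 1) - gaussMoment 0 (2 * m) (2 * n) * x) ^ 2 <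
    (gaussMoment x (2 * m + 2) (2 * n) - gaussMoment 0 (2 * m) (2 * n)) *
    (gaussMoment x (2 * m) (2 * n + 2) - gaussMoment 0 (2 * m) (2 * n)) := by
  set c := gaussMoment 0 (2 * m) (2 * n) with hc
  set f : ℝ → ℝ := fun y => gaussMoment y (2 * m) (2 * n) with hf
  set h : ℝ → ℝ := fun y => 4 * m * n * gaussMoment y (2 * m - 1) (2 * n - 1) with hh
  set s : ℝ := m + n with hs
  set R : ℝ → ℝ := fun y => ((f y - c) + s * f y) ^ 2 - (m - n) ^ 2 * (1 - y ^ 2) * f y ^ 2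
    - ((1 - y ^ 2) * h y + s * y * f y) ^ 2 with hR
  have df : ∀ y, HasDerivAt f (h y) y := fun y => by
    refine (hasDerivAt_gaussMoment (2 * m) (2 * n) y).congr_deriv ?_
    simp only [hh]; push_cast; ring
  -- the differential equation of `f`, in the form of the derivative of `(1 - y²) f'`
  have dV : ∀ y, HasDerivAt (fun y => (1 - y ^ 2) * h y)
      (4 * m * n * f y - (2 * s + 1) * y * h y) y := fun y => by
    have e := (hasDerivAt_gaussMoment (2 * m - 1) (2 * n - 1) y).const_mul (4 * m * n : ℝ)
    have e2 := (((hasDerivAt_id y).pow 2).const_sub 1).mul e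
    refine e2.congr_deriv ?_
    have e3 := gaussMoment_diag y (2 * m - 1) (2 * n - 1) (by omega)
    have hm' : ((2 * m - 1 : ℕ) : ℝ) = 2 * m - 1 := by
      rw [Nat.cast_sub (by omega)]; push_cast; ring
    have hn' : ((2 * n - 1 : ℕ) : ℝ) = 2 * n - 1 := by
      rw [Nat.cast_sub (by omega)]; push_cast; ring
    rw [show 2 * m - 1 + 1 = 2 * m by omega, show 2 * n - 1 + 1 = 2 * n by omega] at e3
    simp only [hm', hn'] at e3 ⊢
    simp only [hf, hh, hs, e3, id, Pi.pow_apply]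
    push_cast
    ring
  have dR : ∀ y, HasDerivAt R (2 * (h y + s * h y) * ((f y - c) + s * f y)
      + 2 * (m - n) ^ 2 * y * f y ^ 2 - 2 * (m - n) ^ 2 * (1 - y ^ 2) * f y * h y
      - 2 * ((1 - y ^ 2) * h y + s * y * f y) *
        (4 * m * n * f y - (2 * s + 1) * y * h y + s * f y + s * y * h y)) y := fun y => by
    have e1 := (((df y).sub_const c).add ((df y).const_mul s)).pow 2
    have e2 := ((((hasDerivAt_id y).pow 2).const_sub 1).const_mul ((m - n : ℝ) ^ 2)).mul
      ((df y).pow 2)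
    have e3 := ((dV y).add (((hasDerivAt_id y).const_mul s).mul (df y))).pow 2
    refine ((e1.sub e2).sub e3).congr_deriv ?_
    simp only [id, Pi.pow_apply, Pi.add_apply, Pi.mul_apply]
    push_cast
    ring
  have hnn : ∀ y, 0 ≤ y → 0 ≤ h y := fun y hy => by
    have := gaussMoment_nonneg hy (2 * m - 1) (2 * n - 1)
    simp only [hh]; positivity
  have fpos : ∀ y, 0 ≤ y → 0 < f y := fun y hy => gaussMoment_even_pos m n hy
  have fmono : MonotoneOn f (Set.Ico 0 1) := by
    refine monotoneOn_of_hasDerivWithinAt_nonneg (convex_Ico 0 1)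
      (fun y _ => (df y).continuousAt.continuousWithinAt)
      (fun y _ => (df y).hasDerivWithinAt) (fun y hy => ?_)
    rw [interior_Ico] at hy
    exact hnn y hy.1.le
  have hpos : ∀ y ∈ Set.Ico (0 : ℝ) 1, 0 < 1 - y ^ 2 := fun y hy => by nlinarith [hy.1, hy.2]
  -- the integrating factor `(1 - y²)^(-(s+1))` absorbs the term of `R'` proportional to `R`
  have dQ : ∀ y ∈ Set.Ico (0 : ℝ) 1, HasDerivAt (fun y => R y / (1 - y ^ 2) ^ (m + n + 1))
      (2 * (1 + s) * ((f y - c) * ((1 - y ^ 2) * h y + y * (f y - c + 2 * s * f y)))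
        / (1 - y ^ 2) ^ (m + n + 2)) y := fun y hy => by
    have hp := hpos y hy
    have e := (dR y).div ((((hasDerivAt_id y).pow 2).const_sub 1).pow (m + n + 1))
      (by simpa using hp.ne')
    refine e.congr_deriv ?_
    simp only [id, Pi.pow_apply, Nat.add_sub_cancel]
    rw [div_eq_div_iff (by positivity) (by positivity)]
    simp only [hR, hs]
    push_cast
    ring
  have Qmono : MonotoneOn (fun y => R y / (1 - y ^ 2) ^ (m + n + 1)) (Set.Ico 0 1) := by
    refine monotoneOn_of_hasDerivWithinAt_nonneg (convex_Ico 0 1)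
      (fun y hy => (dQ y hy).continuousAt.continuousWithinAt)
      (fun y hy => (dQ y (interior_subset hy)).hasDerivWithinAt) (fun y hy => ?_)
    have hy' := interior_subset hy
    have hp := hpos y hy'
    have h1 := hnn y hy'.1
    have h2 := fpos y hy'.1
    have h3 : 0 ≤ f y - c := sub_nonneg.2 (fmono ⟨le_rfl, one_pos⟩ hy' hy'.1)
    have h4 := hy'.1
    have h5 : 0 ≤ s := by positivity
    positivity
  have hxI : x ∈ Set.Ico (0 : ℝ) 1 := ⟨hx0, hx1⟩
  have hp := hpos x hxI
  have hR0 : 0 < R 0 := by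
    have h0 : gaussMoment 0 (2 * m - 1) (2 * n - 1) = 0 := by
      obtain ⟨k, rfl⟩ : ∃ k, m = k + 1 := ⟨m - 1, by omega⟩
      have : ∀ k, gaussMoment 0 (2 * k + 1) (2 * n - 1) = 0 := fun k => by
        induction k with
        | zero => simp [gaussMoment_succ_left]
        | succ k ih =>
          rw [show 2 * (k + 1) + 1 = (2 * k + 1 + 1) + 1 by ring, gaussMoment_succ_left]
          simp [ih]
      exact this k
    have e : R 0 = 4 * m * n * c ^ 2 := by
      simp only [hR, hh, h0, hs]
      simp only [hf, ← hc]
      ring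
    have : 0 < c := fpos 0 le_rfl
    rw [e]; positivity
  have hRx : 0 < R x := by
    have := Qmono ⟨le_rfl, one_pos⟩ hxI hx0
    simp only [ne_eq, OfNat.ofNat_ne_zero, not_false_eq_true, zero_pow, sub_zero, one_pow,
      div_one] at this
    have h2 := hR0.trans_le this
    exact (div_pos_iff_of_pos_right (by positivity)).1 h2
  have eA : gaussMoment x (2 * m + 2) (2 * n) =
      (2 * m + 1 + 2 * n * x ^ 2) * f x + x * (1 - x ^ 2) * h x := by
    have e1 := gaussMoment_succ_left x (2 * m + 1) (2 * n)
    have e2 := gaussMoment_succ_left x (2 * m) (2 * n - 1)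
    have e3 := gaussMoment_succ_right x (2 * m) (2 * n - 1)
    rw [show 2 * n - 1 + 1 = 2 * n by omega] at e3
    have hn' : ((2 * n - 1 : ℕ) : ℝ) = 2 * n - 1 := by
      rw [Nat.cast_sub (by omega)]; push_cast; ring
    simp only [Nat.add_sub_cancel, hn'] at *
    push_cast at *
    linear_combination e1 + 2 * n * x * e2 - 2 * n * x ^ 2 * e3
  have eB : gaussMoment x (2 * m) (2 * n + 2) =
      (2 * n + 1 + 2 * m * x ^ 2) * f x + x * (1 - x ^ 2) * h x := by
    have e1 := gaussMoment_succ_right x (2 * m) (2 * n + 1)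
    have e2 := gaussMoment_succ_right x (2 * m - 1) (2 * n)
    have e3 := gaussMoment_succ_left x (2 * m - 1) (2 * n)
    rw [show 2 * m - 1 + 1 = 2 * m by omega] at e3
    have hm' : ((2 * m - 1 : ℕ) : ℝ) = 2 * m - 1 := by
      rw [Nat.cast_sub (by omega)]; push_cast; ring
    simp only [Nat.add_sub_cancel, hm'] at *
    push_cast at *
    linear_combination e1 + 2 * m * x * e2 - 2 * m * x ^ 2 * e3
  have eC : gaussMoment x (2 * m + 1) (2 * n + 1) =
      x * (1 + 2 * s) * f x + (1 - x ^ 2) * h x := by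
    rw [gaussMoment_diag x (2 * m) (2 * n) (by omega)]
    simp only [hf, hh, hs]; push_cast; ring
  rw [← sub_pos, eA, eB, eC]
  have : 0 < (1 - x ^ 2) * R x := mul_pos hp hRx
  refine this.trans_eq ?_
  simp only [hR, hs]
  ring

/-! ### Moments of the Gaussian vector -/

lemma integrable_pow_mul_pdf (k : ℕ) :
    Integrable (fun x : ℝ => x ^ k * gaussianPDFReal 0 1 x) := by
  have h := integrable_rpow_mul_exp_neg_mul_sq (b := 1 / 2) (by norm_num) (s := k)
    (by have : (0 : ℝ) ≤ k := by positivity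
        linarith)
  refine (h.const_mul (√(2 * Real.pi))⁻¹).congr (ae_of_all _ fun x => ?_)
  simp only [Real.rpow_natCast, gaussianPDFReal]
  have : -(1 / 2) * x ^ 2 = -(x - 0) ^ 2 / (2 * ((1 : NNReal) : ℝ)) := by simp; ring
  rw [this]
  simp
  ring

lemma integral_pow_succ_gaussian (k : ℕ) :
    ∫ x, x ^ (k + 1) ∂(gaussianReal 0 1) = k * ∫ x, x ^ (k - 1) ∂(gaussianReal 0 1) := by
  simp only [integral_gaussianReal_eq_integral_smul (one_ne_zero : (1 : NNReal) ≠ 0), smul_eq_mul]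
  have hv : ∀ x : ℝ, HasDerivAt (gaussianPDFReal 0 1) (-x * gaussianPDFReal 0 1 x) x := fun x => by
    unfold gaussianPDFReal
    have h := ((((hasDerivAt_id x).sub_const 0).pow 2).neg.div_const
      (2 * ((1 : NNReal) : ℝ))).exp.const_mul (√(2 * Real.pi * ((1 : NNReal) : ℝ)))⁻¹
    refine h.congr_deriv ?_
    simp
    ring
  have h := integral_mul_deriv_eq_deriv_mul_of_integrable (u := fun x : ℝ => x ^ k)
    (u' := fun x => k * x ^ (k - 1)) (v := gaussianPDFReal 0 1)
    (v' := fun x => -x * gaussianPDFReal 0 1 x)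
    (fun x _ => hasDerivAt_pow k x) (fun x _ => hv x)
    ((integrable_pow_mul_pdf (k + 1)).neg.congr (ae_of_all _ fun x => by
      simp only [Pi.neg_apply, Pi.mul_apply]; ring))
    (((integrable_pow_mul_pdf (k - 1)).const_mul (k : ℝ)).congr (ae_of_all _ fun x => by
      simp only [Pi.mul_apply]; ring))
    (integrable_pow_mul_pdf k)
  rw [← integral_const_mul]
  calc _ = - ∫ x : ℝ, x ^ k * (-x * gaussianPDFReal 0 1 x) := by
        rw [← integral_neg]; congr 1; ext x; ring
    _ = _ := by rw [h, neg_neg]; congr 1; ext x; ring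


/-- Functions lying in every `Lᵖ`, `p < ∞`, are closed under products. -/
lemma memLp_mul_all {Ω : Type*} [MeasurableSpace Ω] {μ : Measure Ω} {f g : Ω → ℝ}
    (hf : ∀ p : ENNReal, p ≠ ⊤ → MemLp f p μ) (hg : ∀ p : ENNReal, p ≠ ⊤ → MemLp g p μ) :
    ∀ p : ENNReal, p ≠ ⊤ → MemLp (fun ω => f ω * g ω) p μ := fun p hp => by
  have h2 : 2 * p ≠ ⊤ := ENNReal.mul_ne_top (by simp) hp
  have : ENNReal.HolderTriple (2 * p) (2 * p) p := ⟨by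
    rw [ENNReal.mul_inv (by simp) (by simp), ← add_mul, ENNReal.inv_two_add_inv_two, one_mul]⟩
  exact MemLp.mul (hg (2 * p) h2) (hf (2 * p) h2)

lemma memLp_pow_all {Ω : Type*} [MeasurableSpace Ω] {μ : Measure Ω} [IsProbabilityMeasure μ]
    {f : Ω → ℝ} (hf : ∀ p : ENNReal, p ≠ ⊤ → MemLp f p μ) (k : ℕ) :
    ∀ p : ENNReal, p ≠ ⊤ → MemLp (fun ω => f ω ^ k) p μ := by
  induction k with
  | zero => intro p _; simpa using memLp_const (1 : ℝ)
  | succ k ih => simpa only [pow_succ] using memLp_mul_all ih hf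

lemma integral_pow_succ_of_map {Ω : Type*} [MeasurableSpace Ω] {μ : Measure Ω} {X : Ω → ℝ}
    (hX : Measurable X) (hlaw : μ.map X = gaussianReal 0 1) (k : ℕ) :
    ∫ ω, X ω ^ (k + 1) ∂μ = k * ∫ ω, X ω ^ (k - 1) ∂μ := by
  have h : ∀ l : ℕ, ∫ ω, X ω ^ l ∂μ = ∫ y, y ^ l ∂(gaussianReal 0 1) := fun l => by
    rw [← hlaw, integral_map hX.aemeasurable (by fun_prop)]
  rw [h, h, integral_pow_succ_gaussian]

/-- Gaussian integration by parts in `X` for `X^i Y^j W^k`, where `Y = x X + W` with `W` independent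
of `X`. The power of `W` is carried along so that the induction on `j` closes: each factor `Y` is
split as `x X + W`. -/
lemma stein_aux {Ω : Type*} [MeasurableSpace Ω] {μ : Measure Ω} [IsProbabilityMeasure μ]
    {X Y W : Ω → ℝ} (x : ℝ) (hY : ∀ ω, Y ω = x * X ω + W ω)
    (hXW : IndepFun X W μ) (hXm : Measurable X) (hWm : Measurable W)
    (hXp : ∀ p : ENNReal, p ≠ ⊤ → MemLp X p μ) (hYp : ∀ p : ENNReal, p ≠ ⊤ → MemLp Y p μ)
    (hWp : ∀ p : ENNReal, p ≠ ⊤ → MemLp W p μ)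
    (hrec : ∀ k : ℕ, ∫ ω, X ω ^ (k + 1) ∂μ = k * ∫ ω, X ω ^ (k - 1) ∂μ) (i j k : ℕ) :
    ∫ ω, X ω ^ (i + 1) * Y ω ^ j * W ω ^ k ∂μ =
      i * (∫ ω, X ω ^ (i - 1) * Y ω ^ j * W ω ^ k ∂μ) +
      x * j * ∫ ω, X ω ^ i * Y ω ^ (j - 1) * W ω ^ k ∂μ := by
  have hint : ∀ i j k : ℕ, Integrable (fun ω => X ω ^ i * Y ω ^ j * W ω ^ k) μ := fun i j k =>
    memLp_one_iff_integrable.1 (memLp_mul_all (memLp_mul_all (memLp_pow_all hXp i)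
      (memLp_pow_all hYp j)) (memLp_pow_all hWp k) 1 (by simp))
  have hsplit : ∀ i j k : ℕ, ∫ ω, X ω ^ i * Y ω ^ (j + 1) * W ω ^ k ∂μ =
      x * (∫ ω, X ω ^ (i + 1) * Y ω ^ j * W ω ^ k ∂μ) +
        ∫ ω, X ω ^ i * Y ω ^ j * W ω ^ (k + 1) ∂μ := fun i j k => by
    rw [← integral_const_mul, ← integral_add ((hint _ _ _).const_mul x) (hint _ _ _)]
    congr 1
    ext ω
    rw [pow_succ (Y ω)]
    nth_rewrite 2 [hY ω]
    ring
  induction j generalizing i k with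
  | zero =>
    have hind : ∀ l : ℕ, ∫ ω, X ω ^ l * W ω ^ k ∂μ = (∫ ω, X ω ^ l ∂μ) * ∫ ω, W ω ^ k ∂μ :=
      fun l => IndepFun.integral_fun_mul_eq_mul_integral
        (hXW.comp (φ := fun y : ℝ => y ^ l) (ψ := fun y : ℝ => y ^ k) (by fun_prop) (by fun_prop))
        (hXm.pow_const l).aestronglyMeasurable (hWm.pow_const k).aestronglyMeasurable
    simp only [pow_zero, mul_one, Nat.cast_zero, mul_zero, zero_mul, add_zero, hind, hrec]
    ring
  | succ j ih =>
    rw [hsplit, ih, ih, hsplit]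
    simp only [Nat.add_sub_cancel]
    have e1 : (i : ℝ) * ∫ ω, X ω ^ (i - 1 + 1) * Y ω ^ j * W ω ^ k ∂μ =
        i * ∫ ω, X ω ^ i * Y ω ^ j * W ω ^ k ∂μ := by
      rcases i with _ | i <;> simp
    have e2 : (j : ℝ) * ∫ ω, X ω ^ i * Y ω ^ j * W ω ^ k ∂μ =
        j * (x * (∫ ω, X ω ^ (i + 1) * Y ω ^ (j - 1) * W ω ^ k ∂μ) +
          ∫ ω, X ω ^ i * Y ω ^ (j - 1) * W ω ^ (k + 1) ∂μ) := by
      rcases j with _ | j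
      · simp
      · rw [hsplit]; simp
    push_cast
    linear_combination (-x) * e1 - x * e2

lemma integral_eq_gaussMoment {Ω : Type*} [MeasurableSpace Ω] {μ : Measure Ω}
    [IsProbabilityMeasure μ] {X Y : Ω → ℝ} (hXm : Measurable X) (hYm : Measurable Y)
    (hG : ∀ c d : ℝ, ∃ v : NNReal, μ.map (fun ω => c * X ω + d * Y ω) = gaussianReal 0 v)
    (hX : variance X μ = 1) (hY : variance Y μ = 1) (i j : ℕ) :
    ∫ ω, X ω ^ i * Y ω ^ j ∂μ = gaussMoment (∫ ω, X ω * Y ω ∂μ) i j := by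
  set x := ∫ ω, X ω * Y ω ∂μ with hx
  have law : ∀ {Z : Ω → ℝ}, Measurable Z → variance Z μ = 1 →
      (∃ v : NNReal, μ.map Z = gaussianReal 0 v) → μ.map Z = gaussianReal 0 1 := by
    rintro Z hZ hV ⟨v, hv⟩
    have h : (v : ℝ) = 1 := by
      rw [← hV, ← variance_id_gaussianReal (μ := 0) (v := v), ← hv,
        variance_map aemeasurable_id hZ.aemeasurable]
      rfl
    rw [hv, show v = 1 from NNReal.coe_injective h]
  have lX : μ.map X = gaussianReal 0 1 := law hXm hX (by simpa using hG 1 0)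
  have lY : μ.map Y = gaussianReal 0 1 := law hYm hY (by simpa using hG 0 1)
  -- the regression residual of `Y` on `X`, uncorrelated with `X` and hence independent of it
  let W : Ω → ℝ := fun ω => Y ω - x * X ω
  have hWm : Measurable W := hYm.sub (hXm.const_mul x)
  have joint : HasGaussianLaw (fun ω => (X ω, W ω)) μ := by
    refine ⟨isGaussian_of_map_eq_gaussianReal fun L => ?_⟩
    obtain ⟨v, hv⟩ := hG (L (1, 0) - x * L (0, 1)) (L (0, 1))
    refine ⟨0, v, ?_⟩
    rw [Measure.map_map (by fun_prop) (hXm.prodMk hWm), ← hv]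
    congr 1
    ext ω
    have : (X ω, W ω) = X ω • ((1 : ℝ), (0 : ℝ)) + W ω • ((0 : ℝ), (1 : ℝ)) := by simp
    simp only [Function.comp, this, map_add, map_smul, smul_eq_mul, W]
    ring
  have hXp : ∀ p : ENNReal, p ≠ ⊤ → MemLp X p μ := fun p hp => joint.fst.memLp hp
  have hWp : ∀ p : ENNReal, p ≠ ⊤ → MemLp W p μ := fun p hp => joint.snd.memLp hp
  have hYW : ∀ ω, Y ω = x * X ω + W ω := fun ω => by simp [W]
  have hYp : ∀ p : ENNReal, p ≠ ⊤ → MemLp Y p μ := fun p hp => by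
    rw [show Y = fun ω => x * X ω + W ω from funext hYW]
    exact ((hXp p hp).const_mul x).add (hWp p hp)
  have hX0 : ∫ ω, X ω ∂μ = 0 := by
    simpa using integral_pow_succ_of_map hXm lX 0
  have hX2 : ∫ ω, X ω ^ 2 ∂μ = 1 := by
    simpa using integral_pow_succ_of_map hXm lX 1
  have hcov : cov[X, W; μ] = 0 := by
    rw [covariance_eq_sub (hXp 2 (by simp)) (hWp 2 (by simp)), hX0, zero_mul, sub_zero]
    have i1 : Integrable (fun ω => X ω * Y ω) μ :=
      memLp_one_iff_integrable.1 (memLp_mul_all hXp hYp 1 (by simp))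
    have i2 : Integrable (fun ω => x * X ω ^ 2) μ :=
      (memLp_one_iff_integrable.1 (memLp_pow_all hXp 2 1 (by simp))).const_mul x
    calc ∫ ω, (X * W) ω ∂μ = ∫ ω, (X ω * Y ω - x * X ω ^ 2) ∂μ := by
          congr 1; ext ω; simp [W]; ring
      _ = 0 := by rw [integral_sub i1 i2, integral_const_mul, hX2, ← hx]; ring
  have hind := joint.indepFun_of_covariance_eq_zero hcov
  have stein := fun i j => stein_aux x hYW hind hXm hWm hXp hYp hWp
    (integral_pow_succ_of_map hXm lX) i j 0
  simp only [pow_zero, mul_one] at stein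
  induction i using Nat.strong_induction_on generalizing j with
  | _ i ih =>
    rcases i with _ | i
    · simp only [pow_zero, one_mul]
      clear ih
      induction j using Nat.strong_induction_on with
      | _ j ihj =>
        rcases j with _ | j
        · simp [gaussMoment]
        · rw [gaussMoment_zero_succ, integral_pow_succ_of_map hYm lY, ihj _ (by omega)]
    · rw [stein, gaussMoment_succ_left, ih _ (by omega), ih _ (by omega)]

/-- **Moment inequality equivalent to the GPI** (Remark 2.1): for a centered
bivariate Gaussian vector with unit variances and correlation `x` with `0 < |x| < 1`,
`(E[X₂^(2m₂+1) X₃^(2m₃+1)] − E[X₂^(2m₂)] E[X₃^(2m₃)] E[X₂X₃])² <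
 (E[X₂^(2m₂+2) X₃^(2m₃)] − E[X₂^(2m₂)] E[X₃^(2m₃)]) ·
 (E[X₂^(2m₂) X₃^(2m₃+2)] − E[X₂^(2m₂)] E[X₃^(2m₃)])`. -/
theorem stmt_4 {Ω : Type*} [MeasurableSpace Ω] (μ : Measure Ω) [IsProbabilityMeasure μ]
    (m2 m3 : ℕ) (hm2 : 0 < m2) (hm3 : 0 < m3)
    (X2 X3 : Ω → ℝ) (hmeas2 : Measurable X2) (hmeas3 : Measurable X3)
    (hGauss : ∀ c2 c3 : ℝ, ∃ v : NNReal,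
      Measure.map (fun ω => c2 * X2 ω + c3 * X3 ω) μ = gaussianReal 0 v)
    (hvar2 : variance X2 μ = 1) (hvar3 : variance X3 μ = 1)
    (hx0 : 0 < |∫ ω, X2 ω * X3 ω ∂μ|) (hx1 : |∫ ω, X2 ω * X3 ω ∂μ| < 1) :
    ((∫ ω, X2 ω ^ (2 * m2 + 1) * X3 ω ^ (2 * m3 + 1) ∂μ) -
      (∫ ω, X2 ω ^ (2 * m2) ∂μ) * (∫ ω, X3 ω ^ (2 * m3) ∂μ) *
        (∫ ω, X2 ω * X3 ω ∂μ)) ^ 2 <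
    ((∫ ω, X2 ω ^ (2 * m2 + 2) * X3 ω ^ (2 * m3) ∂μ) -
      (∫ ω, X2 ω ^ (2 * m2) ∂μ) * (∫ ω, X3 ω ^ (2 * m3) ∂μ)) *
    ((∫ ω, X2 ω ^ (2 * m2) * X3 ω ^ (2 * m3 + 2) ∂μ) -
      (∫ ω, X2 ω ^ (2 * m2) ∂μ) * (∫ ω, X3 ω ^ (2 * m3) ∂μ)) := by
  have key := fun i j => integral_eq_gaussMoment hmeas2 hmeas3 hGauss hvar2 hvar3 i j
  have k2 : ∫ ω, X2 ω ^ (2 * m2) ∂μ = gaussMoment (∫ ω, X2 ω * X3 ω ∂μ) (2 * m2) 0 := by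
    simpa using key (2 * m2) 0
  have k3 : ∫ ω, X3 ω ^ (2 * m3) ∂μ = gaussMoment (∫ ω, X2 ω * X3 ω ∂μ) 0 (2 * m3) := by
    simpa using key 0 (2 * m3)
  rw [key, key, key, k2, k3, ← gaussMoment_at_zero]
  generalize (∫ ω, X2 ω * X3 ω ∂μ) = x at hx1
  rcases le_total 0 x with hx | hx
  · exact core hm2 hm3 hx (by rwa [abs_of_nonneg hx] at hx1)
  · have h := core hm2 hm3 (neg_nonneg.2 hx) (by rwa [abs_of_nonpos hx] at hx1)
    simp only [gaussMoment_neg, pow_add, pow_mul, neg_one_sq, one_pow, pow_one, one_mul] at h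
    refine lt_of_eq_of_lt ?_ h
    ring
end
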